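/- arXiv:1711.00892 — 2 statements merged into one kernel-verified Lean document; each statement's English description precedes it below -/
import Mathlib

section
/- For every real β with 0 ≤ β ≤ β* and every real α with 0 ≤ α < λ₁(Ω), the supremum S_{α,β} = sup{ ∫_Ω e^{βu²} dx : u ∈ C_c^∞(Ω), ‖u‖²_α ≤ 1 } is finite. -/
open MeasureTheory Real Filter Topology
open scoped ENNReal

noncomputable section

/-- The Laplacian of `u : ℝ^n → ℝ` at `x`, as the sum of second partial derivatives. -/
def lap {n : ℕ} (u : EuclideanSpace ℝ (Fin n) → ℝ) (x : EuclideanSpace ℝ (Fin n)) : ℝ :=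
  ∑ i : Fin n, fderiv ℝ (fun y => fderiv ℝ u y (EuclideanSpace.single i 1)) x
    (EuclideanSpace.single i 1)

/-- The `l`-fold iterated Laplacian `Δ^l u`. -/
def iterLap {n : ℕ} (l : ℕ) (u : EuclideanSpace ℝ (Fin n) → ℝ) :
    EuclideanSpace ℝ (Fin n) → ℝ := lap^[l] u

/-- `|Δ^{m/2} u|²`, where `Δ^{m/2}u = Δⁿu` if `m = 2n` and `Δ^{m/2}u = ∇Δⁿu` if `m = 2n+1`. -/
def halfLapSq (m : ℕ) (u : EuclideanSpace ℝ (Fin (2*m)) → ℝ)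
    (x : EuclideanSpace ℝ (Fin (2*m))) : ℝ :=
  if m % 2 = 0 then (iterLap (m/2) u x)^2 else ‖gradient (iterLap (m/2) u) x‖^2

/-- The Adams critical exponent `β* = 2^{2m} π^m m!`. -/
def betaStar (m : ℕ) : ℝ := 2^(2*m) * Real.pi^m * (Nat.factorial m : ℝ)

/-- `u ∈ C_c^∞(Ω)`: smooth with compact support contained in `Ω`. -/
def IsTestFun (m : ℕ) (Ω : Set (EuclideanSpace ℝ (Fin (2*m))))
    (u : EuclideanSpace ℝ (Fin (2*m)) → ℝ) : Prop :=
  ContDiff ℝ (⊤ : ℕ∞) u ∧ HasCompactSupport u ∧ tsupport u ⊆ Ω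

/-- `‖u‖²_{H^m_0(Ω)} = ∫_Ω |Δ^{m/2}u|²`. -/
def sobNormSq (m : ℕ) (Ω : Set (EuclideanSpace ℝ (Fin (2*m))))
    (u : EuclideanSpace ℝ (Fin (2*m)) → ℝ) : ℝ :=
  ∫ x in Ω, halfLapSq m u x

/-- `‖u‖²_{L²(Ω)}`. -/
def l2NormSq (m : ℕ) (Ω : Set (EuclideanSpace ℝ (Fin (2*m))))
    (u : EuclideanSpace ℝ (Fin (2*m)) → ℝ) : ℝ :=
  ∫ x in Ω, (u x)^2

/-- The first eigenvalue `λ₁(Ω)`. -/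
def lambda1 (m : ℕ) (Ω : Set (EuclideanSpace ℝ (Fin (2*m)))) : ℝ :=
  sInf {r : ℝ | ∃ u, IsTestFun m Ω u ∧ u ≠ 0 ∧ r = sobNormSq m Ω u / l2NormSq m Ω u}

/-- The Moser–Trudinger integral `∫_Ω e^{βu²} dx`, valued in `[0,∞]`. -/
def MTint (m : ℕ) (Ω : Set (EuclideanSpace ℝ (Fin (2*m)))) (β : ℝ)
    (u : EuclideanSpace ℝ (Fin (2*m)) → ℝ) : ℝ≥0∞ :=
  ∫⁻ x in Ω, ENNReal.ofReal (Real.exp (β * (u x)^2))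

/-- `S_{α,β} = sup { ∫_Ω e^{βu²} : u ∈ C_c^∞(Ω), ‖u‖²_α ≤ 1 } ∈ [0,∞]`. -/
def Ssup (m : ℕ) (Ω : Set (EuclideanSpace ℝ (Fin (2*m)))) (α β : ℝ) : ℝ≥0∞ :=
  ⨆ (u : EuclideanSpace ℝ (Fin (2*m)) → ℝ)
    (_ : IsTestFun m Ω u ∧ sobNormSq m Ω u - α * l2NormSq m Ω u ≤ 1), MTint m Ω β u

/-- `Ω` has smooth boundary: it is the sublevel set of a smooth function with
nonvanishing differential on the boundary. -/
def HasSmoothBoundary (m : ℕ) (Ω : Set (EuclideanSpace ℝ (Fin (2*m)))) : Prop :=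
  ∃ f : EuclideanSpace ℝ (Fin (2*m)) → ℝ, ContDiff ℝ (⊤ : ℕ∞) f ∧
    Ω = f ⁻¹' (Set.Iio 0) ∧ ∀ x ∈ frontier Ω, fderiv ℝ f x ≠ 0

/-!
Write `û` for the Fourier transform of `u`. By Parseval, `‖u‖²_α = ∫ (|2πξ|^{2m} - α) |û|²`.

*Spectral gap.* Since `α < λ₁(Ω)`, there are `k` and `d > 0` such that the positive symbol
`w(ξ) = |2πξ|^{2m} - min(|2πξ|^{2m}, k) + d` satisfies `∫ w |û|² ≤ ‖u‖²_α` for all test functions.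
Otherwise, normalised counterexamples converge weakly to some `φ ≠ 0` vanishing off `Ω` with
Rayleigh quotient below `λ₁(Ω)`. This is absurd, because `φ` is a limit of test functions: localise
it by a partition of unity, translate each piece into `Ω` along an interior cone, and mollify.

*Two-level inequality.* Let `∫ w |û|² ≤ 1`, and let `f`, `g` be the uniform probability densities of
subsets `E`, `E'` of `{u ≥ s}`, `{u ≥ s'}`. Then `s + s' ≤ ∫ (f + g) u`, so Parseval and
Cauchy–Schwarz give `(s + s')² ≤ ∫ |f̂ + ĝ|² / w`. Up to an integrable error, `1 / w` is
`(m - 1)!⁻¹ ∫₀¹ rᵐ⁻¹ e^{-r|2πξ|²} dr`, and the heat kernel at time `r`, tested against two densities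
bounded by `M`, gives at most `min((4πr)⁻ᵐ, M)`, whose weighted integral over `r` is
`log M / β* + O(1)`. Charging the cross term to one of the two sets only,
`β* (s + s')² ≤ 3 log(1/|E|) + log(1/|E'|) + C`.

*Summation.* Apply this to the level sets `E_n = {β* u² ≥ n}`. At the critical exponent the bound
`|E_n| ≲ e⁻ⁿ` alone is not summable against `eⁿ`, but the two-level inequality bounds, linearly in
`j`, the number of `n` with `eⁿ |E_n| ≈ e⁻ʲ`. Hence `∑ eⁿ |E_n|`, and with it `∫ e^{β* u²}`, is
bounded uniformly in `u`.
-/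

open scoped FourierTransform ContDiff

section Symbol

variable {V : Type*} [NormedAddCommGroup V]

/-- The Fourier multiplier `|2πξ|²` of `-Δ`. -/
def laplaceSymbol (ξ : V) : ℝ := (2 * π * ‖ξ‖) ^ 2

lemma laplaceSymbol_nonneg (ξ : V) : 0 ≤ laplaceSymbol ξ := sq_nonneg _

lemma continuous_laplaceSymbol : Continuous (laplaceSymbol : V → ℝ) := by
  unfold laplaceSymbol; fun_prop

lemma sum_sq_inner_eq_laplaceSymbol [InnerProductSpace ℝ V] {ι : Type*} [Fintype ι]
    (b : OrthonormalBasis ι ℝ V) (ξ : V) :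
    ∑ i, (2 * π * inner ℝ ξ (b i)) ^ 2 = laplaceSymbol ξ := by
  simp only [laplaceSymbol, mul_pow, ← Finset.mul_sum, b.sum_sq_inner_left]

end Symbol

section FourierReal

variable {V : Type*} [NormedAddCommGroup V] [InnerProductSpace ℝ V] [MeasurableSpace V]
  [BorelSpace V]

/-- The Fourier transform `û(ξ) = ∫ e^{-2πi⟨x,ξ⟩} u(x) dx` of a real-valued function; the norms of
test functions are expressed through it. -/
def fourierReal [FiniteDimensional ℝ V] (u : V → ℝ) : V → ℂ := 𝓕 (fun x => (u x : ℂ))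

variable [FiniteDimensional ℝ V] {f g : V → ℝ}

lemma continuous_fourierReal (hf : Integrable f) : Continuous (fourierReal f) :=
  VectorFourier.fourierIntegral_continuous Real.continuous_fourierChar continuous_inner hf.ofReal

lemma norm_fourierReal_le (f : V → ℝ) (ξ : V) : ‖fourierReal f ξ‖ ≤ ∫ x, |f x| := by
  refine (VectorFourier.norm_fourierIntegral_le_integral_norm _ _ _ _ _).trans_eq ?_
  simp only [Complex.norm_real, Real.norm_eq_abs]

lemma fourierReal_neg (u : V → ℝ) (ξ : V) :
    fourierReal (fun x => -u x) ξ = -fourierReal u ξ := by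
  simp only [fourierReal, Real.fourier_eq, Complex.ofReal_neg, smul_neg, integral_neg]

lemma fourierReal_const_mul (a : ℝ) (u : V → ℝ) (ξ : V) :
    fourierReal (fun x => a * u x) ξ = a * fourierReal u ξ := by
  simp only [fourierReal, Real.fourier_eq, Circle.smul_def, smul_eq_mul, Complex.ofReal_mul,
    ← integral_const_mul, mul_left_comm]

lemma fourierReal_sum {ι : Type*} (s : Finset ι) {f : ι → V → ℝ} (hf : ∀ i ∈ s, Integrable (f i))
    (ξ : V) : fourierReal (fun x => ∑ i ∈ s, f i x) ξ = ∑ i ∈ s, fourierReal (f i) ξ := by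
  simp only [fourierReal, Real.fourier_eq]
  rw [← integral_finsetSum]
  · simp only [Complex.ofReal_sum, Finset.smul_sum]
  · exact fun i hi => (Real.fourierIntegral_convergent_iff ξ).2 (hf i hi).ofReal

lemma integral_conj_fourierReal_mul (hf : Integrable f) {G : V → ℂ} (hG : Integrable G) :
    ∫ ξ, (starRingEnd ℂ) (fourierReal f ξ) * G ξ = ∫ x, (f x : ℂ) * 𝓕⁻ G x := by
  have h := VectorFourier.integral_sesq_fourierIntegral_eq_neg_flip (μ := volume) (ν := volume)
    (L := innerₗ V) (innerSL ℂ) Real.continuous_fourierChar continuous_inner hf.ofReal hG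
  simp only [innerSL_apply_apply, RCLike.inner_apply, flip_innerₗ, RCLike.conj_ofReal] at h
  simp only [mul_comm _ (G _), mul_comm _ (𝓕⁻ G _)]
  exact h

lemma integral_fourierReal_mul (hf : Integrable f) {G : V → ℂ} (hG : Integrable G) :
    ∫ ξ, fourierReal f ξ * G ξ = ∫ x, (f x : ℂ) * 𝓕 G x := by
  have h := VectorFourier.integral_fourierIntegral_smul_eq_flip (μ := volume) (ν := volume)
    (L := innerₗ V) Real.continuous_fourierChar continuous_inner hf.ofReal hG
  simp only [smul_eq_mul, flip_innerₗ] at h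
  exact h

end FourierReal

/-- `u ∈ C_c^∞(V)`: smooth functions of compact support, with no constraint on the support. -/
structure SmoothCompactSupport {V : Type*} [NormedAddCommGroup V] [NormedSpace ℝ V] (u : V → ℝ) :
    Prop where
  contDiff : ContDiff ℝ ∞ u
  hasCompactSupport : HasCompactSupport u

namespace SmoothCompactSupport

section NormedSpace

variable {V : Type*} [NormedAddCommGroup V] [NormedSpace ℝ V] {u : V → ℝ}

lemma neg (hu : SmoothCompactSupport u) : SmoothCompactSupport (fun x => -u x) :=
  ⟨hu.contDiff.neg, hu.hasCompactSupport.neg⟩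

lemma const_mul (a : ℝ) (hu : SmoothCompactSupport u) : SmoothCompactSupport (fun x => a * u x) :=
  ⟨contDiff_const.mul hu.contDiff, hu.hasCompactSupport.mul_left⟩

lemma sum {ι : Type*} (s : Finset ι) {u : ι → V → ℝ} (hu : ∀ i ∈ s, SmoothCompactSupport (u i)) :
    SmoothCompactSupport (fun x => ∑ i ∈ s, u i x) := by
  classical
  refine ⟨ContDiff.sum fun i hi => (hu i hi).contDiff, ?_⟩
  induction s using Finset.induction_on with
  | empty => exact HasCompactSupport.zero
  | insert a s ha ih =>
    simp only [Finset.sum_insert ha]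
    exact (hu a (s.mem_insert_self a)).hasCompactSupport.add
      (ih fun i hi => hu i (Finset.mem_insert_of_mem hi))

lemma fderiv_apply (hu : SmoothCompactSupport u) (v : V) :
    SmoothCompactSupport (fun x => fderiv ℝ u x v) :=
  ⟨(hu.contDiff.fderiv_right (m := ∞) (by simp)).clm_apply contDiff_const,
    hu.hasCompactSupport.fderiv_apply ℝ v⟩

end NormedSpace

variable {V : Type*} [NormedAddCommGroup V] [InnerProductSpace ℝ V] {u : V → ℝ}

/-- A real test function as a complex Schwartz function, giving access to the Fourier
analysis of Schwartz space. -/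
def toSchwartz (hu : SmoothCompactSupport u) : SchwartzMap V ℂ :=
  HasCompactSupport.toSchwartzMap (f := fun x => (u x : ℂ))
    (hu.hasCompactSupport.comp_left (g := fun r : ℝ => (r : ℂ)) Complex.ofReal_zero)
    (Complex.ofRealCLM.contDiff.comp hu.contDiff)

lemma toSchwartz_apply (hu : SmoothCompactSupport u) (x : V) : hu.toSchwartz x = u x := rfl

lemma lineDerivOp_toSchwartz (hu : SmoothCompactSupport u) (v : V) :
    LineDeriv.lineDerivOp v hu.toSchwartz = (hu.fderiv_apply v).toSchwartz := by
  ext x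
  have hd : HasFDerivAt (fun x => (u x : ℂ)) (Complex.ofRealCLM.comp (fderiv ℝ u x)) x :=
    Complex.ofRealCLM.hasFDerivAt.comp x
      (hu.contDiff.differentiable (by simp)).differentiableAt.hasFDerivAt
  rw [SchwartzMap.lineDerivOp_apply_eq_fderiv,
    show (hu.toSchwartz : V → ℂ) = fun x => (u x : ℂ) from rfl, hd.fderiv]
  rfl

variable [MeasurableSpace V] [BorelSpace V]

lemma integrable [FiniteDimensional ℝ V] (hu : SmoothCompactSupport u) : Integrable u :=
  hu.contDiff.continuous.integrable_of_hasCompactSupport hu.hasCompactSupport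

lemma integrable_sq [FiniteDimensional ℝ V] (hu : SmoothCompactSupport u) :
    Integrable (fun x => u x ^ 2) := by
  refine Continuous.integrable_of_hasCompactSupport (hu.contDiff.continuous.pow 2) ?_
  exact hu.hasCompactSupport.comp_left (g := fun r : ℝ => r ^ 2) (by simp)

variable [FiniteDimensional ℝ V]

lemma fourierReal_eq (hu : SmoothCompactSupport u) : fourierReal u = 𝓕 hu.toSchwartz := rfl

lemma integrable_fourierReal (hu : SmoothCompactSupport u) : Integrable (fourierReal u) :=
  (𝓕 hu.toSchwartz).integrable

lemma fourierInv_fourierReal (hu : SmoothCompactSupport u) (x : V) :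
    𝓕⁻ (fourierReal u) x = u x := by
  rw [hu.fourierReal_eq, ← SchwartzMap.fourierInv_coe, FourierTransform.fourierInv_fourier_eq,
    toSchwartz_apply]

lemma fourierReal_fderiv_apply (hu : SmoothCompactSupport u) (v ξ : V) :
    fourierReal (fun x => fderiv ℝ u x v) ξ =
      2 * π * Complex.I * (inner ℝ ξ v : ℝ) * fourierReal u ξ := by
  have hv : (inner ℝ · v : V → ℝ).HasTemperateGrowth := ((innerSL ℝ).flip v).hasTemperateGrowth
  rw [(hu.fderiv_apply v).fourierReal_eq, ← hu.lineDerivOp_toSchwartz,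
    SchwartzMap.fourier_lineDerivOp_eq, hu.fourierReal_eq]
  simp [hv, mul_assoc]

lemma integral_norm_sq_fourierReal (hu : SmoothCompactSupport u) :
    ∫ ξ, ‖fourierReal u ξ‖ ^ 2 = ∫ x, u x ^ 2 := by
  rw [hu.fourierReal_eq, SchwartzMap.integral_norm_sq_fourier]
  simp [toSchwartz_apply]

lemma integrable_laplaceSymbol_pow (hu : SmoothCompactSupport u) (k : ℕ) :
    Integrable (fun ξ => laplaceSymbol ξ ^ k * ‖fourierReal u ξ‖ ^ 2) := by
  have hmajorant := (((𝓕 hu.toSchwartz).integrable_pow_mul volume (2 * k)).mul_const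
    (SchwartzMap.seminorm ℝ 0 0 (𝓕 hu.toSchwartz))).const_mul ((2 * π) ^ (2 * k))
  refine hmajorant.mono' ?_ (Eventually.of_forall fun ξ => ?_)
  · have := continuous_fourierReal hu.integrable
    have := continuous_laplaceSymbol (V := V)
    exact Continuous.aestronglyMeasurable (by fun_prop)
  · have := laplaceSymbol_nonneg ξ
    rw [Real.norm_of_nonneg (by positivity), laplaceSymbol, ← pow_mul, mul_pow, sq, mul_assoc,
      mul_assoc, hu.fourierReal_eq]
    gcongr
    exact (𝓕 hu.toSchwartz).norm_le_seminorm ℝ ξ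

lemma integrable_norm_sq_fourierReal (hu : SmoothCompactSupport u) :
    Integrable (fun ξ => ‖fourierReal u ξ‖ ^ 2) := by
  simpa using hu.integrable_laplaceSymbol_pow 0

lemma integral_norm_gradient_sq (hu : SmoothCompactSupport u) :
    ∫ x, ‖gradient u x‖ ^ 2 = ∫ ξ, laplaceSymbol ξ * ‖fourierReal u ξ‖ ^ 2 := by
  let b := stdOrthonormalBasis ℝ V
  have hgrad (x : V) : ‖gradient u x‖ ^ 2 = ∑ i, fderiv ℝ u x (b i) ^ 2 := by
    rw [← b.sum_sq_inner_left]
    simp only [gradient, InnerProductSpace.toDual_symm_apply]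
  have hsymbol (ξ : V) : ∑ i, ‖fourierReal (fun x => fderiv ℝ u x (b i)) ξ‖ ^ 2 =
      laplaceSymbol ξ * ‖fourierReal u ξ‖ ^ 2 := by
    rw [← sum_sq_inner_eq_laplaceSymbol b, Finset.sum_mul]
    refine Finset.sum_congr rfl fun i _ => ?_
    rw [hu.fourierReal_fderiv_apply]
    simp [mul_pow]
  simp only [hgrad, ← hsymbol]
  rw [integral_finsetSum _ fun i _ => (hu.fderiv_apply (b i)).integrable_sq,
    integral_finsetSum _ fun i _ => (hu.fderiv_apply (b i)).integrable_norm_sq_fourierReal]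
  simp only [(hu.fderiv_apply _).integral_norm_sq_fourierReal]

end SmoothCompactSupport

section IteratedLaplacian

variable {n : ℕ} {u : EuclideanSpace ℝ (Fin n) → ℝ}

lemma iterLap_succ (l : ℕ) (u : EuclideanSpace ℝ (Fin n) → ℝ) :
    iterLap (l + 1) u = lap (iterLap l u) :=
  Function.iterate_succ_apply' lap l u

lemma lap_eq_sum (u : EuclideanSpace ℝ (Fin n) → ℝ) :
    lap u = fun x => ∑ i, fderiv ℝ (fun y => fderiv ℝ u y (EuclideanSpace.single i 1)) x
      (EuclideanSpace.single i 1) :=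
  rfl

lemma tsupport_lap_subset (u : EuclideanSpace ℝ (Fin n) → ℝ) : tsupport (lap u) ⊆ tsupport u := by
  have hsub (v : EuclideanSpace ℝ (Fin n)) :
      tsupport (fun x => fderiv ℝ (fun y => fderiv ℝ u y v) x v) ⊆ tsupport u :=
    (tsupport_fderiv_apply_subset ℝ v).trans (tsupport_fderiv_apply_subset ℝ v)
  refine closure_minimal (Function.support_subset_iff'.2 fun x hx => ?_) isClosed_closure
  have hi (i : Fin n) := image_eq_zero_of_notMem_tsupport fun h =>
    hx (hsub (EuclideanSpace.single i 1) h)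
  rw [lap_eq_sum]
  exact Finset.sum_eq_zero fun i _ => hi i

lemma tsupport_iterLap_subset (l : ℕ) (u : EuclideanSpace ℝ (Fin n) → ℝ) :
    tsupport (iterLap l u) ⊆ tsupport u := by
  induction l with
  | zero => exact subset_rfl
  | succ l ih => exact iterLap_succ l u ▸ (tsupport_lap_subset _).trans ih

namespace SmoothCompactSupport

lemma lap (hu : SmoothCompactSupport u) : SmoothCompactSupport (lap u) := by
  rw [lap_eq_sum]
  exact sum _ fun i _ => (hu.fderiv_apply (EuclideanSpace.single i 1)).fderiv_apply _

lemma iterLap (hu : SmoothCompactSupport u) (l : ℕ) : SmoothCompactSupport (iterLap l u) := by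
  induction l with
  | zero => exact hu
  | succ l ih => exact iterLap_succ l u ▸ ih.lap

lemma fourierReal_lap (hu : SmoothCompactSupport u) (ξ : EuclideanSpace ℝ (Fin n)) :
    fourierReal (_root_.lap u) ξ = -laplaceSymbol ξ * fourierReal u ξ := by
  rw [lap_eq_sum, ← sum_sq_inner_eq_laplaceSymbol (EuclideanSpace.basisFun (Fin n) ℝ),
    fourierReal_sum _ fun i _ => ((hu.fderiv_apply _).fderiv_apply _).integrable]
  simp only [(hu.fderiv_apply _).fourierReal_fderiv_apply, hu.fourierReal_fderiv_apply,
    EuclideanSpace.basisFun_apply]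
  push_cast
  rw [← Finset.sum_neg_distrib, Finset.sum_mul]
  refine Finset.sum_congr rfl fun i _ => ?_
  linear_combination (4 * (π : ℂ) ^ 2 * (inner ℝ ξ (EuclideanSpace.single i (1 : ℝ)) : ℝ) ^ 2
    * fourierReal u ξ) * Complex.I_sq

lemma fourierReal_iterLap (hu : SmoothCompactSupport u) (l : ℕ) (ξ : EuclideanSpace ℝ (Fin n)) :
    fourierReal (_root_.iterLap l u) ξ = (-laplaceSymbol ξ) ^ l * fourierReal u ξ := by
  induction l with
  | zero => simp [_root_.iterLap]
  | succ l ih => rw [iterLap_succ, (hu.iterLap l).fourierReal_lap, ih]; ring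

lemma norm_sq_fourierReal_iterLap (hu : SmoothCompactSupport u) (l : ℕ)
    (ξ : EuclideanSpace ℝ (Fin n)) :
    ‖fourierReal (_root_.iterLap l u) ξ‖ ^ 2 =
      laplaceSymbol ξ ^ (2 * l) * ‖fourierReal u ξ‖ ^ 2 := by
  rw [hu.fourierReal_iterLap, norm_mul, mul_pow, norm_pow, norm_neg, Complex.norm_real,
    Real.norm_of_nonneg (laplaceSymbol_nonneg ξ), ← pow_mul, mul_comm l 2]

lemma integral_halfLapSq {m : ℕ} {u : EuclideanSpace ℝ (Fin (2 * m)) → ℝ}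
    (hu : SmoothCompactSupport u) :
    ∫ x, halfLapSq m u x = ∫ ξ, laplaceSymbol ξ ^ m * ‖fourierReal u ξ‖ ^ 2 := by
  have hl := hu.iterLap (m / 2)
  rcases Nat.mod_two_eq_zero_or_one m with hm | hm
  · simp only [halfLapSq, hm, if_true]
    rw [← hl.integral_norm_sq_fourierReal]
    simp only [hu.norm_sq_fourierReal_iterLap, show 2 * (m / 2) = m by lia]
  · simp only [halfLapSq, hm, one_ne_zero, if_false]
    rw [hl.integral_norm_gradient_sq]
    simp only [hu.norm_sq_fourierReal_iterLap, ← mul_assoc, ← pow_succ',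
      show 2 * (m / 2) + 1 = m by lia]

end SmoothCompactSupport

end IteratedLaplacian

namespace IsTestFun

variable {m : ℕ} {Ω : Set (EuclideanSpace ℝ (Fin (2 * m)))}
  {u : EuclideanSpace ℝ (Fin (2 * m)) → ℝ}

lemma smoothCompactSupport (hu : IsTestFun m Ω u) : SmoothCompactSupport u := ⟨hu.1, hu.2.1⟩

lemma eq_zero_of_notMem (hu : IsTestFun m Ω u) {x : EuclideanSpace ℝ (Fin (2 * m))}
    (hx : x ∉ Ω) : u x = 0 :=
  image_eq_zero_of_notMem_tsupport fun h => hx (hu.2.2 h)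

lemma l2NormSq_eq (hu : IsTestFun m Ω u) : l2NormSq m Ω u = ∫ ξ, ‖fourierReal u ξ‖ ^ 2 := by
  rw [hu.smoothCompactSupport.integral_norm_sq_fourierReal, l2NormSq]
  exact setIntegral_eq_integral_of_forall_compl_eq_zero fun x hx => by
    simp [hu.eq_zero_of_notMem hx]

lemma sobNormSq_eq (hu : IsTestFun m Ω u) :
    sobNormSq m Ω u = ∫ ξ, laplaceSymbol ξ ^ m * ‖fourierReal u ξ‖ ^ 2 := by
  rw [← hu.smoothCompactSupport.integral_halfLapSq, sobNormSq]
  refine setIntegral_eq_integral_of_forall_compl_eq_zero fun x hx => ?_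
  have hx' : x ∉ tsupport (iterLap (m / 2) u) := fun h =>
    hx (hu.2.2 (tsupport_iterLap_subset _ u h))
  have hfderiv : fderiv ℝ (iterLap (m / 2) u) x = 0 :=
    image_eq_zero_of_notMem_tsupport fun h => hx' (tsupport_fderiv_subset ℝ h)
  simp [halfLapSq, gradient, image_eq_zero_of_notMem_tsupport hx', hfderiv]

end IsTestFun

/-! ### Heat kernel bounds for densities -/

/-- A probability density on `V` with pointwise bound `M`. -/
structure IsBoundedDensity {V : Type*} [MeasureSpace V] (f : V → ℝ) (M : ℝ) : Prop where
  integrable : Integrable f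
  nonneg : ∀ x, 0 ≤ f x
  integral_eq_one : ∫ x, f x = 1
  le : ∀ x, f x ≤ M

/-- The density of the uniform probability measure on `E`. -/
def uniformDensity {V : Type*} [MeasureSpace V] (E : Set V) : V → ℝ :=
  E.indicator fun _ => (volume.real E)⁻¹

lemma isBoundedDensity_uniformDensity {V : Type*} [MeasureSpace V] {E : Set V}
    (hE : MeasurableSet E) (hE₀ : 0 < volume.real E) :
    IsBoundedDensity (uniformDensity E) (volume.real E)⁻¹ where
  integrable := (integrable_indicator_iff hE).2
    (integrableOn_const (ENNReal.toReal_pos_iff.1 hE₀).2.ne)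
  nonneg _ := Set.indicator_nonneg (fun _ _ => inv_nonneg.2 hE₀.le) _
  integral_eq_one := by
    rw [uniformDensity, integral_indicator_const _ hE, smul_eq_mul, mul_inv_cancel₀ hE₀.ne']
  le := Set.indicator_le_self' fun _ _ => inv_nonneg.2 hE₀.le

section HeatKernel

variable {V : Type*} [NormedAddCommGroup V] [InnerProductSpace ℝ V]

/-- The heat kernel `e^{rΔ}(x)` at time `r`. -/
def heatKernel (r : ℝ) (x : V) : ℝ :=
  (4 * π * r) ^ (-(Module.finrank ℝ V : ℝ) / 2) * exp (-‖x‖ ^ 2 / (4 * r))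

/-- The Fourier multiplier of the heat semigroup `e^{rΔ}`. -/
def heatMultiplier (r : ℝ) (ξ : V) : ℝ := exp (-(r * laplaceSymbol ξ))

variable {r : ℝ}

lemma heatKernel_nonneg (hr : 0 < r) (x : V) : 0 ≤ heatKernel r x := by
  unfold heatKernel; positivity

lemma heatKernel_le (hr : 0 < r) (x : V) :
    heatKernel r x ≤ (4 * π * r) ^ (-(Module.finrank ℝ V : ℝ) / 2) := by
  refine mul_le_of_le_one_right (by positivity) (exp_le_one_iff.2 ?_)
  exact div_nonpos_of_nonpos_of_nonneg (by simp) (by positivity)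

variable [MeasurableSpace V] [BorelSpace V] [FiniteDimensional ℝ V]

lemma integral_heatKernel (hr : 0 < r) : ∫ x : V, heatKernel r x = 1 := by
  have hexp (x : V) : exp (-‖x‖ ^ 2 / (4 * r)) = exp (-(1 / (4 * r)) * ‖x‖ ^ 2) := by ring_nf
  simp only [heatKernel, hexp]
  rw [integral_const_mul, GaussianFourier.integral_rexp_neg_mul_sq_norm (by positivity),
    show π / (1 / (4 * r)) = 4 * π * r by field_simp, ← rpow_add (by positivity)]
  ring_nf
  exact rpow_zero _

lemma integrable_heatKernel (hr : 0 < r) : Integrable (heatKernel r : V → ℝ) :=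
  .of_integral_ne_zero (by rw [integral_heatKernel hr]; exact one_ne_zero)

lemma integrable_heatMultiplier (hr : 0 < r) : Integrable (heatMultiplier r : V → ℝ) := by
  have h := GaussianFourier.integral_rexp_neg_mul_sq_norm (V := V) (b := 4 * π ^ 2 * r)
    (by positivity)
  refine .of_integral_ne_zero ?_
  simp only [heatMultiplier, laplaceSymbol]
  simp only [show ∀ ξ : V, -(r * (2 * π * ‖ξ‖) ^ 2) = -(4 * π ^ 2 * r) * ‖ξ‖ ^ 2 by intro; ring, h]
  positivity

variable {f g : V → ℝ} {M M' : ℝ}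

lemma integrable_heatMultiplier_mul_fourierReal (hr : 0 < r) (hf : Integrable f) :
    Integrable (fun ξ => (heatMultiplier r ξ : ℂ) * fourierReal f ξ) :=
  (integrable_heatMultiplier hr).ofReal.mul_bdd (c := ∫ x, |f x|)
    (continuous_fourierReal hf).aestronglyMeasurable
    (Eventually.of_forall fun ξ => norm_fourierReal_le f ξ)

lemma integrable_conj_mul_heatMultiplier_mul (hr : 0 < r) (hf : Integrable f) (hg : Integrable g) :
    Integrable (fun ξ =>
      (starRingEnd ℂ) (fourierReal g ξ) * (heatMultiplier r ξ * fourierReal f ξ)) := by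
  refine (integrable_heatMultiplier_mul_fourierReal hr hf).bdd_mul (c := ∫ x, |g x|) ?_ ?_
  · exact (Complex.continuous_conj.comp (continuous_fourierReal hg)).aestronglyMeasurable
  · exact Eventually.of_forall fun ξ => by simpa using norm_fourierReal_le g ξ

lemma fourier_gaussian_eq_heatKernel (hr : 0 < r) (x y : V) :
    𝓕 (fun ξ : V => Complex.exp (-((4 * π ^ 2 * r : ℝ) : ℂ) * (‖ξ‖ : ℂ) ^ 2 +
      2 * π * Complex.I * (inner ℝ x ξ : ℝ))) y = heatKernel r (x - y) := by
  have hb : 0 < ((4 * π ^ 2 * r : ℝ) : ℂ).re := by rw [Complex.ofReal_re]; positivity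
  have hr' : (r : ℂ) ≠ 0 := mod_cast hr.ne'
  have hπ : (π : ℂ) ≠ 0 := mod_cast pi_ne_zero
  have hbase : (π : ℂ) / ((4 * π ^ 2 * r : ℝ) : ℂ) = ((4 * π * r)⁻¹ : ℝ) := by
    push_cast; field_simp
  have hexp : -(π : ℂ) ^ 2 * (‖x - y‖ : ℂ) ^ 2 / ((4 * π ^ 2 * r : ℝ) : ℂ) =
      ((-‖x - y‖ ^ 2 / (4 * r) : ℝ) : ℂ) := by
    push_cast; field_simp
  have hfactor : (((4 * π * r)⁻¹ : ℝ) : ℂ) ^ ((Module.finrank ℝ V : ℂ) / 2) =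
      ((4 * π * r) ^ (-(Module.finrank ℝ V : ℝ) / 2) : ℝ) := by
    rw [neg_div, rpow_neg (by positivity), ← inv_rpow (by positivity),
      Complex.ofReal_cpow (by positivity)]
    push_cast
    rfl
  rw [fourier_gaussian_innerProductSpace' hb, hbase, hexp, hfactor, heatKernel,
    Complex.ofReal_mul, Complex.ofReal_exp]

lemma fourierInv_heatMultiplier_mul_fourierReal (hr : 0 < r) (hf : Integrable f) (x : V) :
    𝓕⁻ (fun ξ => (heatMultiplier r ξ : ℂ) * fourierReal f ξ) x =
      ((∫ y, f y * heatKernel r (x - y) : ℝ) : ℂ) := by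
  have hb : 0 < ((4 * π ^ 2 * r : ℝ) : ℂ).re := by rw [Complex.ofReal_re]; positivity
  have hpair := integral_fourierReal_mul hf
    (GaussianFourier.integrable_cexp_neg_mul_sq_norm_add hb (2 * π * Complex.I) x)
  simp only [fourier_gaussian_eq_heatKernel hr, ← Complex.ofReal_mul, integral_complex_ofReal]
    at hpair
  rw [Real.fourierInv_eq', ← hpair]
  refine integral_congr_ae (Eventually.of_forall fun ξ => ?_)
  simp only [smul_eq_mul, heatMultiplier, laplaceSymbol, Complex.ofReal_exp]
  rw [mul_comm (fourierReal f ξ), ← mul_assoc, ← Complex.exp_add, real_inner_comm]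
  congr 2
  push_cast
  ring

namespace IsBoundedDensity

lemma norm_fourierReal_le_one (hf : IsBoundedDensity f M) (ξ : V) : ‖fourierReal f ξ‖ ≤ 1 := by
  refine (norm_fourierReal_le f ξ).trans_eq ?_
  simp only [abs_of_nonneg (hf.nonneg _), hf.integral_eq_one]

lemma integral_mul_heatKernel_le (hr : 0 < r) (hf : IsBoundedDensity f M) (x : V) :
    ∫ y, f y * heatKernel r (x - y) ≤ min ((4 * π * r) ^ (-(Module.finrank ℝ V : ℝ) / 2)) M := by
  have hkernel : Integrable (fun y => heatKernel r (x - y)) :=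
    (integrable_heatKernel hr).comp_sub_left x
  have hint : Integrable (fun y => f y * heatKernel r (x - y)) :=
    hf.integrable.mul_bdd (c := (4 * π * r) ^ (-(Module.finrank ℝ V : ℝ) / 2))
      hkernel.aestronglyMeasurable (Eventually.of_forall fun y => by
        rw [Real.norm_of_nonneg (heatKernel_nonneg hr _)]; exact heatKernel_le hr _)
  refine le_min ?_ ?_
  · calc _ ≤ ∫ y, f y * (4 * π * r) ^ (-(Module.finrank ℝ V : ℝ) / 2) :=
          integral_mono hint (hf.integrable.mul_const _) fun y =>
            mul_le_mul_of_nonneg_left (heatKernel_le hr _) (hf.nonneg y)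
      _ = _ := by rw [integral_mul_const, hf.integral_eq_one, one_mul]
  · calc _ ≤ ∫ y, M * heatKernel r (x - y) :=
          integral_mono hint (hkernel.const_mul _) fun y =>
            mul_le_mul_of_nonneg_right (hf.le y) (heatKernel_nonneg hr _)
      _ = M := by
          rw [integral_const_mul, integral_sub_left_eq_self (heatKernel r) volume x,
            integral_heatKernel hr, mul_one]

lemma re_integral_conj_mul_heatMultiplier_mul_le (hr : 0 < r) (hf : IsBoundedDensity f M)
    (hg : IsBoundedDensity g M') :
    (∫ ξ, (starRingEnd ℂ) (fourierReal g ξ) * (heatMultiplier r ξ * fourierReal f ξ)).re ≤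
      min ((4 * π * r) ^ (-(Module.finrank ℝ V : ℝ) / 2)) M := by
  rw [integral_conj_fourierReal_mul hg.integrable
    (integrable_heatMultiplier_mul_fourierReal hr hf.integrable)]
  simp only [fourierInv_heatMultiplier_mul_fourierReal hr hf.integrable, ← Complex.ofReal_mul]
  rw [integral_complex_ofReal, Complex.ofReal_re]
  calc _ ≤ ∫ x, g x * min ((4 * π * r) ^ (-(Module.finrank ℝ V : ℝ) / 2)) M := by
        refine integral_mono_of_nonneg (Eventually.of_forall fun x => ?_)
          (hg.integrable.mul_const _) (Eventually.of_forall fun x =>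
            mul_le_mul_of_nonneg_left (hf.integral_mul_heatKernel_le hr x) (hg.nonneg x))
        exact mul_nonneg (hg.nonneg x) (integral_nonneg fun y =>
          mul_nonneg (hf.nonneg y) (heatKernel_nonneg hr _))
    _ = _ := by rw [integral_mul_const, hg.integral_eq_one, one_mul]

/-- The cross term is charged to `f` alone. This asymmetry is what makes the final summation
converge at the critical exponent. -/
lemma integral_heatMultiplier_mul_norm_add_sq_le (hr : 0 < r) (hf : IsBoundedDensity f M)
    (hg : IsBoundedDensity g M') :
    Integrable (fun ξ => heatMultiplier r ξ * ‖fourierReal f ξ + fourierReal g ξ‖ ^ 2) ∧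
    ∫ ξ, heatMultiplier r ξ * ‖fourierReal f ξ + fourierReal g ξ‖ ^ 2 ≤
      3 * min ((4 * π * r) ^ (-(Module.finrank ℝ V : ℝ) / 2)) M +
        min ((4 * π * r) ^ (-(Module.finrank ℝ V : ℝ) / 2)) M' := by
  have hff := integrable_conj_mul_heatMultiplier_mul hr hf.integrable hf.integrable
  have hfg := integrable_conj_mul_heatMultiplier_mul hr hf.integrable hg.integrable
  have hgg := integrable_conj_mul_heatMultiplier_mul hr hg.integrable hg.integrable
  have hexpand (ξ : V) : heatMultiplier r ξ * ‖fourierReal f ξ + fourierReal g ξ‖ ^ 2 =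
      RCLike.re ((starRingEnd ℂ) (fourierReal f ξ) * (heatMultiplier r ξ * fourierReal f ξ)) +
      2 * RCLike.re ((starRingEnd ℂ) (fourierReal g ξ) * (heatMultiplier r ξ * fourierReal f ξ)) +
      RCLike.re ((starRingEnd ℂ) (fourierReal g ξ) * (heatMultiplier r ξ * fourierReal g ξ)) := by
    rw [← Complex.normSq_eq_norm_sq, Complex.normSq_apply]
    simp
    ring
  simp only [hexpand]
  have hsum : Integrable fun ξ =>
      RCLike.re ((starRingEnd ℂ) (fourierReal f ξ) * (heatMultiplier r ξ * fourierReal f ξ)) +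
      2 * RCLike.re ((starRingEnd ℂ) (fourierReal g ξ) * (heatMultiplier r ξ * fourierReal f ξ)) :=
    hff.re.add (hfg.re.const_mul 2)
  refine ⟨hsum.add hgg.re, ?_⟩
  rw [integral_add hsum hgg.re, integral_add hff.re (hfg.re.const_mul 2), integral_const_mul,
    integral_re hff, integral_re hfg, integral_re hgg]
  have := hf.re_integral_conj_mul_heatMultiplier_mul_le hr hf
  have := hf.re_integral_conj_mul_heatMultiplier_mul_le hr hg
  have := hg.re_integral_conj_mul_heatMultiplier_mul_le hr hg
  simp only [RCLike.re_to_complex]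
  linarith

end IsBoundedDensity

end HeatKernel

/-! ### The truncated Bessel kernel -/

section TruncatedBessel

lemma betaStar_pos (m : ℕ) : 0 < betaStar m := by
  unfold betaStar; positivity

lemma betaStar_eq (m : ℕ) : betaStar m = (4 * π) ^ m * m.factorial := by
  rw [betaStar, mul_pow, pow_mul]; norm_num

/-- The part `r ≤ 1` of `z⁻ᵐ = (m - 1)!⁻¹ ∫₀^∞ rᵐ⁻¹ e^{-rz} dr`: the Fourier multiplier of a kernel
whose logarithmic singularity is that of the fundamental solution of `(-Δ)ᵐ` in dimension `2m`. -/
def truncBessel (m : ℕ) (z : ℝ) : ℝ :=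
  ∫ r in Set.Ioc (0 : ℝ) 1, r ^ (m - 1) / (m - 1).factorial * exp (-(r * z))

variable {m : ℕ}

lemma truncBessel_nonneg (m : ℕ) (z : ℝ) : 0 ≤ truncBessel m z :=
  setIntegral_nonneg measurableSet_Ioc fun r hr => by have := hr.1; positivity

lemma setLIntegral_Ioc_ofReal {f : ℝ → ℝ} {a b : ℝ} (hf : ContinuousOn f (Set.Icc a b))
    (hf₀ : ∀ r ∈ Set.Ioc a b, 0 ≤ f r) :
    ∫⁻ r in Set.Ioc a b, ENNReal.ofReal (f r) = ENNReal.ofReal (∫ r in Set.Ioc a b, f r) :=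
  (ofReal_integral_eq_lintegral_ofReal (hf.integrableOn_Icc.mono_set Set.Ioc_subset_Icc_self)
    ((ae_restrict_mem measurableSet_Ioc).mono hf₀)).symm

lemma ofReal_truncBessel (m : ℕ) (z : ℝ) :
    ENNReal.ofReal (truncBessel m z) = ∫⁻ r in Set.Ioc (0 : ℝ) 1,
      ENNReal.ofReal (r ^ (m - 1) / (m - 1).factorial * exp (-(r * z))) :=
  (setLIntegral_Ioc_ofReal (by fun_prop) fun r hr => by have := hr.1; positivity).symm

lemma setLIntegral_pow_div_factorial (hm : 1 ≤ m) {a c : ℝ} (ha : 0 < a) (hc : 0 ≤ c) :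
    ∫⁻ r in Set.Ioc 0 c, ENNReal.ofReal (r ^ (m - 1) / (m - 1).factorial * a⁻¹) =
      ENNReal.ofReal (c ^ m / (m.factorial * a)) := by
  obtain ⟨k, rfl⟩ := Nat.exists_eq_add_of_le' hm
  rw [setLIntegral_Ioc_ofReal (by fun_prop) fun r hr => by have := hr.1; positivity,
    ← intervalIntegral.integral_of_le hc, intervalIntegral.integral_mul_const,
    intervalIntegral.integral_div, integral_pow, Nat.factorial_succ]
  push_cast [Nat.add_sub_cancel]
  congr 1
  field_simp
  ring

lemma setLIntegral_pow_div_factorial_mul_inv_pow (hm : 1 ≤ m) {c : ℝ} (hc : 0 < c) (hc₁ : c ≤ 1) :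
    ∫⁻ r in Set.Ioc c 1,
        ENNReal.ofReal (r ^ (m - 1) / (m - 1).factorial * ((4 * π * r) ^ m)⁻¹) =
      ENNReal.ofReal ((betaStar m)⁻¹ * -log (c ^ m)) := by
  obtain ⟨k, rfl⟩ := Nat.exists_eq_add_of_le' hm
  have hint : ∀ r ∈ Set.Ioc c 1,
      r ^ k / k.factorial * ((4 * π * r) ^ (k + 1))⁻¹ =
        (k + 1) * (betaStar (k + 1))⁻¹ * r⁻¹ := fun r hr => by
    have := hc.trans hr.1
    rw [betaStar_eq, Nat.factorial_succ]
    push_cast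
    field_simp
    ring
  rw [Nat.add_sub_cancel, setLIntegral_congr_fun measurableSet_Ioc fun r hr =>
    congrArg ENNReal.ofReal (hint r hr), setLIntegral_Ioc_ofReal,
    ← intervalIntegral.integral_of_le hc₁, intervalIntegral.integral_const_mul,
    integral_inv_of_pos hc one_pos, one_div, log_inv, log_pow]
  · push_cast; ring_nf
  · exact continuousOn_const.mul (continuousOn_inv₀.mono fun r hr => (hc.trans_le hr.1).ne')
  · intro r hr
    have := hc.trans hr.1
    have := betaStar_pos (k + 1)
    positivity

lemma setLIntegral_pow_div_factorial_mul_min_le (hm : 1 ≤ m) {A a : ℝ} (hA : 1 ≤ A) (ha : 0 < a)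
    (haA : a ≤ A) :
    ∫⁻ r in Set.Ioc (0 : ℝ) 1, ENNReal.ofReal
        (r ^ (m - 1) / (m - 1).factorial * min ((4 * π * r) ^ m)⁻¹ a⁻¹) ≤
      ENNReal.ofReal ((betaStar m)⁻¹ * ((4 * π) ^ m + log A - log a)) := by
  have hA₀ : 0 < A := one_pos.trans_le hA
  have hβ := betaStar_pos m
  set c : ℝ := (a / A) ^ (m : ℝ)⁻¹
  have hc : 0 < c := by positivity
  have hcm : c ^ m = a / A := rpow_inv_natCast_pow (by positivity) (by lia)
  have hc₁ : c ≤ 1 := rpow_le_one (by positivity) ((div_le_one hA₀).2 haA) (by positivity)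
  have hlog : 0 ≤ log A - log a := sub_nonneg.2 (log_le_log ha haA)
  have hsmall : c ^ m / (m.factorial * a) ≤ (betaStar m)⁻¹ * (4 * π) ^ m := by
    rw [hcm, betaStar_eq]
    field_simp
    exact hA
  calc _ ≤ (∫⁻ r in Set.Ioc 0 c, ENNReal.ofReal (r ^ (m - 1) / (m - 1).factorial * a⁻¹)) +
        ∫⁻ r in Set.Ioc c 1,
          ENNReal.ofReal (r ^ (m - 1) / (m - 1).factorial * ((4 * π * r) ^ m)⁻¹) := by
        rw [← Set.Ioc_union_Ioc_eq_Ioc hc.le hc₁]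
        refine (lintegral_union_le _ _ _).trans (add_le_add ?_ ?_) <;>
          refine setLIntegral_mono' measurableSet_Ioc fun r hr => ENNReal.ofReal_le_ofReal ?_
        · exact mul_le_mul_of_nonneg_left (min_le_right _ _) (by have := hr.1; positivity)
        · have := hc.trans hr.1
          exact mul_le_mul_of_nonneg_left (min_le_left _ _) (by positivity)
    _ = ENNReal.ofReal (c ^ m / (m.factorial * a)) +
        ENNReal.ofReal ((betaStar m)⁻¹ * (log A - log a)) := by
        rw [setLIntegral_pow_div_factorial hm ha hc.le,
          setLIntegral_pow_div_factorial_mul_inv_pow hm hc hc₁, hcm, log_div ha.ne' hA₀.ne',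
          neg_sub]
    _ ≤ _ := by
        rw [← ENNReal.ofReal_add (by positivity) (by positivity)]
        exact ENNReal.ofReal_le_ofReal (by linarith)

lemma integral_pow_mul_exp_neg_mul_Ioi (k : ℕ) {z : ℝ} (hz : 0 < z) :
    ∫ r in Set.Ioi (0 : ℝ), r ^ k * exp (-(r * z)) = k.factorial * (z ^ (k + 1))⁻¹ := by
  have h := integral_rpow_mul_exp_neg_mul_Ioi (a := k + 1) (r := z) (by positivity) hz
  rw [Gamma_nat_eq_factorial, one_div, inv_rpow hz.le, mul_comm] at h
  simp only [add_sub_cancel_right, rpow_natCast, mul_comm z] at h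
  exact_mod_cast h

lemma integrableOn_pow_mul_exp_neg_mul_Ioi (k : ℕ) {z : ℝ} (hz : 0 < z) :
    IntegrableOn (fun r => r ^ k * exp (-(r * z))) (Set.Ioi (0 : ℝ)) :=
  .of_integral_ne_zero (by rw [integral_pow_mul_exp_neg_mul_Ioi k hz]; positivity)

lemma inv_pow_le_truncBessel_add (hm : 1 ≤ m) {z : ℝ} (hz : 0 < z) :
    (z ^ m)⁻¹ ≤ truncBessel m z + (2 * m - 1).factorial * (z ^ (2 * m))⁻¹ := by
  obtain ⟨k, rfl⟩ := Nat.exists_eq_add_of_le' hm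
  have hint (j : ℕ) := integrableOn_pow_mul_exp_neg_mul_Ioi j hz
  have hpos {r : ℝ} (hr : r ∈ Set.Ioi (1 : ℝ)) : 0 < r := one_pos.trans hr
  have htail : ∫ r in Set.Ioi (1 : ℝ), r ^ k / k.factorial * exp (-(r * z)) ≤
      (2 * k + 1).factorial * (z ^ (2 * k + 2))⁻¹ := by
    rw [← integral_pow_mul_exp_neg_mul_Ioi _ hz]
    calc _ ≤ ∫ r in Set.Ioi (1 : ℝ), r ^ (2 * k + 1) * exp (-(r * z)) := by
          refine integral_mono_of_nonneg ?_
            ((hint _).mono_set (Set.Ioi_subset_Ioi zero_le_one)) ?_ <;>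
            filter_upwards [ae_restrict_mem measurableSet_Ioi] with r hr <;> have := hpos hr
          · simp only [Pi.zero_apply]; positivity
          · gcongr
            exact (div_le_self (by positivity) (mod_cast k.factorial_pos)).trans
              (pow_le_pow_right₀ (le_of_lt hr) (by lia))
      _ ≤ _ := by
          refine setIntegral_mono_set (hint _) ?_
            (Set.Ioi_subset_Ioi zero_le_one).eventuallyLE
          filter_upwards [ae_restrict_mem measurableSet_Ioi] with r hr
          have : 0 < r := hr
          simp only [Pi.zero_apply]
          positivity
  have hint' : IntegrableOn (fun r => r ^ k / k.factorial * exp (-(r * z))) (Set.Ioi (0 : ℝ)) := by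
    simp only [div_mul_eq_mul_div]
    exact (hint k).div_const _
  calc (z ^ (k + 1))⁻¹ = ∫ r in Set.Ioi (0 : ℝ), r ^ k / k.factorial * exp (-(r * z)) := by
        simp only [div_mul_eq_mul_div, integral_div, integral_pow_mul_exp_neg_mul_Ioi k hz]
        field_simp
    _ = truncBessel (k + 1) z + ∫ r in Set.Ioi (1 : ℝ), r ^ k / k.factorial * exp (-(r * z)) := by
        rw [truncBessel, ← Set.Ioc_union_Ioi_eq_Ioi zero_le_one] at *
        exact setIntegral_union Set.Ioc_disjoint_Ioi_same measurableSet_Ioi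
          (hint'.mono_set Set.subset_union_left) (hint'.mono_set Set.subset_union_right)
    _ ≤ _ := by gcongr; exact htail

end TruncatedBessel

/-! ### Truncation of the symbol at low frequencies -/

section TruncatedWeight

/-- The symbol `zᵐ` of `(-Δ)ᵐ` with its part below the level `L` replaced by the constant `d`. The
hypothesis `α < λ₁(Ω)` bounds the quadratic form with this symbol by `‖u‖²_α`. -/
def truncatedWeight (m : ℕ) (L d z : ℝ) : ℝ := z ^ m - min (z ^ m) L + d

variable {m : ℕ} {L d z : ℝ}

lemma le_truncatedWeight (m : ℕ) (L d z : ℝ) : d ≤ truncatedWeight m L d z := by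
  have := min_le_left (z ^ m) L
  unfold truncatedWeight; linarith

lemma truncatedWeight_le (hL : 0 ≤ L) (hz : 0 ≤ z) : truncatedWeight m L d z ≤ z ^ m + d := by
  have : 0 ≤ min (z ^ m) L := le_min (pow_nonneg hz m) hL
  unfold truncatedWeight; linarith

lemma continuous_truncatedWeight (m : ℕ) (L d : ℝ) : Continuous (truncatedWeight m L d) := by
  unfold truncatedWeight; fun_prop

lemma inv_truncatedWeight_le_of_le_pow (hm : 1 ≤ m) (hL : 0 ≤ L) (hd : 0 ≤ d) (hz : 0 ≤ z)
    (hLz : 2 * L + 1 ≤ z ^ m) :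
    (truncatedWeight m L d z)⁻¹ ≤ truncBessel m z +
      ((2 * m - 1).factorial + 2 * L) * 2 ^ (2 * m) * ((1 + z) ^ (2 * m))⁻¹ := by
  have hz₁ : 1 ≤ z := by
    by_contra! h
    have := pow_lt_one₀ hz h (by lia : m ≠ 0)
    linarith
  have hz₀ : 0 < z := one_pos.trans_le hz₁
  have hw : z ^ m - L ≤ truncatedWeight m L d z := by
    have := min_le_right (z ^ m) L
    unfold truncatedWeight; linarith
  have hinv : (z ^ m - L)⁻¹ ≤ (z ^ m)⁻¹ + 2 * L * (z ^ (2 * m))⁻¹ := by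
    rw [two_mul m, pow_add]
    have : 0 < z ^ m - L := by linarith
    have : (z ^ m)⁻¹ + 2 * L * (z ^ m * z ^ m)⁻¹ = (z ^ m + 2 * L) / (z ^ m * z ^ m) := by
      field_simp
    rw [this, inv_eq_one_div, div_le_div_iff₀ (by assumption) (by positivity)]
    nlinarith
  have hdecay : (z ^ (2 * m))⁻¹ ≤ 2 ^ (2 * m) * ((1 + z) ^ (2 * m))⁻¹ := by
    rw [← div_eq_mul_inv, inv_eq_one_div, div_le_div_iff₀ (by positivity) (by positivity),
      one_mul, ← mul_pow]
    gcongr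
    linarith
  calc _ ≤ (z ^ m)⁻¹ + 2 * L * (z ^ (2 * m))⁻¹ := (inv_anti₀ (by linarith) hw).trans hinv
    _ ≤ truncBessel m z + ((2 * m - 1).factorial + 2 * L) * (z ^ (2 * m))⁻¹ := by
        linarith [inv_pow_le_truncBessel_add hm hz₀]
    _ ≤ _ := by rw [mul_assoc _ ((2 : ℝ) ^ (2 * m))]; gcongr

lemma inv_truncatedWeight_le_of_pow_le (hm : 1 ≤ m) (hL : 0 ≤ L) (hd : 0 < d) (hz : 0 ≤ z)
    (hLz : z ^ m ≤ 2 * L + 1) :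
    (truncatedWeight m L d z)⁻¹ ≤ d⁻¹ * (2 * L + 2) ^ (2 * m) * ((1 + z) ^ (2 * m))⁻¹ := by
  have hz₁ : z ≤ 2 * L + 1 := by
    rcases le_total z 1 with h | h
    · linarith
    · exact (le_self_pow₀ h (by lia)).trans hLz
  have hdecay : 1 ≤ (2 * L + 2) ^ (2 * m) * ((1 + z) ^ (2 * m))⁻¹ := by
    rw [← div_eq_mul_inv, one_le_div (by positivity)]
    exact pow_le_pow_left₀ (by positivity) (by linarith) _
  rw [mul_assoc]
  exact (inv_anti₀ hd (le_truncatedWeight m L d z)).trans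
    (le_mul_of_one_le_right (inv_nonneg.2 hd.le) hdecay)

lemma exists_inv_truncatedWeight_le (hm : 1 ≤ m) (hL : 0 ≤ L) (hd : 0 < d) :
    ∃ K : ℝ, 0 ≤ K ∧ ∀ z, 0 ≤ z →
      (truncatedWeight m L d z)⁻¹ ≤ truncBessel m z + K * ((1 + z) ^ (2 * m))⁻¹ := by
  refine ⟨((2 * m - 1).factorial + 2 * L) * 2 ^ (2 * m) + d⁻¹ * (2 * L + 2) ^ (2 * m),
    by positivity, fun z hz => ?_⟩
  rw [add_mul]
  rcases le_total (2 * L + 1) (z ^ m) with h | h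
  · refine (inv_truncatedWeight_le_of_le_pow hm hL hd.le hz h).trans ?_
    gcongr
    exact le_add_of_nonneg_right (by positivity)
  · refine (inv_truncatedWeight_le_of_pow_le hm hL hd hz h).trans ?_
    have := truncBessel_nonneg m z
    rw [← add_assoc]
    exact le_add_of_nonneg_left (by positivity)

end TruncatedWeight

section EnergyEstimate

lemma ofReal_truncBessel_mul {V : Type*} [NormedAddCommGroup V] {m : ℕ} {c : ℝ}
    (hc : 0 ≤ c) (ξ : V) :
    ENNReal.ofReal (truncBessel m (laplaceSymbol ξ) * c) = ∫⁻ r in Set.Ioc (0 : ℝ) 1,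
      ENNReal.ofReal (r ^ (m - 1) / (m - 1).factorial * (heatMultiplier r ξ * c)) := by
  rw [ENNReal.ofReal_mul' hc, ofReal_truncBessel, ← lintegral_mul_const _ (by fun_prop)]
  simp only [← mul_assoc, ENNReal.ofReal_mul' hc, heatMultiplier]

variable {V : Type*} [NormedAddCommGroup V] [InnerProductSpace ℝ V] [MeasurableSpace V]
  [BorelSpace V] [FiniteDimensional ℝ V] {m : ℕ} {f g : V → ℝ} {M M' A a b : ℝ}

lemma integrable_inv_one_add_laplaceSymbol_pow {k : ℕ} (hk : Module.finrank ℝ V < 2 * k) :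
    Integrable (fun ξ : V => ((1 + laplaceSymbol ξ) ^ k)⁻¹) := by
  have h := integrable_rpow_neg_one_add_norm_sq (E := V) (μ := volume) (r := 2 * k)
    (mod_cast hk)
  have hpos (ξ : V) : 0 < 1 + laplaceSymbol ξ := by have := laplaceSymbol_nonneg ξ; positivity
  refine h.mono' ?_ (Eventually.of_forall fun ξ => ?_)
  · exact (((continuous_const.add continuous_laplaceSymbol).pow k).inv₀ fun ξ =>
      (pow_pos (hpos ξ) k).ne').aestronglyMeasurable
  · have hle : 1 + ‖ξ‖ ^ 2 ≤ 1 + laplaceSymbol ξ := by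
      rw [laplaceSymbol]
      gcongr
      exact le_mul_of_one_le_left (norm_nonneg ξ) (by linarith [pi_gt_three])
    rw [show -(2 * (k : ℝ)) / 2 = -k by ring, rpow_neg (by positivity), rpow_natCast,
      Real.norm_of_nonneg (inv_nonneg.2 (pow_pos (hpos ξ) k).le)]
    gcongr

lemma lintegral_heatMultiplier_mul_norm_add_sq_le (hV : Module.finrank ℝ V = 2 * m) {r c : ℝ}
    (hr : 0 < r) (hc : 0 ≤ c) (hf : IsBoundedDensity f M) (hg : IsBoundedDensity g M') :
    ∫⁻ ξ, ENNReal.ofReal (c * (heatMultiplier r ξ * ‖fourierReal f ξ + fourierReal g ξ‖ ^ 2)) ≤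
      3 * ENNReal.ofReal (c * min ((4 * π * r) ^ m)⁻¹ M) +
        ENNReal.ofReal (c * min ((4 * π * r) ^ m)⁻¹ M') := by
  obtain ⟨hint, hle⟩ := hf.integral_heatMultiplier_mul_norm_add_sq_le hr hg
  have hdim : (4 * π * r) ^ (-(Module.finrank ℝ V : ℝ) / 2) = ((4 * π * r) ^ m)⁻¹ := by
    rw [hV, show -((2 * m : ℕ) : ℝ) / 2 = -m by push_cast; ring, rpow_neg (by positivity),
      rpow_natCast]
  rw [hdim] at hle
  rw [← ofReal_integral_eq_lintegral_ofReal (hint.const_mul _) (Eventually.of_forall fun ξ =>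
      mul_nonneg hc (mul_nonneg (exp_pos _).le (sq_nonneg _))), integral_const_mul,
    show (3 : ℝ≥0∞) = ENNReal.ofReal 3 by simp, ← ENNReal.ofReal_mul (by norm_num)]
  refine le_trans (ENNReal.ofReal_le_ofReal ?_) ENNReal.ofReal_add_le
  exact (mul_le_mul_of_nonneg_left hle hc).trans_eq (by ring)

lemma lintegral_truncBessel_mul_norm_add_sq_le (hV : Module.finrank ℝ V = 2 * m) (hm : 1 ≤ m)
    (hA : 1 ≤ A) (ha : 0 < a) (haA : a ≤ A) (hb : 0 < b) (hbA : b ≤ A)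
    (hf : IsBoundedDensity f a⁻¹) (hg : IsBoundedDensity g b⁻¹) :
    ∫⁻ ξ, ENNReal.ofReal
        (truncBessel m (laplaceSymbol ξ) * ‖fourierReal f ξ + fourierReal g ξ‖ ^ 2) ≤
      3 * ENNReal.ofReal ((betaStar m)⁻¹ * ((4 * π) ^ m + log A - log a)) +
        ENNReal.ofReal ((betaStar m)⁻¹ * ((4 * π) ^ m + log A - log b)) := by
  set F : V → ℝ := fun ξ => ‖fourierReal f ξ + fourierReal g ξ‖ ^ 2
  have hF : Continuous F :=
    ((continuous_fourierReal hf.integrable).add (continuous_fourierReal hg.integrable)).norm.pow 2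
  have hF₀ (ξ : V) : 0 ≤ F ξ := sq_nonneg _
  set p : ℝ → ℝ := fun r => r ^ (m - 1) / (m - 1).factorial
  set q : ℝ → ℝ → ℝ := fun t r => p r * min ((4 * π * r) ^ m)⁻¹ t⁻¹
  have hq (t : ℝ) : Measurable fun r => ENNReal.ofReal (q t r) := by fun_prop
  calc _ = ∫⁻ ξ, ∫⁻ r in Set.Ioc (0 : ℝ) 1, ENNReal.ofReal (p r * (heatMultiplier r ξ * F ξ)) :=
        lintegral_congr fun ξ => ofReal_truncBessel_mul (hF₀ ξ) ξ
    _ = ∫⁻ r in Set.Ioc (0 : ℝ) 1, ∫⁻ ξ, ENNReal.ofReal (p r * (heatMultiplier r ξ * F ξ)) := by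
        refine lintegral_lintegral_swap (Measurable.aemeasurable ?_)
        have := continuous_laplaceSymbol (V := V)
        unfold Function.uncurry heatMultiplier
        fun_prop
    _ ≤ ∫⁻ r in Set.Ioc (0 : ℝ) 1, (3 * ENNReal.ofReal (q a r) + ENNReal.ofReal (q b r)) :=
        setLIntegral_mono' measurableSet_Ioc fun r hr =>
          lintegral_heatMultiplier_mul_norm_add_sq_le hV hr.1 (by have := hr.1; positivity) hf hg
    _ ≤ _ := by
        rw [lintegral_add_left ((hq a).const_mul _), lintegral_const_mul _ (hq a)]
        gcongr
        · exact setLIntegral_pow_div_factorial_mul_min_le hm hA ha haA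
        · exact setLIntegral_pow_div_factorial_mul_min_le hm hA hb hbA

lemma norm_fourierReal_add_sq_le (hf : IsBoundedDensity f M)
    (hg : IsBoundedDensity g M') (ξ : V) : ‖fourierReal f ξ + fourierReal g ξ‖ ^ 2 ≤ 4 := by
  have h : ‖fourierReal f ξ + fourierReal g ξ‖ ≤ 1 + 1 :=
    (norm_add_le _ _).trans (add_le_add (hf.norm_fourierReal_le_one ξ)
      (hg.norm_fourierReal_le_one ξ))
  exact (pow_le_pow_left₀ (norm_nonneg _) h 2).trans_eq (by norm_num)

end EnergyEstimate

lemma sq_integral_mul_le_integral_inv_mul_sq {X : Type*} [MeasurableSpace X] {μ : Measure X}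
    {w f g : X → ℝ} (hw : ∀ x, 0 < w x) (hf : Integrable (fun x => (w x)⁻¹ * f x ^ 2) μ)
    (hg : Integrable (fun x => w x * g x ^ 2) μ) :
    (∫ x, f x * g x ∂μ) ^ 2 ≤ (∫ x, (w x)⁻¹ * f x ^ 2 ∂μ) * ∫ x, w x * g x ^ 2 ∂μ := by
  have hf₀ : 0 ≤ ∫ x, (w x)⁻¹ * f x ^ 2 ∂μ :=
    integral_nonneg fun x => by have := hw x; positivity
  have hg₀ : 0 ≤ ∫ x, w x * g x ^ 2 ∂μ := integral_nonneg fun x => by have := hw x; positivity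
  by_cases hfg : Integrable (fun x => f x * g x) μ
  swap
  · rw [integral_undef hfg, zero_pow two_ne_zero]
    positivity
  have hquad (t : ℝ) : 0 ≤ (∫ x, w x * g x ^ 2 ∂μ) * (t * t) +
      (-2 * ∫ x, f x * g x ∂μ) * t + ∫ x, (w x)⁻¹ * f x ^ 2 ∂μ := by
    have hsq (x : X) : (w x)⁻¹ * (t * w x * g x - f x) ^ 2 =
        t * t * (w x * g x ^ 2) + -2 * t * (f x * g x) + (w x)⁻¹ * f x ^ 2 := by
      have := hw x
      field_simp
      ring
    have hnonneg : 0 ≤ ∫ x, (w x)⁻¹ * (t * w x * g x - f x) ^ 2 ∂μ :=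
      integral_nonneg fun x => by have := hw x; positivity
    have hlin : Integrable (fun x => t * t * (w x * g x ^ 2) + -2 * t * (f x * g x)) μ :=
      (hg.const_mul _).add (hfg.const_mul _)
    simp only [hsq] at hnonneg
    rw [integral_add hlin hf,
      integral_add (hg.const_mul _) (hfg.const_mul _), integral_const_mul,
      integral_const_mul] at hnonneg
    linarith
  have := discrim_le_zero hquad
  rw [discrim] at this
  linarith

section CriticalBound

variable {V : Type*} [NormedAddCommGroup V] [InnerProductSpace ℝ V] [MeasurableSpace V]
  [BorelSpace V] [FiniteDimensional ℝ V] {m : ℕ} {L d A : ℝ} {u f g : V → ℝ} {M M' : ℝ}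

lemma SmoothCompactSupport.integrable_truncatedWeight_mul (hu : SmoothCompactSupport u)
    (hL : 0 ≤ L) (hd : 0 ≤ d) :
    Integrable (fun ξ => truncatedWeight m L d (laplaceSymbol ξ) * ‖fourierReal u ξ‖ ^ 2) := by
  refine ((hu.integrable_laplaceSymbol_pow m).add
    (hu.integrable_norm_sq_fourierReal.const_mul d)).mono' ?_ (Eventually.of_forall fun ξ => ?_)
  · exact (((continuous_truncatedWeight m L d).comp continuous_laplaceSymbol).mul
      ((continuous_fourierReal hu.integrable).norm.pow 2)).aestronglyMeasurable
  · have hnonneg := hd.trans (le_truncatedWeight m L d (laplaceSymbol ξ))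
    rw [Real.norm_of_nonneg (by positivity), Pi.add_apply, ← add_mul]
    exact mul_le_mul_of_nonneg_right (truncatedWeight_le hL (laplaceSymbol_nonneg ξ))
      (sq_nonneg _)

lemma lintegral_inv_truncatedWeight_mul_norm_add_sq_le (hV : Module.finrank ℝ V = 2 * m)
    (hm : 1 ≤ m) {K : ℝ} (hK₀ : 0 ≤ K)
    (hK : ∀ z, 0 ≤ z → (truncatedWeight m L d z)⁻¹ ≤ truncBessel m z + K * ((1 + z) ^ (2 * m))⁻¹)
    (hf : IsBoundedDensity f M) (hg : IsBoundedDensity g M') :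
    ∫⁻ ξ, ENNReal.ofReal ((truncatedWeight m L d (laplaceSymbol ξ))⁻¹ *
        ‖fourierReal f ξ + fourierReal g ξ‖ ^ 2) ≤
      (∫⁻ ξ, ENNReal.ofReal (truncBessel m (laplaceSymbol ξ) *
        ‖fourierReal f ξ + fourierReal g ξ‖ ^ 2)) +
      ENNReal.ofReal (4 * K * ∫ ξ : V, ((1 + laplaceSymbol ξ) ^ (2 * m))⁻¹) := by
  have hsymbol (ξ : V) := laplaceSymbol_nonneg ξ
  have hint : Integrable (fun ξ : V => ((1 + laplaceSymbol ξ) ^ (2 * m))⁻¹) :=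
    integrable_inv_one_add_laplaceSymbol_pow (by lia)
  rw [← integral_const_mul, ofReal_integral_eq_lintegral_ofReal (hint.const_mul _)
    (Eventually.of_forall fun ξ => by have := hsymbol ξ; positivity),
    ← lintegral_add_right' _ (hint.const_mul _).aemeasurable.ennreal_ofReal]
  refine lintegral_mono fun ξ => le_trans (ENNReal.ofReal_le_ofReal ?_) ENNReal.ofReal_add_le
  have := hsymbol ξ
  have hfg := norm_fourierReal_add_sq_le hf hg ξ
  set N := ‖fourierReal f ξ + fourierReal g ξ‖ ^ 2
  calc _ ≤ (truncBessel m (laplaceSymbol ξ) + K * ((1 + laplaceSymbol ξ) ^ (2 * m))⁻¹) * N :=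
        mul_le_mul_of_nonneg_right (hK _ (hsymbol ξ)) (sq_nonneg _)
    _ = truncBessel m (laplaceSymbol ξ) * N + K * ((1 + laplaceSymbol ξ) ^ (2 * m))⁻¹ * N := by
        ring
    _ ≤ truncBessel m (laplaceSymbol ξ) * N + K * ((1 + laplaceSymbol ξ) ^ (2 * m))⁻¹ * 4 := by
        gcongr
    _ = _ := by ring

lemma integrable_inv_truncatedWeight_mul_norm_add_sq (hd : 0 < d) (hf : Integrable f)
    (hg : Integrable g)
    (hfin : ∫⁻ ξ, ENNReal.ofReal ((truncatedWeight m L d (laplaceSymbol ξ))⁻¹ *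
      ‖fourierReal f ξ + fourierReal g ξ‖ ^ 2) < ⊤) :
    Integrable fun ξ => (truncatedWeight m L d (laplaceSymbol ξ))⁻¹ *
      ‖fourierReal f ξ + fourierReal g ξ‖ ^ 2 := by
  have hw (ξ : V) : 0 < truncatedWeight m L d (laplaceSymbol ξ) :=
    hd.trans_le (le_truncatedWeight m L d _)
  refine ⟨Continuous.aestronglyMeasurable ?_, ?_⟩
  · exact (((continuous_truncatedWeight m L d).comp continuous_laplaceSymbol).inv₀
      fun ξ => (hw ξ).ne').mul (((continuous_fourierReal hf).add
        (continuous_fourierReal hg)).norm.pow 2)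
  · rwa [hasFiniteIntegral_iff_ofReal (Eventually.of_forall fun ξ =>
      mul_nonneg (inv_nonneg.2 (hw ξ).le) (sq_nonneg _))]

lemma exists_integral_inv_truncatedWeight_mul_norm_add_sq_le (hV : Module.finrank ℝ V = 2 * m)
    (hm : 1 ≤ m) (hL : 0 ≤ L) (hd : 0 < d) (hA : 1 ≤ A) :
    ∃ C : ℝ, ∀ {f g : V → ℝ} {a b : ℝ}, 0 < a → a ≤ A → 0 < b → b ≤ A →
      IsBoundedDensity f a⁻¹ → IsBoundedDensity g b⁻¹ →
      Integrable (fun ξ => (truncatedWeight m L d (laplaceSymbol ξ))⁻¹ *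
        ‖fourierReal f ξ + fourierReal g ξ‖ ^ 2) ∧
      betaStar m * ∫ ξ, (truncatedWeight m L d (laplaceSymbol ξ))⁻¹ *
        ‖fourierReal f ξ + fourierReal g ξ‖ ^ 2 ≤ 3 * -log a + -log b + 4 * C := by
  obtain ⟨K, hK₀, hK⟩ := exists_inv_truncatedWeight_le hm hL hd
  have hβ := betaStar_pos m
  set J := ∫ ξ : V, ((1 + laplaceSymbol ξ) ^ (2 * m))⁻¹
  have hJ₀ : 0 ≤ J := integral_nonneg fun ξ => by have := laplaceSymbol_nonneg ξ; positivity
  refine ⟨(4 * π) ^ m + log A + betaStar m * (K * J), fun {f g a b} ha haA hb hbA hf hg => ?_⟩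
  have hlog {t : ℝ} (ht : 0 < t) (htA : t ≤ A) : 0 ≤ (4 * π) ^ m + log A - log t := by
    have := log_le_log ht htA
    have : 0 ≤ (4 * π) ^ m := by positivity
    linarith
  have hla := hlog ha haA
  have hlb := hlog hb hbA
  have hsum : ∫⁻ ξ, ENNReal.ofReal ((truncatedWeight m L d (laplaceSymbol ξ))⁻¹ *
      ‖fourierReal f ξ + fourierReal g ξ‖ ^ 2) ≤
      ENNReal.ofReal (3 * ((betaStar m)⁻¹ * ((4 * π) ^ m + log A - log a)) +
        (betaStar m)⁻¹ * ((4 * π) ^ m + log A - log b) + 4 * K * J) := by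
    rw [ENNReal.ofReal_add (by positivity) (by positivity),
      ENNReal.ofReal_add (by positivity) (by positivity), ENNReal.ofReal_mul (by norm_num),
      ENNReal.ofReal_ofNat]
    refine (lintegral_inv_truncatedWeight_mul_norm_add_sq_le hV hm hK₀ hK hf hg).trans ?_
    gcongr
    exact lintegral_truncBessel_mul_norm_add_sq_le hV hm hA ha haA hb hbA hf hg
  have hint := integrable_inv_truncatedWeight_mul_norm_add_sq hd hf.integrable hg.integrable
    (hsum.trans_lt ENNReal.ofReal_lt_top)
  refine ⟨hint, ?_⟩
  rw [← ofReal_integral_eq_lintegral_ofReal hint (Eventually.of_forall fun ξ => mul_nonneg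
    (inv_nonneg.2 (hd.le.trans (le_truncatedWeight m L d _))) (sq_nonneg _)),
    ENNReal.ofReal_le_ofReal_iff (by positivity)] at hsum
  refine (mul_le_mul_of_nonneg_left hsum hβ.le).trans_eq ?_
  field_simp
  ring

lemma SmoothCompactSupport.integrable_conj_fourierReal_mul (hu : SmoothCompactSupport u)
    (hf : Integrable f) :
    Integrable (fun ξ => (starRingEnd ℂ) (fourierReal f ξ) * fourierReal u ξ) := by
  refine hu.integrable_fourierReal.bdd_mul (c := ∫ x, |f x|) ?_ ?_
  · exact (Complex.continuous_conj.comp (continuous_fourierReal hf)).aestronglyMeasurable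
  · exact Eventually.of_forall fun ξ => by simpa using norm_fourierReal_le f ξ

lemma SmoothCompactSupport.le_re_integral_conj_fourierReal_mul (hu : SmoothCompactSupport u)
    (hf : IsBoundedDensity f M) {s : ℝ} (hs : ∀ x, f x ≠ 0 → s ≤ u x) :
    s ≤ (∫ ξ, (starRingEnd ℂ) (fourierReal f ξ) * fourierReal u ξ).re := by
  rw [integral_conj_fourierReal_mul hf.integrable hu.integrable_fourierReal]
  simp only [hu.fourierInv_fourierReal, ← Complex.ofReal_mul]
  rw [integral_complex_ofReal, Complex.ofReal_re]
  have hint : Integrable (fun x => f x * u x) := by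
    obtain ⟨C, hC⟩ := hu.contDiff.continuous.bounded_above_of_compact_support hu.hasCompactSupport
    exact hf.integrable.mul_bdd hu.contDiff.continuous.aestronglyMeasurable
      (Eventually.of_forall hC)
  calc s = ∫ x, f x * s := by rw [integral_mul_const, hf.integral_eq_one, one_mul]
    _ ≤ _ := by
        refine integral_mono (hf.integrable.mul_const _) hint fun x => ?_
        by_cases hx : f x = 0
        · simp [hx]
        · exact mul_le_mul_of_nonneg_left (hs x hx) (hf.nonneg x)

lemma SmoothCompactSupport.add_le_integral_norm_mul_norm (hu : SmoothCompactSupport u)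
    (hf : IsBoundedDensity f M) (hg : IsBoundedDensity g M') {s s' : ℝ}
    (hs : ∀ x, f x ≠ 0 → s ≤ u x) (hs' : ∀ x, g x ≠ 0 → s' ≤ u x) :
    s + s' ≤ ∫ ξ, ‖fourierReal f ξ + fourierReal g ξ‖ * ‖fourierReal u ξ‖ :=
  calc s + s'
      ≤ (∫ ξ, ((starRingEnd ℂ) (fourierReal f ξ) * fourierReal u ξ +
          (starRingEnd ℂ) (fourierReal g ξ) * fourierReal u ξ)).re := by
        rw [integral_add (hu.integrable_conj_fourierReal_mul hf.integrable)
          (hu.integrable_conj_fourierReal_mul hg.integrable), Complex.add_re]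
        exact add_le_add (hu.le_re_integral_conj_fourierReal_mul hf hs)
          (hu.le_re_integral_conj_fourierReal_mul hg hs')
    _ ≤ ∫ ξ, ‖(starRingEnd ℂ) (fourierReal f ξ) * fourierReal u ξ +
          (starRingEnd ℂ) (fourierReal g ξ) * fourierReal u ξ‖ :=
        (Complex.re_le_norm _).trans (norm_integral_le_integral_norm _)
    _ = _ := by simp only [← add_mul, ← map_add, norm_mul, RCLike.norm_conj]

lemma exists_betaStar_mul_add_sq_le (hV : Module.finrank ℝ V = 2 * m) (hm : 1 ≤ m) (hL : 0 ≤ L)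
    (hd : 0 < d) (hA : 1 ≤ A) :
    ∃ C : ℝ, ∀ {u : V → ℝ}, SmoothCompactSupport u →
      ∫ ξ, truncatedWeight m L d (laplaceSymbol ξ) * ‖fourierReal u ξ‖ ^ 2 ≤ 1 →
      ∀ {f g : V → ℝ} {a b s s' : ℝ}, 0 < a → a ≤ A → 0 < b → b ≤ A →
        IsBoundedDensity f a⁻¹ → IsBoundedDensity g b⁻¹ → 0 ≤ s → 0 ≤ s' →
        (∀ x, f x ≠ 0 → s ≤ u x) → (∀ x, g x ≠ 0 → s' ≤ u x) →
        betaStar m * (s + s') ^ 2 ≤ 3 * -log a + -log b + 4 * C := by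
  obtain ⟨C, hC⟩ := exists_integral_inv_truncatedWeight_mul_norm_add_sq_le hV hm hL hd hA
  refine ⟨C, fun {u} hu hu₁ {f g a b s s'} ha haA hb hbA hf hg hs₀ hs₀' hs hs' => ?_⟩
  have hw (ξ : V) : 0 < truncatedWeight m L d (laplaceSymbol ξ) :=
    hd.trans_le (le_truncatedWeight m L d _)
  obtain ⟨hint, hbound⟩ := hC ha haA hb hbA hf hg
  refine le_trans (mul_le_mul_of_nonneg_left ?_ (betaStar_pos m).le) hbound
  calc (s + s') ^ 2 ≤ (∫ ξ, ‖fourierReal f ξ + fourierReal g ξ‖ * ‖fourierReal u ξ‖) ^ 2 :=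
        pow_le_pow_left₀ (by positivity) (hu.add_le_integral_norm_mul_norm hf hg hs hs') 2
    _ ≤ _ := sq_integral_mul_le_integral_inv_mul_sq hw hint
        (hu.integrable_truncatedWeight_mul hL hd.le)
    _ ≤ _ := mul_le_of_le_one_right
        (integral_nonneg fun ξ => mul_nonneg (inv_nonneg.2 (hw ξ).le) (sq_nonneg _)) hu₁

end CriticalBound

/-! ### Summation over level sets -/

lemma encard_le_of_mul_le_sq {N : ℕ} {T : Set ℕ}
    (hT : ∀ n₁ ∈ T, ∀ n₂ ∈ T, n₁ ≤ n₂ → n₁ * n₂ ≤ (n₁ + 2 * N) ^ 2) :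
    T.encard ≤ (9 * N + 2 : ℕ) := by
  classical
  suffices ∃ s : Finset ℕ, T ⊆ s ∧ s.card ≤ 9 * N + 2 by
    obtain ⟨s, hTs, hs⟩ := this
    refine (Set.encard_le_encard hTs).trans ?_
    rw [Set.encard_coe_eq_coe_finsetCard]
    exact_mod_cast hs
  by_cases hlarge : ∃ n, n ∈ T ∧ N + 1 ≤ n
  · obtain ⟨hT₁, hN₁⟩ := Nat.find_spec hlarge
    set n₁ := Nat.find hlarge
    refine ⟨Finset.range (N + 1) ∪ Finset.Icc n₁ (n₁ + 8 * N), fun n hn => ?_, ?_⟩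
    · simp only [Finset.coe_union, Set.mem_union, Finset.mem_coe, Finset.mem_range, Finset.mem_Icc]
      refine or_iff_not_imp_left.2 fun hNn => ?_
      have hle : n₁ ≤ n := Nat.find_min' hlarge ⟨hn, by lia⟩
      refine ⟨hle, ?_⟩
      by_contra! hlt
      have hmul := Nat.mul_le_mul_left n₁ (Nat.succ_le_of_lt hlt)
      have := hT n₁ hT₁ n hn hle
      nlinarith
    · refine (Finset.card_union_le _ _).trans ?_
      simp only [Finset.card_range, Nat.card_Icc]
      lia
  · push Not at hlarge
    refine ⟨Finset.range (N + 1), fun n hn => ?_, ?_⟩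
    · simpa only [Finset.coe_range, Set.mem_Iio] using hlarge n hn
    · rw [Finset.card_range]
      lia

lemma exists_nat_exp_neg_le_le_exp {C x : ℝ} (hC : 0 ≤ C) (hx : 0 < x) (hxC : x ≤ exp C) :
    ∃ j : ℕ, exp (-j) ≤ x ∧ x ≤ exp (C + 1 - j) := by
  rw [← log_le_iff_le_exp hx] at hxC
  simp only [← le_log_iff_exp_le hx, ← log_le_iff_le_exp hx]
  refine ⟨⌈-log x⌉₊, by linarith [Nat.le_ceil (-log x)], ?_⟩
  rcases le_total (-log x) 0 with h | h
  · rw [Nat.ceil_eq_zero.2 h, Nat.cast_zero]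
    linarith
  · linarith [Nat.ceil_lt_add_one h]

lemma tsum_ofReal_le_tsum_encard_mul {ι : Type*} {C : ℝ} (hC : 0 ≤ C) {a : ι → ℝ}
    (ha : ∀ n, a n ≤ exp C) :
    ∑' n, ENNReal.ofReal (a n) ≤
      ∑' j : ℕ, {n | exp (-j) ≤ a n}.encard * ENNReal.ofReal (exp (C + 1 - j)) := by
  calc ∑' n, ENNReal.ofReal (a n)
      ≤ ∑' n, ∑' j : ℕ, {n | exp (-j) ≤ a n}.indicator
          (fun _ => ENNReal.ofReal (exp (C + 1 - j))) n := by
        refine ENNReal.tsum_le_tsum fun n => ?_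
        rcases le_or_gt (a n) 0 with hn | hn
        · simp [ENNReal.ofReal_of_nonpos hn]
        · obtain ⟨j, hj, hj'⟩ := exists_nat_exp_neg_le_le_exp hC hn (ha n)
          refine le_trans ?_ (ENNReal.le_tsum j)
          rw [Set.indicator_of_mem (show n ∈ {n | exp (-j) ≤ a n} from hj)]
          exact ENNReal.ofReal_le_ofReal hj'
    _ = _ := by
        rw [ENNReal.tsum_comm]
        simp only [← tsum_subtype, ENNReal.tsum_set_const]

lemma summable_add_mul_exp_sub (p q c : ℝ) : Summable fun j : ℕ => (p * j + q) * exp (c - j) := by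
  have h₀ := Real.summable_pow_mul_exp_neg_nat_mul 0 one_pos
  have h₁ := Real.summable_pow_mul_exp_neg_nat_mul 1 one_pos
  refine (((h₁.mul_left p).add (h₀.mul_left q)).mul_left (exp c)).congr fun j => ?_
  rw [sub_eq_add_neg, exp_add]
  ring_nf

lemma exists_tsum_ofReal_le (C : ℕ) :
    ∃ B : ℝ≥0∞, B < ⊤ ∧ ∀ a : ℕ → ℝ, (∀ n₁ n₂, 0 < a n₁ → 0 < a n₂ →
      (√n₁ + √n₂) ^ 2 ≤ 3 * (n₁ - log (a n₁)) + (n₂ - log (a n₂)) + 4 * C) →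
      ∑' n, ENNReal.ofReal (a n) ≤ B := by
  refine ⟨∑' j : ℕ, ENNReal.ofReal ((9 * j + (9 * C + 2)) * exp (C + 1 - j)), ?_,
    fun a ha => ?_⟩
  · rw [← ENNReal.ofReal_tsum_of_nonneg (fun j => by positivity)
      (summable_add_mul_exp_sub 9 (9 * C + 2) (C + 1))]
    exact ENNReal.ofReal_lt_top
  have hsq (n : ℕ) : √(n : ℝ) ^ 2 = n := sq_sqrt n.cast_nonneg
  have haC (n : ℕ) : a n ≤ exp C := by
    rcases le_or_gt (a n) 0 with hn | hn
    · exact hn.trans (exp_pos _).le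
    · rw [← log_le_iff_le_exp hn]
      nlinarith [ha n n hn hn, hsq n]
  refine (tsum_ofReal_le_tsum_encard_mul C.cast_nonneg haC).trans
    (ENNReal.tsum_le_tsum fun j => ?_)
  have hcard : {n | exp (-(j : ℝ)) ≤ a n}.encard ≤ (9 * (j + C) + 2 : ℕ) := by
    refine encard_le_of_mul_le_sq fun n₁ h₁ n₂ h₂ _ => ?_
    have hpos₁ := (exp_pos _).trans_le h₁
    have hpos₂ := (exp_pos _).trans_le h₂
    have hlog₁ := (le_log_iff_exp_le hpos₁).2 h₁
    have hlog₂ := (le_log_iff_exp_le hpos₂).2 h₂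
    have hmul : √(n₁ : ℝ) * √n₂ ≤ n₁ + 2 * (j + C) := by
      nlinarith [ha n₁ n₂ hpos₁ hpos₂, hsq n₁, hsq n₂]
    have := pow_le_pow_left₀ (by positivity) hmul 2
    rw [mul_pow, hsq, hsq] at this
    exact_mod_cast this
  calc _ ≤ ((9 * (j + C) + 2 : ℕ) : ℝ≥0∞) * ENNReal.ofReal (exp (C + 1 - j)) := by
        gcongr
        exact_mod_cast ENat.toENNReal_le.2 hcard
    _ = _ := by
        rw [← ENNReal.ofReal_natCast, ← ENNReal.ofReal_mul (by positivity)]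
        push_cast
        ring_nf

lemma lintegral_ofReal_exp_le_tsum {X : Type*} [MeasurableSpace X] {μ : Measure X} {g : X → ℝ}
    (hg : Measurable g) (hg₀ : ∀ x, 0 ≤ g x) :
    ∫⁻ x, ENNReal.ofReal (exp (g x)) ∂μ ≤
      ∑' n : ℕ, ENNReal.ofReal (exp (n + 1)) * μ {x | n ≤ g x} := by
  have hmeas (n : ℕ) : MeasurableSet {x | (n : ℝ) ≤ g x} := measurableSet_le measurable_const hg
  simp only [← lintegral_indicator_const (hmeas _)]
  rw [← lintegral_tsum fun n => (measurable_const.indicator (hmeas n)).aemeasurable]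
  refine lintegral_mono fun x => le_trans ?_ (ENNReal.le_tsum ⌊g x⌋₊)
  rw [Set.indicator_of_mem (s := {x | (_ : ℝ) ≤ g x}) (Nat.floor_le (hg₀ x))]
  exact ENNReal.ofReal_le_ofReal (exp_le_exp.2 (Nat.lt_floor_add_one _).le)

section Garsia

variable {V : Type*} [NormedAddCommGroup V] [InnerProductSpace ℝ V] [MeasurableSpace V]
  [BorelSpace V] [FiniteDimensional ℝ V] {m : ℕ} {L d : ℝ} {Ω : Set V}

lemma exists_sqrt_add_sqrt_sq_le (hV : Module.finrank ℝ V = 2 * m) (hm : 1 ≤ m) (hL : 0 ≤ L)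
    (hd : 0 < d) (hΩ : MeasurableSet Ω) (hΩfin : volume Ω ≠ ⊤) :
    ∃ C : ℕ, ∀ {u : V → ℝ}, SmoothCompactSupport u →
      ∫ ξ, truncatedWeight m L d (laplaceSymbol ξ) * ‖fourierReal u ξ‖ ^ 2 ≤ 1 →
      ∀ n₁ n₂ : ℕ, 0 < volume.real {x ∈ Ω | √(n₁ / betaStar m) ≤ u x} →
        0 < volume.real {x ∈ Ω | √(n₂ / betaStar m) ≤ u x} →
        (√n₁ + √n₂) ^ 2 ≤ 3 * -log (volume.real {x ∈ Ω | √(n₁ / betaStar m) ≤ u x}) +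
          -log (volume.real {x ∈ Ω | √(n₂ / betaStar m) ≤ u x}) + 4 * C := by
  obtain ⟨C, hC⟩ := exists_betaStar_mul_add_sq_le hV hm hL hd (le_max_left 1 (volume.real Ω))
  refine ⟨⌈C⌉₊, fun {u} hu hu₁ n₁ n₂ hn₁ hn₂ => ?_⟩
  have hβ := betaStar_pos m
  have hmeas (n : ℕ) : MeasurableSet {x ∈ Ω | √(n / betaStar m) ≤ u x} :=
    hΩ.inter (isClosed_le continuous_const hu.contDiff.continuous).measurableSet
  have hvol (n : ℕ) : volume.real {x ∈ Ω | √(n / betaStar m) ≤ u x} ≤ max 1 (volume.real Ω) :=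
    (measureReal_mono (Set.sep_subset _ _) hΩfin).trans (le_max_right _ _)
  have hlevel (n : ℕ) (x : V)
      (hx : uniformDensity {x ∈ Ω | √(n / betaStar m) ≤ u x} x ≠ 0) : √(n / betaStar m) ≤ u x :=
    (Set.mem_of_indicator_ne_zero hx).2
  have hpair := hC hu hu₁ hn₁ (hvol n₁) hn₂ (hvol n₂)
    (isBoundedDensity_uniformDensity (hmeas n₁) hn₁)
    (isBoundedDensity_uniformDensity (hmeas n₂) hn₂) (sqrt_nonneg _) (sqrt_nonneg _)
    (hlevel n₁) (hlevel n₂)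
  have hscale : betaStar m * (√(n₁ / betaStar m) + √(n₂ / betaStar m)) ^ 2 = (√n₁ + √n₂) ^ 2 := by
    rw [sqrt_div n₁.cast_nonneg, sqrt_div n₂.cast_nonneg, ← add_div, div_pow, sq_sqrt hβ.le,
      mul_div_cancel₀ _ hβ.ne']
  rw [hscale] at hpair
  linarith [Nat.le_ceil C]

lemma exists_setLIntegral_nonneg_exp_le (hV : Module.finrank ℝ V = 2 * m) (hm : 1 ≤ m) (hL : 0 ≤ L)
    (hd : 0 < d) (hΩ : MeasurableSet Ω) (hΩfin : volume Ω ≠ ⊤) :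
    ∃ B : ℝ≥0∞, B < ⊤ ∧ ∀ {u : V → ℝ}, SmoothCompactSupport u →
      ∫ ξ, truncatedWeight m L d (laplaceSymbol ξ) * ‖fourierReal u ξ‖ ^ 2 ≤ 1 →
      ∫⁻ x in {x ∈ Ω | 0 ≤ u x}, ENNReal.ofReal (exp (betaStar m * u x ^ 2)) ≤ B := by
  obtain ⟨C, hC⟩ := exists_sqrt_add_sqrt_sq_le hV hm hL hd hΩ hΩfin
  obtain ⟨B, hB, hsum⟩ := exists_tsum_ofReal_le C
  refine ⟨ENNReal.ofReal (exp 1) * B, ENNReal.mul_lt_top ENNReal.ofReal_lt_top hB,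
    fun {u} hu hu₁ => ?_⟩
  have hβ := betaStar_pos m
  set E : ℕ → Set V := fun n => {x ∈ Ω | √(n / betaStar m) ≤ u x}
  have hmeas : Measurable fun x => betaStar m * u x ^ 2 :=
    measurable_const.mul (hu.contDiff.continuous.measurable.pow_const 2)
  have hlevel (n : ℕ) :
      volume.restrict {x ∈ Ω | 0 ≤ u x} {x | (n : ℝ) ≤ betaStar m * u x ^ 2} =
        ENNReal.ofReal (volume.real (E n)) := by
    rw [ofReal_measureReal (measure_ne_top_of_subset (Set.sep_subset _ _) hΩfin),
      Measure.restrict_apply (measurableSet_le measurable_const hmeas)]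
    congr 1
    ext x
    simp only [Set.mem_inter_iff, Set.mem_ofPred_eq, sqrt_le_iff, div_le_iff₀' hβ]
    tauto
  refine (lintegral_ofReal_exp_le_tsum hmeas fun x => by positivity).trans ?_
  calc _ = ENNReal.ofReal (exp 1) * ∑' n : ℕ, ENNReal.ofReal (exp n * volume.real (E n)) := by
        rw [← ENNReal.tsum_mul_left]
        refine tsum_congr fun n => ?_
        rw [hlevel, ← ENNReal.ofReal_mul (by positivity), ← ENNReal.ofReal_mul (by positivity),
          exp_add]
        ring_nf
    _ ≤ _ := by
        gcongr
        refine hsum _ fun n₁ n₂ h₁ h₂ => ?_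
        have hpos₁ := pos_of_mul_pos_right h₁ (exp_pos _).le
        have hpos₂ := pos_of_mul_pos_right h₂ (exp_pos _).le
        rw [log_mul (exp_pos _).ne' hpos₁.ne', log_mul (exp_pos _).ne' hpos₂.ne', log_exp, log_exp]
        linarith [hC hu hu₁ n₁ n₂ hpos₁ hpos₂]

lemma exists_setLIntegral_exp_le (hV : Module.finrank ℝ V = 2 * m) (hm : 1 ≤ m) (hL : 0 ≤ L)
    (hd : 0 < d) (hΩ : MeasurableSet Ω) (hΩfin : volume Ω ≠ ⊤) :
    ∃ B : ℝ≥0∞, B < ⊤ ∧ ∀ {u : V → ℝ}, SmoothCompactSupport u →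
      ∫ ξ, truncatedWeight m L d (laplaceSymbol ξ) * ‖fourierReal u ξ‖ ^ 2 ≤ 1 →
      ∫⁻ x in Ω, ENNReal.ofReal (exp (betaStar m * u x ^ 2)) ≤ B := by
  obtain ⟨B, hB, h⟩ := exists_setLIntegral_nonneg_exp_le hV hm hL hd hΩ hΩfin
  refine ⟨B + B, ENNReal.add_lt_top.2 ⟨hB, hB⟩, fun {u} hu hu₁ => ?_⟩
  have hpos := h hu hu₁
  have hneg := h hu.neg (by simpa only [fourierReal_neg, norm_neg] using hu₁)
  simp only [neg_sq] at hneg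
  have hcover : Ω ⊆ {x ∈ Ω | 0 ≤ u x} ∪ {x ∈ Ω | 0 ≤ -u x} := fun x hx =>
    (le_total 0 (u x)).imp (fun hx' => ⟨hx, hx'⟩) fun hx' => ⟨hx, neg_nonneg.2 hx'⟩
  exact (lintegral_mono_set hcover).trans
    ((lintegral_union_le _ _ _).trans (add_le_add hpos hneg))

end Garsia

/-! ### Compactness in the frequency variable -/

section WeakCompactness

lemma exists_strictMono_tendsto_inner (𝕜 : Type*) [RCLike 𝕜] {H : Type*} [NormedAddCommGroup H]
    [InnerProductSpace 𝕜 H] [CompleteSpace H] [TopologicalSpace.SeparableSpace H] {x : ℕ → H}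
    {r : ℝ} (hx : ∀ k, ‖x k‖ ≤ r) :
    ∃ (y : H) (ψ : ℕ → ℕ), StrictMono ψ ∧
      ∀ v, Tendsto (fun k => inner 𝕜 (x (ψ k)) v) atTop (𝓝 (inner 𝕜 y v)) := by
  obtain ⟨l, -, ψ, hψ, hl⟩ := WeakDual.isSeqCompact_closedBall 𝕜 H 0 r
    (x := fun k => StrongDual.toWeakDual (InnerProductSpace.toDual 𝕜 H (x k))) fun k => by
      simp only [Set.mem_preimage, Metric.mem_closedBall, dist_zero_right]
      exact ((InnerProductSpace.toDual 𝕜 H).norm_map (x k)).trans_le (hx k)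
  refine ⟨(InnerProductSpace.toDual 𝕜 H).symm (WeakDual.toStrongDual l), ψ, hψ, fun v => ?_⟩
  rw [InnerProductSpace.toDual_symm_apply]
  exact ((WeakDual.eval_continuous v).tendsto l).comp hl

lemma exists_strictMono_tendsto_integral_mul {X : Type*} [MeasurableSpace X] {μ : Measure X}
    [IsSeparable μ] {u : ℕ → X → ℝ} {B : ℝ} (hu : ∀ k, MemLp (u k) 2 μ)
    (hB : ∀ k, ∫ x, u k x ^ 2 ∂μ ≤ B) :
    ∃ (φ : X → ℝ) (ψ : ℕ → ℕ), StrictMono ψ ∧ MemLp φ 2 μ ∧ ∀ g, MemLp g 2 μ →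
      Tendsto (fun k => ∫ x, u (ψ k) x * g x ∂μ) atTop (𝓝 (∫ x, φ x * g x ∂μ)) := by
  have : Fact ((2 : ℝ≥0∞) ≠ ⊤) := ⟨ENNReal.ofNat_ne_top⟩
  have hnorm (k : ℕ) : ‖(hu k).toLp‖ ≤ √B := by
    refine le_sqrt_of_sq_le ((Eq.trans_le ?_ (hB k)))
    rw [← real_inner_self_eq_norm_sq, L2.inner_def]
    refine integral_congr_ae ?_
    filter_upwards [(hu k).coeFn_toLp] with x hx
    simp [hx]
  obtain ⟨y, ψ, hψ, hy⟩ := exists_strictMono_tendsto_inner ℝ hnorm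
  refine ⟨y, ψ, hψ, Lp.memLp y, fun g hg => ?_⟩
  have hinner := hy hg.toLp
  simp only [L2.inner_def] at hinner
  convert hinner using 1
  · ext k
    refine integral_congr_ae ?_
    filter_upwards [(hu (ψ k)).coeFn_toLp, hg.coeFn_toLp] with x hx hx'
    simp only [hx, hx', RCLike.inner_apply, conj_trivial, mul_comm]
  · congr 1
    refine integral_congr_ae ?_
    filter_upwards [hg.coeFn_toLp] with x hx
    simp only [hx, RCLike.inner_apply, conj_trivial, mul_comm]

lemma fourierReal_eq_cos_sub_sin {V : Type*} [NormedAddCommGroup V] [InnerProductSpace ℝ V]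
    [MeasurableSpace V] [BorelSpace V] [FiniteDimensional ℝ V] {f : V → ℝ} (hf : Integrable f)
    (ξ : V) :
    fourierReal f ξ = ((∫ x, f x * cos (2 * π * inner ℝ x ξ) : ℝ) : ℂ) -
      Complex.I * ((∫ x, f x * sin (2 * π * inner ℝ x ξ) : ℝ) : ℂ) := by
  have hcos : Integrable (fun x => f x * cos (2 * π * inner ℝ x ξ)) :=
    hf.mul_bdd (c := 1) (by fun_prop)
      (Eventually.of_forall fun x => by simpa using abs_cos_le_one _)
  have hsin : Integrable (fun x => f x * sin (2 * π * inner ℝ x ξ)) :=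
    hf.mul_bdd (c := 1) (by fun_prop)
      (Eventually.of_forall fun x => by simpa using abs_sin_le_one _)
  rw [fourierReal, Real.fourier_eq', ← integral_complex_ofReal, ← integral_complex_ofReal,
    ← integral_const_mul, ← integral_sub hcos.ofReal (hsin.ofReal.const_mul _)]
  refine integral_congr_ae (Eventually.of_forall fun x => ?_)
  have hneg : ((-2 * π * inner ℝ x ξ : ℝ) : ℂ) = -((2 * π * inner ℝ x ξ : ℝ) : ℂ) := by
    push_cast
    ring
  simp only [smul_eq_mul, hneg, Complex.exp_mul_I, Complex.cos_neg, Complex.sin_neg]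
  push_cast
  ring

lemma exists_strictMono_tendsto_fourierReal {V : Type*} [NormedAddCommGroup V]
    [InnerProductSpace ℝ V] [MeasurableSpace V] [BorelSpace V] [FiniteDimensional ℝ V] {Ω : Set V}
    (hΩ : MeasurableSet Ω) (hΩfin : volume Ω ≠ ⊤) {u : ℕ → V → ℝ} {B : ℝ}
    (hu : ∀ k, MemLp (u k) 2) (hsupp : ∀ k, ∀ x ∉ Ω, u k x = 0) (hB : ∀ k, ∫ x, u k x ^ 2 ≤ B) :
    ∃ (φ : V → ℝ) (ψ : ℕ → ℕ), StrictMono ψ ∧ Integrable φ ∧ (∀ x ∉ Ω, φ x = 0) ∧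
      ∀ ξ, Tendsto (fun k => fourierReal (u (ψ k)) ξ) atTop (𝓝 (fourierReal φ ξ)) := by
  obtain ⟨φ, ψ, hψ, hφ, hweak⟩ := exists_strictMono_tendsto_integral_mul hu hB
  have : IsFiniteMeasure (volume.restrict Ω) := ⟨by simpa using hΩfin.lt_top⟩
  have hint {f : V → ℝ} (hf : MemLp f 2) : Integrable (Ω.indicator f) := by
    rw [integrable_indicator_iff hΩ]
    exact (hf.restrict Ω).integrable one_le_two
  have hindicator {f : V → ℝ} (hf : ∀ x ∉ Ω, f x = 0) : Ω.indicator f = f :=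
    Set.indicator_eq_self.2 fun x hx => not_imp_comm.1 (hf x) hx
  have htest (g : V → ℝ) (hg : Continuous g) (hg₁ : ∀ x, |g x| ≤ 1) :
      Tendsto (fun k => ∫ x, u (ψ k) x * g x) atTop (𝓝 (∫ x, Ω.indicator φ x * g x)) := by
    have hgΩ : MemLp (Ω.indicator g) 2 := (memLp_indicator_iff_restrict hΩ).2
      (MemLp.of_bound hg.aestronglyMeasurable 1 (Eventually.of_forall hg₁))
    have hmul (f : V → ℝ) (x : V) : f x * Ω.indicator g x = Ω.indicator f x * g x := by
      rw [← Set.indicator_mul_right, ← Set.indicator_mul_left]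
    simpa only [hmul, hindicator (hsupp _)] using hweak _ hgΩ
  refine ⟨Ω.indicator φ, ψ, hψ, hint hφ, fun x hx => Set.indicator_of_notMem hx _, fun ξ => ?_⟩
  rw [fourierReal_eq_cos_sub_sin (hint hφ)]
  simp only [fun k => fourierReal_eq_cos_sub_sin (hindicator (hsupp k) ▸ hint (hu k)) ξ]
  have hcos := htest (fun x => cos (2 * π * inner ℝ x ξ)) (by fun_prop) fun x => abs_cos_le_one _
  have hsin := htest (fun x => sin (2 * π * inner ℝ x ξ)) (by fun_prop) fun x => abs_sin_le_one _
  exact ((Complex.continuous_ofReal.tendsto _).comp hcos).sub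
    (((Complex.continuous_ofReal.tendsto _).comp hsin).const_mul _)

end WeakCompactness

lemma integrable_and_integral_le_of_tendsto {X : Type*} [MeasurableSpace X] {μ : Measure X}
    {F : ℕ → X → ℝ} {G : X → ℝ} {B : ℝ} (hF₀ : ∀ k x, 0 ≤ F k x)
    (hF : ∀ k, Integrable (F k) μ) (hFB : ∀ k, ∫ x, F k x ∂μ ≤ B)
    (hlim : ∀ x, Tendsto (fun k => F k x) atTop (𝓝 (G x))) :
    Integrable G μ ∧ ∫ x, G x ∂μ ≤ B := by
  have hG₀ (x : X) : 0 ≤ G x := ge_of_tendsto' (hlim x) fun k => hF₀ k x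
  have hB : 0 ≤ B := (integral_nonneg (hF₀ 0)).trans (hFB 0)
  have hfatou : ∫⁻ x, ENNReal.ofReal (G x) ∂μ ≤ ENNReal.ofReal B :=
    calc _ = ∫⁻ x, liminf (fun k => ENNReal.ofReal (F k x)) atTop ∂μ :=
          lintegral_congr fun x =>
            ((ENNReal.continuous_ofReal.tendsto _).comp (hlim x)).liminf_eq.symm
      _ ≤ liminf (fun k => ∫⁻ x, ENNReal.ofReal (F k x) ∂μ) atTop :=
          lintegral_liminf_le' fun k => (hF k).aemeasurable.ennreal_ofReal
      _ ≤ liminf (fun _ : ℕ => ENNReal.ofReal B) atTop := by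
          refine liminf_le_liminf (Eventually.of_forall fun k => ?_)
          rw [← ofReal_integral_eq_lintegral_ofReal (hF k) (Eventually.of_forall (hF₀ k))]
          exact ENNReal.ofReal_le_ofReal (hFB k)
      _ = ENNReal.ofReal B := liminf_const _
  have hG : Integrable G μ := by
    refine ⟨aestronglyMeasurable_of_tendsto_ae atTop (fun k => (hF k).aestronglyMeasurable)
      (Eventually.of_forall hlim), ?_⟩
    rw [hasFiniteIntegral_iff_ofReal (Eventually.of_forall hG₀)]
    exact hfatou.trans_lt ENNReal.ofReal_lt_top
  refine ⟨hG, ?_⟩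
  rwa [← ofReal_integral_eq_lintegral_ofReal hG (Eventually.of_forall hG₀),
    ENNReal.ofReal_le_ofReal_iff hB] at hfatou

lemma integral_sub_div_le_setIntegral {X : Type*} [MeasurableSpace X] {μ : Measure X}
    {w h : X → ℝ} {D : Set X} {R γ : ℝ} (hD : MeasurableSet D) (hR : 0 < R) (hh₀ : ∀ x, 0 ≤ h x)
    (hw₀ : ∀ x, 0 ≤ w x) (hwR : ∀ x ∉ D, R ≤ w x) (hh : Integrable h μ)
    (hwh : Integrable (fun x => w x * h x) μ) (hγ : ∫ x, w x * h x ∂μ ≤ γ) :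
    ∫ x, h x ∂μ - γ / R ≤ ∫ x in D, h x ∂μ := by
  have htail : ∫ x in Dᶜ, h x ∂μ ≤ γ / R := by
    rw [le_div_iff₀' hR, ← integral_const_mul]
    calc ∫ x in Dᶜ, R * h x ∂μ ≤ ∫ x in Dᶜ, w x * h x ∂μ :=
          setIntegral_mono_on (hh.const_mul R).integrableOn hwh.integrableOn hD.compl
            fun x hx => mul_le_mul_of_nonneg_right (hwR x hx) (hh₀ x)
      _ ≤ ∫ x, w x * h x ∂μ :=
          setIntegral_le_integral hwh (Eventually.of_forall fun x => mul_nonneg (hw₀ x) (hh₀ x))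
      _ ≤ γ := hγ
  linarith [integral_add_compl hD hh]

lemma integral_abs_le_of_eq_zero {X : Type*} [MeasurableSpace X] {μ : Measure X} {Ω : Set X}
    {u : X → ℝ} (hΩ : MeasurableSet Ω) (hΩfin : μ Ω ≠ ⊤) (hu : Integrable (fun x => u x ^ 2) μ)
    (hsupp : ∀ x ∉ Ω, u x = 0) :
    ∫ x, |u x| ∂μ ≤ μ.real Ω + ∫ x, u x ^ 2 ∂μ := by
  have hone : Integrable (Ω.indicator fun _ => (1 : ℝ)) μ :=
    (integrable_indicator_iff hΩ).2 (integrableOn_const hΩfin)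
  calc _ ≤ ∫ x, (Ω.indicator (fun _ => (1 : ℝ)) x + u x ^ 2) ∂μ := by
        refine integral_mono_of_nonneg (Eventually.of_forall fun x => abs_nonneg _)
          (hone.add hu) (Eventually.of_forall fun x => ?_)
        by_cases hx : x ∈ Ω
        · simp only [Set.indicator_of_mem hx]
          nlinarith [sq_abs (u x), sq_nonneg (|u x| - 1)]
        · simp [hx, hsupp x hx]
    _ = _ := by
        rw [integral_add hone hu, integral_indicator_const _ hΩ, smul_eq_mul, mul_one]

section FourierLimit

variable {V : Type*} [NormedAddCommGroup V] [InnerProductSpace ℝ V] [MeasurableSpace V]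
  [BorelSpace V] [FiniteDimensional ℝ V] {m : ℕ} {L γ M : ℝ} {Ω : Set V}

lemma le_laplaceSymbol_pow {V : Type*} [NormedAddCommGroup V] {R : ℝ} {ξ : V} (hm : 1 ≤ m)
    (hR : 1 ≤ R) (hξ : R ≤ ‖ξ‖) : R ≤ laplaceSymbol ξ ^ m := by
  have hR' : R ≤ 2 * π * ‖ξ‖ := by nlinarith [pi_gt_three]
  have hsq : R ≤ laplaceSymbol ξ := hR'.trans (le_self_pow₀ (hR.trans hR') two_ne_zero)
  exact hsq.trans (le_self_pow₀ (hR.trans hsq) (by lia))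

lemma SmoothCompactSupport.integrable_min_laplaceSymbol_pow {u : V → ℝ}
    (hu : SmoothCompactSupport u) (m : ℕ) (hL : 0 ≤ L) :
    Integrable (fun ξ => min (laplaceSymbol ξ ^ m) L * ‖fourierReal u ξ‖ ^ 2) := by
  refine (hu.integrable_laplaceSymbol_pow m).mono' ?_ (Eventually.of_forall fun ξ => ?_)
  · exact (((continuous_laplaceSymbol.pow m).min continuous_const).mul
      ((continuous_fourierReal hu.integrable).norm.pow 2)).aestronglyMeasurable
  · have := le_min (pow_nonneg (laplaceSymbol_nonneg ξ) m) hL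
    rw [Real.norm_of_nonneg (by positivity)]
    exact mul_le_mul_of_nonneg_right (min_le_left _ _) (sq_nonneg _)

variable {u : ℕ → V → ℝ} {φ : V → ℝ} {κ : ℕ → ℝ}

lemma integral_laplaceSymbol_pow_mul_le_of_tendsto (hu : ∀ k, SmoothCompactSupport (u k))
    (hκ₀ : ∀ k, 0 ≤ κ k) (hκ : Tendsto κ atTop atTop)
    (hγ : ∀ k, ∫ ξ, min (laplaceSymbol ξ ^ m) (κ k) * ‖fourierReal (u k) ξ‖ ^ 2 ≤ γ)
    (hlim : ∀ ξ, Tendsto (fun k => fourierReal (u k) ξ) atTop (𝓝 (fourierReal φ ξ))) :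
    Integrable (fun ξ => laplaceSymbol ξ ^ m * ‖fourierReal φ ξ‖ ^ 2) ∧
      ∫ ξ, laplaceSymbol ξ ^ m * ‖fourierReal φ ξ‖ ^ 2 ≤ γ := by
  refine integrable_and_integral_le_of_tendsto
    (fun k ξ => mul_nonneg (le_min (pow_nonneg (laplaceSymbol_nonneg ξ) m) (hκ₀ k)) (sq_nonneg _))
    (fun k => (hu k).integrable_min_laplaceSymbol_pow m (hκ₀ k)) hγ fun ξ => ?_
  refine Tendsto.mul (tendsto_const_nhds.congr' ?_) ((hlim ξ).norm.pow 2)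
  filter_upwards [hκ.eventually_ge_atTop (laplaceSymbol ξ ^ m)] with k hk
  rw [min_eq_left hk]

lemma one_sub_div_le_setIntegral_norm_sq_fourierReal (hm : 1 ≤ m) {u : V → ℝ} {R : ℝ}
    (hu : SmoothCompactSupport u) (hu₁ : ∫ ξ, ‖fourierReal u ξ‖ ^ 2 = 1)
    (hγ : ∫ ξ, min (laplaceSymbol ξ ^ m) L * ‖fourierReal u ξ‖ ^ 2 ≤ γ) (hR : 1 ≤ R)
    (hRL : R ≤ L) :
    1 - γ / R ≤ ∫ ξ in Metric.closedBall 0 R, ‖fourierReal u ξ‖ ^ 2 := by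
  have hR₀ : 0 < R := one_pos.trans_le hR
  have hL := hR₀.le.trans hRL
  rw [← hu₁]
  refine integral_sub_div_le_setIntegral Metric.isClosed_closedBall.measurableSet hR₀
    (fun ξ => sq_nonneg _) (fun ξ => le_min (pow_nonneg (laplaceSymbol_nonneg ξ) m) hL)
    (fun ξ hξ => le_min (le_laplaceSymbol_pow hm hR ?_) hRL) hu.integrable_norm_sq_fourierReal
    (hu.integrable_min_laplaceSymbol_pow m hL) hγ
  rw [mem_closedBall_zero_iff, not_le] at hξ
  exact hξ.le

lemma one_le_integral_norm_sq_fourierReal_of_tendsto (hm : 1 ≤ m)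
    (hu : ∀ k, SmoothCompactSupport (u k)) (hu₁ : ∀ k, ∫ ξ, ‖fourierReal (u k) ξ‖ ^ 2 = 1)
    (hM : ∀ k ξ, ‖fourierReal (u k) ξ‖ ≤ M) (hκ : Tendsto κ atTop atTop)
    (hγ : ∀ k, ∫ ξ, min (laplaceSymbol ξ ^ m) (κ k) * ‖fourierReal (u k) ξ‖ ^ 2 ≤ γ)
    (hlim : ∀ ξ, Tendsto (fun k => fourierReal (u k) ξ) atTop (𝓝 (fourierReal φ ξ)))
    (hφ : Integrable (fun ξ => ‖fourierReal φ ξ‖ ^ 2)) :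
    1 ≤ ∫ ξ, ‖fourierReal φ ξ‖ ^ 2 := by
  have hball (R : ℝ) (hR : 1 ≤ R) : 1 - γ / R ≤ ∫ ξ, ‖fourierReal φ ξ‖ ^ 2 := by
    have hdct : Tendsto (fun k => ∫ ξ in Metric.closedBall 0 R, ‖fourierReal (u k) ξ‖ ^ 2) atTop
        (𝓝 (∫ ξ in Metric.closedBall 0 R, ‖fourierReal φ ξ‖ ^ 2)) := by
      refine tendsto_integral_of_dominated_convergence (fun _ => M ^ 2)
        (fun k => (hu k).integrable_norm_sq_fourierReal.aestronglyMeasurable.restrict)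
        (integrableOn_const measure_closedBall_lt_top.ne)
        (fun k => Eventually.of_forall fun ξ => ?_)
        (Eventually.of_forall fun ξ => (hlim ξ).norm.pow 2)
      rw [Real.norm_of_nonneg (sq_nonneg _)]
      exact pow_le_pow_left₀ (norm_nonneg _) (hM k ξ) 2
    refine le_trans (ge_of_tendsto hdct ?_)
      (setIntegral_le_integral hφ (Eventually.of_forall fun ξ => sq_nonneg _))
    filter_upwards [hκ.eventually_ge_atTop R] with k hk
    exact one_sub_div_le_setIntegral_norm_sq_fourierReal hm (hu k) (hu₁ k) (hγ k) hR hk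
  have hR : Tendsto (fun R : ℝ => 1 - γ / R) atTop (𝓝 (1 - 0)) :=
    tendsto_const_nhds.sub (tendsto_const_nhds.div_atTop tendsto_id)
  rw [sub_zero] at hR
  exact le_of_tendsto hR ((eventually_ge_atTop 1).mono hball)

lemma exists_fourierReal_limit (hm : 1 ≤ m) (hΩ : MeasurableSet Ω) (hΩfin : volume Ω ≠ ⊤)
    (hu : ∀ k, SmoothCompactSupport (u k)) (hsupp : ∀ k, ∀ x ∉ Ω, u k x = 0)
    (hu₁ : ∀ k, ∫ ξ, ‖fourierReal (u k) ξ‖ ^ 2 = 1)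
    (hγ : ∀ k : ℕ, ∫ ξ, min (laplaceSymbol ξ ^ m) k * ‖fourierReal (u k) ξ‖ ^ 2 ≤ γ) :
    ∃ φ : V → ℝ, Integrable φ ∧ (∀ x ∉ Ω, φ x = 0) ∧
      Integrable (fun ξ => ‖fourierReal φ ξ‖ ^ 2) ∧
      Integrable (fun ξ => laplaceSymbol ξ ^ m * ‖fourierReal φ ξ‖ ^ 2) ∧
      ∫ ξ, laplaceSymbol ξ ^ m * ‖fourierReal φ ξ‖ ^ 2 ≤ γ ∧
      1 ≤ ∫ ξ, ‖fourierReal φ ξ‖ ^ 2 := by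
  have hL2 (k : ℕ) : ∫ x, u k x ^ 2 = 1 := by rw [← (hu k).integral_norm_sq_fourierReal, hu₁]
  obtain ⟨φ, ψ, hψ, hφ, hφΩ, hlim⟩ := exists_strictMono_tendsto_fourierReal hΩ hΩfin
    (fun k => (memLp_two_iff_integrable_sq (hu k).contDiff.continuous.aestronglyMeasurable).2
      (hu k).integrable_sq) hsupp (fun k => (hL2 k).le)
  have hM (k : ℕ) (ξ : V) : ‖fourierReal (u k) ξ‖ ≤ volume.real Ω + 1 :=
    (norm_fourierReal_le _ _).trans
      ((integral_abs_le_of_eq_zero hΩ hΩfin (hu k).integrable_sq (hsupp k)).trans_eq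
        (by rw [hL2]))
  have hκ : Tendsto (fun k => (ψ k : ℝ)) atTop atTop :=
    tendsto_natCast_atTop_atTop.comp hψ.tendsto_atTop
  obtain ⟨hsq, -⟩ := integrable_and_integral_le_of_tendsto (B := 1)
    (fun k ξ => sq_nonneg ‖fourierReal (u (ψ k)) ξ‖)
    (fun k => (hu _).integrable_norm_sq_fourierReal) (fun k => (hu₁ _).le)
    fun ξ => (hlim ξ).norm.pow 2
  obtain ⟨hpow, hpow_le⟩ := integral_laplaceSymbol_pow_mul_le_of_tendsto
    (fun k => hu (ψ k)) (fun k => (ψ k).cast_nonneg) hκ (fun k => hγ (ψ k)) hlim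
  exact ⟨φ, hφ, hφΩ, hsq, hpow, hpow_le, one_le_integral_norm_sq_fourierReal_of_tendsto hm
    (fun k => hu (ψ k)) (fun k => hu₁ (ψ k)) (fun k => hM (ψ k)) hκ (fun k => hγ (ψ k)) hlim hsq⟩

end FourierLimit

/-! ### Interior cones -/

lemma exists_nhds_forall_closedBall_subset {X : Type*} [PseudoMetricSpace X] {Ω : Set X}
    (hΩ : IsOpen Ω) {x : X} (hx : x ∈ Ω) :
    ∃ U ∈ 𝓝 x, ∃ s₀ > 0, ∀ y ∈ U, ∀ s ∈ Set.Ioo 0 s₀, Metric.closedBall y s ⊆ Ω := by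
  obtain ⟨ε, hε, hball⟩ := Metric.isOpen_iff.1 hΩ x hx
  refine ⟨Metric.ball x (ε / 2), Metric.ball_mem_nhds x (half_pos hε), ε / 2, half_pos hε,
    fun y hy s hs => (Metric.closedBall_subset_ball' ?_).trans hball⟩
  linarith [hs.2, Metric.mem_ball.1 hy]

section InteriorCones

variable {V : Type*} [NormedAddCommGroup V] [NormedSpace ℝ V]

/-- A uniform interior cone condition: near every point `x` of the closure there is one direction
`e` such that the truncated cone generated by a ball around `e`, translated to any nearby
`y ∈ closure Ω`, stays inside `Ω`. The balls `closedBall (y + s • e) (c * s)` exhaust that cone. -/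
def HasInteriorCones (Ω : Set V) : Prop :=
  ∀ x ∈ closure Ω, ∃ U ∈ 𝓝 x, ∃ e : V, ∃ c > 0, ∃ s₀ > 0, ∀ y ∈ closure Ω ∩ U,
    ∀ s ∈ Set.Ioo 0 s₀, Metric.closedBall (y + s • e) (c * s) ⊆ Ω

lemma exists_closedBall_lt_zero {A : V →L[ℝ] ℝ} (hA : A ≠ 0) :
    ∃ (e : V) (κ : ℝ), 0 < κ ∧ ∃ c > 0, ∀ p ∈ Metric.closedBall e c, A p + κ * ‖p‖ < 0 := by
  obtain ⟨v, hv⟩ : ∃ v, A v ≠ 0 := by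
    contrapose! hA
    exact ContinuousLinearMap.ext hA
  have hAe : A (-(A v)⁻¹ • v) = -1 := by
    rw [map_smul, smul_eq_mul, neg_mul, inv_mul_cancel₀ hv]
  set e := -(A v)⁻¹ • v
  have hκ : A e + (‖e‖ + 1)⁻¹ * ‖e‖ < 0 := by
    rw [hAe, inv_mul_eq_div, neg_add_lt_iff_lt_add, add_zero, div_lt_one (by positivity)]
    exact lt_add_one _
  have hopen : IsOpen {p | A p + (‖e‖ + 1)⁻¹ * ‖p‖ < 0} :=
    isOpen_lt (by fun_prop) continuous_const
  obtain ⟨c, hc, hsub⟩ := Metric.nhds_basis_closedBall.mem_iff.1 (hopen.mem_nhds hκ)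
  exact ⟨e, (‖e‖ + 1)⁻¹, by positivity, c, hc, hsub⟩

lemma exists_closedBall_lt_of_hasStrictFDerivAt {f : V → ℝ} {A : V →L[ℝ] ℝ} {x : V}
    (hf : HasStrictFDerivAt f A x) (hA : A ≠ 0) :
    ∃ U ∈ 𝓝 x, ∃ e : V, ∃ c > 0, ∃ s₀ > 0, ∀ y ∈ U, ∀ s ∈ Set.Ioo 0 s₀,
      ∀ z ∈ Metric.closedBall (y + s • e) (c * s), f z < f y := by
  obtain ⟨e, κ, hκ, c, hc, hneg⟩ := exists_closedBall_lt_zero hA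
  obtain ⟨ε, hε, hball⟩ := Metric.eventually_nhds_iff.1 (hf.isLittleO.def hκ)
  refine ⟨Metric.ball x (ε / 2), Metric.ball_mem_nhds x (half_pos hε), e, c, hc,
    ε / 2 / (‖e‖ + c), by positivity, ?_⟩
  rintro y hy s ⟨hs, hs₀⟩ z hz
  obtain ⟨p, rfl⟩ : ∃ p, z = y + s • p :=
    ⟨s⁻¹ • (z - y), by rw [smul_inv_smul₀ hs.ne', add_sub_cancel]⟩
  have hpe : p ∈ Metric.closedBall e c := by
    rwa [Metric.mem_closedBall, dist_add_left, dist_smul₀, Real.norm_of_nonneg hs.le, mul_comm,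
      mul_le_mul_iff_left₀ hs] at hz
  have hp : ‖p‖ ≤ ‖e‖ + c := norm_le_norm_add_const_of_dist_le hpe
  have hyx := Metric.mem_ball.1 hy
  have hzx : dist (y + s • p) x < ε := by
    have hsp : dist (y + s • p) y < ε / 2 := by
      rw [dist_self_add_left, norm_smul, Real.norm_of_nonneg hs.le]
      rw [lt_div_iff₀ (by positivity)] at hs₀
      exact (mul_le_mul_of_nonneg_left hp hs.le).trans_lt hs₀
    linarith [dist_triangle (y + s • p) y x]
  have hfirst := hball (y := (y + s • p, y)) (max_lt hzx (by linarith))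
  simp only [add_sub_cancel_left, map_smul, smul_eq_mul, norm_smul,
    Real.norm_of_nonneg hs.le] at hfirst
  nlinarith [le_of_abs_le hfirst, hneg p hpe]

lemma hasInteriorCones_setOf_lt_zero {f : V → ℝ} (hf : ContDiff ℝ 1 f)
    (hfr : ∀ x ∈ frontier {x | f x < 0}, fderiv ℝ f x ≠ 0) : HasInteriorCones {x | f x < 0} := by
  have hopen : IsOpen {x | f x < 0} := isOpen_lt hf.continuous continuous_const
  have hclosure : closure {x | f x < 0} ⊆ {x | f x ≤ 0} :=
    closure_minimal (Set.ofPred_subset_ofPred.2 fun x hx => le_of_lt hx)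
      (isClosed_le hf.continuous continuous_const)
  intro x hx
  by_cases hxΩ : x ∈ {x | f x < 0}
  · obtain ⟨U, hU, s₀, hs₀, h⟩ := exists_nhds_forall_closedBall_subset hopen hxΩ
    exact ⟨U, hU, 0, 1, one_pos, s₀, hs₀, fun y hy s hs => by simpa using h y hy.2 s hs⟩
  · obtain ⟨U, hU, e, c, hc, s₀, hs₀, h⟩ := exists_closedBall_lt_of_hasStrictFDerivAt
      (hf.contDiffAt.hasStrictFDerivAt one_ne_zero) (hfr x ⟨hx, by rwa [hopen.interior_eq]⟩)
    exact ⟨U, hU, e, c, hc, s₀, hs₀, fun y hy s hs z hz =>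
      (h y hy.2 s hs z hz).trans_le (hclosure hy.1)⟩

lemma HasInteriorCones.exists_partition [FiniteDimensional ℝ V] {Ω : Set V}
    (hΩ : HasInteriorCones Ω) (hΩb : Bornology.IsBounded Ω) :
    ∃ (t : Finset V) (χ : t → V → ℝ) (e : t → V) (c : t → ℝ) (s₀ : ℝ),
      (∀ j, SmoothCompactSupport (χ j)) ∧ (∀ x ∈ Ω, ∑ j, χ j x = 1) ∧ (∀ j, 0 < c j) ∧ 0 < s₀ ∧
      ∀ j, ∀ y ∈ closure Ω ∩ tsupport (χ j), ∀ s ∈ Set.Ioo 0 s₀,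
        Metric.closedBall (y + s • e j) (c j * s) ⊆ Ω := by
  have := FiniteDimensional.proper ℝ V
  choose! U hU e c hc s₀ hs₀ hcone using hΩ
  obtain ⟨t, ht, hcover⟩ := hΩb.isCompact_closure.elim_nhds_subcover
    (fun x => interior (U x) ∩ Metric.ball x 1)
    fun x hx => inter_mem (interior_mem_nhds.2 (hU x hx)) (Metric.ball_mem_nhds x one_pos)
  have hcover' : closure Ω ⊆ ⋃ i : t, interior (U i) ∩ Metric.ball i.1 1 :=
    hcover.trans_eq (Set.biUnion_eq_iUnion (t : Set V) fun x _ => interior (U x) ∩ Metric.ball x 1)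
  obtain ⟨P, hP⟩ := SmoothPartitionOfUnity.exists_isSubordinate (modelWithCornersSelf ℝ V)
    isClosed_closure _ (fun _ => isOpen_interior.inter Metric.isOpen_ball) hcover'
  have hmem (i : t) : (i : V) ∈ closure Ω := ht i i.2
  obtain ⟨σ, hσ, hσ₀⟩ : ∃ σ : ℝ, (∀ i : t, σ < s₀ i) ∧ 0 < σ :=
    ((eventually_all.2 fun i : t => mem_nhdsWithin_of_mem_nhds
      (Iio_mem_nhds (hs₀ i (hmem i)))).and self_mem_nhdsWithin).exists (f := 𝓝[>] 0)
  refine ⟨t, fun i => P i, fun i => e i, fun i => c i, σ, fun i => ⟨(P i).contMDiff.contDiff, ?_⟩,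
    fun x hx => ?_, fun i => hc i (hmem i), hσ₀, fun i y hy s hs => ?_⟩
  · exact (isCompact_closedBall (i : V) 1).of_isClosed_subset (isClosed_tsupport _)
      ((hP i).trans (Set.inter_subset_right.trans Metric.ball_subset_closedBall))
  · rw [← finsum_eq_sum_of_fintype]
    exact P.sum_eq_one (subset_closure hx)
  · exact hcone i (hmem i) y ⟨hy.1, interior_subset (hP i hy.2).1⟩ s ⟨hs.1, hs.2.trans (hσ i)⟩

lemma HasSmoothBoundary.hasInteriorCones {m : ℕ} {Ω : Set (EuclideanSpace ℝ (Fin (2 * m)))}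
    (hΩ : HasSmoothBoundary m Ω) : HasInteriorCones Ω := by
  obtain ⟨f, hf, rfl, hfr⟩ := hΩ
  exact hasInteriorCones_setOf_lt_zero (hf.of_le (by simp)) hfr

end InteriorCones

/-! ### Localization in Sobolev spaces -/

section Young

lemma sq_lintegral_mul_le {X : Type*} [MeasurableSpace X] {μ : Measure X} {a b : X → ℝ≥0∞}
    (ha : AEMeasurable a μ) (hb : AEMeasurable b μ) :
    (∫⁻ x, a x * b x ∂μ) ^ 2 ≤ (∫⁻ x, a x ^ 2 * b x ∂μ) * ∫⁻ x, b x ∂μ := by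
  have hholder := ENNReal.lintegral_mul_norm_pow_le ((ha.pow_const 2).mul hb) hb
    (p := 1 / 2) (q := 1 / 2) (by norm_num) (by norm_num) (by norm_num)
  have hsplit (x : X) : (a x ^ 2 * b x) ^ (1 / 2 : ℝ) * b x ^ (1 / 2 : ℝ) = a x * b x := by
    rw [ENNReal.mul_rpow_of_nonneg _ _ (by norm_num), mul_assoc,
      ← ENNReal.rpow_add_of_nonneg _ _ (by norm_num) (by norm_num), ← ENNReal.rpow_natCast_mul]
    norm_num
  simp only [Pi.mul_apply, hsplit] at hholder
  refine (pow_le_pow_left₀ zero_le hholder 2).trans_eq ?_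
  rw [mul_pow, ← ENNReal.rpow_mul_natCast, ← ENNReal.rpow_mul_natCast]
  norm_num

lemma lintegral_sq_convolution_le {G : Type*} [AddCommGroup G] [MeasurableSpace G]
    [MeasurableAdd₂ G] [MeasurableNeg G] {μ : Measure G} [SFinite μ] [μ.IsAddLeftInvariant]
    [μ.IsNegInvariant] {a b : G → ℝ≥0∞} (ha : Measurable a) (hb : Measurable b) :
    ∫⁻ x, (∫⁻ y, a y * b (x - y) ∂μ) ^ 2 ∂μ ≤ (∫⁻ x, a x ^ 2 ∂μ) * (∫⁻ x, b x ∂μ) ^ 2 := by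
  have hab : Measurable (fun p : G × G => a p.2 ^ 2 * b (p.1 - p.2)) :=
    ((ha.comp measurable_snd).pow_const 2).mul (hb.comp (measurable_fst.sub measurable_snd))
  calc ∫⁻ x, (∫⁻ y, a y * b (x - y) ∂μ) ^ 2 ∂μ
      ≤ ∫⁻ x, (∫⁻ y, a y ^ 2 * b (x - y) ∂μ) * ∫⁻ y, b y ∂μ ∂μ := lintegral_mono fun x => by
        refine (sq_lintegral_mul_le ha.aemeasurable
          (hb.comp (measurable_const.sub measurable_id)).aemeasurable).trans_eq ?_
        rw [← lintegral_sub_left_eq_self b x]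
        rfl
    _ = (∫⁻ y, ∫⁻ x, a y ^ 2 * b (x - y) ∂μ ∂μ) * ∫⁻ y, b y ∂μ := by
        rw [lintegral_mul_const _ hab.lintegral_prod_right',
          lintegral_lintegral_swap hab.aemeasurable]
    _ = (∫⁻ y, a y ^ 2 * ∫⁻ x, b x ∂μ ∂μ) * ∫⁻ y, b y ∂μ := by
        congr 2 with y
        rw [lintegral_const_mul _ (by fun_prop : Measurable fun x => b (x - y)),
          lintegral_sub_right_eq_self b]
    _ = (∫⁻ x, a x ^ 2 ∂μ) * (∫⁻ x, b x ∂μ) ^ 2 := by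
        rw [lintegral_mul_const _ (ha.pow_const 2), mul_assoc, sq (∫⁻ x, b x ∂μ)]

end Young

section SobolevWeight

variable {V : Type*} [NormedAddCommGroup V]

/-- The weight `(1 + 2π|ξ|)^m`, whose square is comparable to `1 + laplaceSymbol ξ ^ m`. It is
submultiplicative, so that Young's inequality applies to weighted convolutions. -/
def sobolevWeight (m : ℕ) (ξ : V) : ℝ := (1 + 2 * π * ‖ξ‖) ^ m

lemma one_le_sobolevWeight (m : ℕ) (ξ : V) : 1 ≤ sobolevWeight m ξ :=
  one_le_pow₀ (le_add_of_nonneg_right (by positivity))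

lemma continuous_sobolevWeight (m : ℕ) : Continuous (sobolevWeight m : V → ℝ) := by
  unfold sobolevWeight; fun_prop

lemma sobolevWeight_add_le (m : ℕ) (ξ η : V) :
    sobolevWeight m (ξ + η) ≤ sobolevWeight m ξ * sobolevWeight m η := by
  unfold sobolevWeight
  rw [← mul_pow]
  refine pow_le_pow_left₀ (by positivity) ?_ m
  calc 1 + 2 * π * ‖ξ + η‖ ≤ 1 + 2 * π * (‖ξ‖ + ‖η‖) := by gcongr; exact norm_add_le ξ η
    _ ≤ 1 + 2 * π * (‖ξ‖ + ‖η‖) + (2 * π * ‖ξ‖) * (2 * π * ‖η‖) :=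
        le_add_of_nonneg_right (by positivity)
    _ = (1 + 2 * π * ‖ξ‖) * (1 + 2 * π * ‖η‖) := by ring

lemma laplaceSymbol_pow_le_sobolevWeight_sq (m : ℕ) (ξ : V) :
    laplaceSymbol ξ ^ m ≤ sobolevWeight m ξ ^ 2 := by
  unfold laplaceSymbol sobolevWeight
  rw [← pow_mul, ← pow_mul, mul_comm m 2]
  exact pow_le_pow_left₀ (by positivity) (le_add_of_nonneg_left zero_le_one) _

lemma one_add_pow_le {a : ℝ} (ha : 0 ≤ a) (k : ℕ) : (1 + a) ^ k ≤ 2 ^ k * (1 + a ^ k) := by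
  refine (add_pow_le zero_le_one ha k).trans ?_
  rw [one_pow]
  gcongr
  · norm_num
  · exact k.sub_le 1

lemma sobolevWeight_sq_le (m : ℕ) (ξ : V) :
    sobolevWeight m ξ ^ 2 ≤ 2 ^ (2 * m) * (1 + laplaceSymbol ξ ^ m) := by
  unfold laplaceSymbol sobolevWeight
  rw [← pow_mul, ← pow_mul, mul_comm m 2]
  exact one_add_pow_le (by positivity) _

end SobolevWeight

section Localization

variable {V : Type*} [NormedAddCommGroup V] [InnerProductSpace ℝ V] [MeasurableSpace V]
  [BorelSpace V] [FiniteDimensional ℝ V] {χ φ : V → ℝ}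

lemma SmoothCompactSupport.integrable_sobolevWeight_mul (hχ : SmoothCompactSupport χ) (m : ℕ) :
    Integrable (fun ξ => sobolevWeight m ξ * ‖fourierReal χ ξ‖) := by
  have hpow : Integrable (fun ξ => ‖ξ‖ ^ m * ‖fourierReal χ ξ‖) :=
    (𝓕 hχ.toSchwartz).integrable_pow_mul volume m
  refine ((hχ.integrable_fourierReal.norm.add (hpow.const_mul ((2 * π) ^ m))).const_mul
    (2 ^ m)).mono' ?_ (Eventually.of_forall fun ξ => ?_)
  · exact ((continuous_sobolevWeight m).mul
      (continuous_fourierReal hχ.integrable).norm).aestronglyMeasurable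
  · have := one_le_sobolevWeight m ξ
    rw [Real.norm_of_nonneg (by positivity)]
    calc sobolevWeight m ξ * ‖fourierReal χ ξ‖
        ≤ 2 ^ m * (1 + (2 * π * ‖ξ‖) ^ m) * ‖fourierReal χ ξ‖ := by
          gcongr; exact one_add_pow_le (by positivity) m
      _ = 2 ^ m * (‖fourierReal χ ξ‖ + (2 * π) ^ m * (‖ξ‖ ^ m * ‖fourierReal χ ξ‖)) := by ring

lemma SmoothCompactSupport.fourier_fourierReal_sub (hχ : SmoothCompactSupport χ) (ξ x : V) :
    𝓕 (fun η => fourierReal χ (ξ - η)) x = χ x * 𝐞 (-(inner ℝ x ξ)) := by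
  have hinv : (fun η => fourierReal χ (ξ - η)) = 𝓕⁻ (fun x => (χ x : ℂ)) ∘ (fun η => η + -ξ) := by
    ext η
    rw [Function.comp_apply, Real.fourierInv_eq_fourier_neg, neg_add_rev, neg_neg,
      ← sub_eq_add_neg]
    rfl
  have hfourier : 𝓕 (𝓕⁻ (fun x => (χ x : ℂ))) = fun x => (χ x : ℂ) :=
    Continuous.fourier_fourierInv_eq (Complex.continuous_ofReal.comp hχ.contDiff.continuous)
      hχ.integrable.ofReal hχ.integrable_fourierReal
  rw [hinv]
  refine (congrFun (VectorFourier.fourierIntegral_comp_add_right 𝐞 volume (innerₗ V) _ _) x).trans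
    ?_
  change _ • 𝓕 (𝓕⁻ fun x => (χ x : ℂ)) x = _
  rw [hfourier, Circle.smul_def, smul_eq_mul, mul_comm]
  simp [real_inner_comm]

lemma enorm_fourierReal_mul_le (hχ : SmoothCompactSupport χ) (hφ : Integrable φ) (ξ : V) :
    ‖fourierReal (fun x => χ x * φ x) ξ‖ₑ ≤
      ∫⁻ η, ‖fourierReal φ η‖ₑ * ‖fourierReal χ (ξ - η)‖ₑ := by
  have hconv : fourierReal (fun x => χ x * φ x) ξ =
      ∫ η, fourierReal φ η * fourierReal χ (ξ - η) := by
    rw [integral_fourierReal_mul hφ (hχ.integrable_fourierReal.comp_sub_left ξ), fourierReal,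
      Real.fourier_eq]
    congr 1 with x
    rw [hχ.fourier_fourierReal_sub, Circle.smul_def, smul_eq_mul]
    push_cast
    ring
  rw [hconv]
  refine (enorm_integral_le_lintegral_enorm _).trans_eq ?_
  simp only [enorm_mul]

lemma lintegral_sobolevWeight_sq_fourierReal_mul_le (m : ℕ) (hχ : SmoothCompactSupport χ)
    (hφ : Integrable φ) :
    ∫⁻ ξ, ENNReal.ofReal (sobolevWeight m ξ ^ 2 * ‖fourierReal (fun x => χ x * φ x) ξ‖ ^ 2) ≤
      (∫⁻ ξ, ENNReal.ofReal (sobolevWeight m ξ ^ 2 * ‖fourierReal φ ξ‖ ^ 2)) *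
        (∫⁻ ξ, ENNReal.ofReal (sobolevWeight m ξ * ‖fourierReal χ ξ‖)) ^ 2 := by
  set w : V → ℝ≥0∞ := fun ξ => ENNReal.ofReal (sobolevWeight m ξ)
  have hw₀ (ξ : V) : 0 ≤ sobolevWeight m ξ := zero_le_one.trans (one_le_sobolevWeight m ξ)
  have hw : Measurable w := (continuous_sobolevWeight m).measurable.ennreal_ofReal
  have hw_mul (ξ η : V) : w ξ ≤ w η * w (ξ - η) := by
    rw [← ENNReal.ofReal_mul (hw₀ η)]
    simpa using ENNReal.ofReal_le_ofReal (sobolevWeight_add_le m η (ξ - η))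
  have hofReal (g : V → ℝ) (ξ : V) :
      ENNReal.ofReal (sobolevWeight m ξ * ‖fourierReal g ξ‖) = w ξ * ‖fourierReal g ξ‖ₑ := by
    rw [ENNReal.ofReal_mul (hw₀ ξ), ofReal_norm]
  have hofReal_sq (g : V → ℝ) (ξ : V) :
      ENNReal.ofReal (sobolevWeight m ξ ^ 2 * ‖fourierReal g ξ‖ ^ 2) =
        (w ξ * ‖fourierReal g ξ‖ₑ) ^ 2 := by
    rw [← hofReal, ← ENNReal.ofReal_pow (mul_nonneg (hw₀ ξ) (norm_nonneg _)), mul_pow]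
  simp only [hofReal_sq, hofReal]
  refine le_trans (lintegral_mono fun ξ => pow_le_pow_left₀ zero_le ?_ 2)
    (lintegral_sq_convolution_le
      (hw.mul (continuous_fourierReal hφ).measurable.enorm)
      (hw.mul (continuous_fourierReal hχ.integrable).measurable.enorm))
  calc w ξ * ‖fourierReal (fun x => χ x * φ x) ξ‖ₑ
      ≤ w ξ * ∫⁻ η, ‖fourierReal φ η‖ₑ * ‖fourierReal χ (ξ - η)‖ₑ := by
        gcongr; exact enorm_fourierReal_mul_le hχ hφ ξ
    _ = ∫⁻ η, w ξ * (‖fourierReal φ η‖ₑ * ‖fourierReal χ (ξ - η)‖ₑ) :=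
        (lintegral_const_mul' _ _ ENNReal.ofReal_ne_top).symm
    _ ≤ ∫⁻ η, w η * w (ξ - η) * (‖fourierReal φ η‖ₑ * ‖fourierReal χ (ξ - η)‖ₑ) := by
        gcongr with η; exact hw_mul ξ η
    _ = ∫⁻ η, w η * ‖fourierReal φ η‖ₑ * (w (ξ - η) * ‖fourierReal χ (ξ - η)‖ₑ) := by
        simp only [mul_mul_mul_comm]

lemma integrable_sobolevWeight_sq_mul (m : ℕ) (hφ : Integrable φ)
    (hsq : Integrable (fun ξ => ‖fourierReal φ ξ‖ ^ 2))
    (hpow : Integrable (fun ξ => laplaceSymbol ξ ^ m * ‖fourierReal φ ξ‖ ^ 2)) :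
    Integrable (fun ξ => sobolevWeight m ξ ^ 2 * ‖fourierReal φ ξ‖ ^ 2) := by
  refine ((hsq.add hpow).const_mul (2 ^ (2 * m))).mono' ?_ (Eventually.of_forall fun ξ => ?_)
  · exact (((continuous_sobolevWeight m).pow 2).mul
      ((continuous_fourierReal hφ).norm.pow 2)).aestronglyMeasurable
  · rw [Real.norm_of_nonneg (by positivity)]
    calc sobolevWeight m ξ ^ 2 * ‖fourierReal φ ξ‖ ^ 2
        ≤ 2 ^ (2 * m) * (1 + laplaceSymbol ξ ^ m) * ‖fourierReal φ ξ‖ ^ 2 := by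
          gcongr; exact sobolevWeight_sq_le m ξ
      _ = 2 ^ (2 * m) * (‖fourierReal φ ξ‖ ^ 2 + laplaceSymbol ξ ^ m * ‖fourierReal φ ξ‖ ^ 2) := by
          ring

lemma SmoothCompactSupport.integrable_mul (hχ : SmoothCompactSupport χ) (hφ : Integrable φ) :
    Integrable (fun x => χ x * φ x) := by
  obtain ⟨C, hC⟩ := hχ.hasCompactSupport.exists_bound_of_continuous hχ.contDiff.continuous
  exact hφ.bdd_mul hχ.contDiff.continuous.aestronglyMeasurable (Eventually.of_forall hC)

lemma integrable_sobolevWeight_sq_fourierReal_mul {m : ℕ} (hχ : SmoothCompactSupport χ)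
    (hφ : Integrable φ)
    (hint : Integrable (fun ξ => sobolevWeight m ξ ^ 2 * ‖fourierReal φ ξ‖ ^ 2)) :
    Integrable (fun ξ => sobolevWeight m ξ ^ 2 * ‖fourierReal (fun x => χ x * φ x) ξ‖ ^ 2) := by
  have hlt := (lintegral_sobolevWeight_sq_fourierReal_mul_le m hχ hφ).trans_lt
    (ENNReal.mul_lt_top hint.lintegral_lt_top
      (ENNReal.pow_lt_top (hχ.integrable_sobolevWeight_mul m).lintegral_lt_top))
  refine ⟨(((continuous_sobolevWeight m).pow 2).mul ((continuous_fourierReal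
    (hχ.integrable_mul hφ)).norm.pow 2)).aestronglyMeasurable, ?_⟩
  rwa [hasFiniteIntegral_iff_ofReal (Eventually.of_forall fun ξ => by positivity)]

end Localization

/-! ### Mollification and density of test functions -/

section Mollification

variable {V : Type*} [NormedAddCommGroup V] [InnerProductSpace ℝ V] [MeasurableSpace V]
  [BorelSpace V] [FiniteDimensional ℝ V]

lemma norm_fourierChar_sub_one_le (r : ℝ) : ‖(𝐞 r : ℂ) - 1‖ ≤ 2 * π * |r| := by
  have h := Real.norm_exp_I_mul_ofReal_sub_one_le (x := 2 * π * r)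
  rwa [mul_comm Complex.I, ← Real.fourierChar_apply, norm_mul, Real.norm_of_nonneg two_pi_pos.le]
    at h

lemma IsBoundedDensity.norm_fourierReal_sub_one_le {f : V → ℝ} {M R : ℝ}
    (hf : IsBoundedDensity f M) (hR : ∀ x, f x ≠ 0 → ‖x‖ ≤ R) (ξ : V) :
    ‖fourierReal f ξ - 1‖ ≤ 2 * π * ‖ξ‖ * R := by
  have hdiff : fourierReal f ξ - 1 = ∫ x, ((𝐞 (-(inner ℝ x ξ)) : ℂ) - 1) * (f x : ℂ) := by
    have hone : ∫ x, (f x : ℂ) = 1 := by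
      rw [integral_complex_ofReal, hf.integral_eq_one, Complex.ofReal_one]
    have hint : Integrable (fun x => 𝐞 (-(inner ℝ x ξ)) • (f x : ℂ)) :=
      (Real.fourierIntegral_convergent_iff ξ).2 hf.integrable.ofReal
    have hint₁ : Integrable (fun x => (f x : ℂ)) := hf.integrable.ofReal
    simp only [sub_one_mul]
    rw [fourierReal, Real.fourier_eq, ← hone, ← integral_sub hint hint₁]
    simp only [Circle.smul_def, smul_eq_mul]
  rw [hdiff]
  refine (norm_integral_le_of_norm_le (hf.integrable.const_mul (2 * π * ‖ξ‖ * R))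
    (Eventually.of_forall fun x => ?_)).trans_eq ?_
  · rw [norm_mul, Complex.norm_real, Real.norm_of_nonneg (hf.nonneg x)]
    rcases eq_or_ne (f x) 0 with hx | hx
    · simp [hx]
    · refine mul_le_mul_of_nonneg_right ((norm_fourierChar_sub_one_le _).trans ?_) (hf.nonneg x)
      calc 2 * π * |-(inner ℝ x ξ)| ≤ 2 * π * (‖x‖ * ‖ξ‖) := by
            rw [abs_neg]; gcongr; exact abs_real_inner_le_norm x ξ
        _ ≤ 2 * π * (R * ‖ξ‖) := by gcongr; exact hR x hx
        _ = 2 * π * ‖ξ‖ * R := by ring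
  · rw [integral_const_mul, hf.integral_eq_one, mul_one]

lemma exists_isBoundedDensity_bump (v : V) {r : ℝ} (hr : 0 < r) :
    ∃ (ρ : V → ℝ) (M : ℝ), SmoothCompactSupport ρ ∧ IsBoundedDensity ρ M ∧
      Function.support ρ ⊆ Metric.closedBall v r := by
  let b : ContDiffBump v := ⟨r / 2, r, half_pos hr, half_lt_self hr⟩
  have hb : SmoothCompactSupport (b.normed volume) :=
    ⟨b.contDiff_normed, b.hasCompactSupport_normed⟩
  obtain ⟨M, hM⟩ := hb.hasCompactSupport.exists_bound_of_continuous hb.contDiff.continuous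
  refine ⟨b.normed volume, M, hb, ⟨hb.integrable, b.nonneg_normed, b.integral_normed,
    fun x => (le_abs_self _).trans (hM x)⟩, ?_⟩
  rw [b.support_normed_eq]
  exact Metric.ball_subset_closedBall

open scoped Convolution in
lemma fourierReal_convolution {f g : V → ℝ} (hf : Integrable f) (hg : Integrable g) (ξ : V) :
    fourierReal (f ⋆[ContinuousLinearMap.mul ℝ ℝ, volume] g) ξ =
      fourierReal f ξ * fourierReal g ξ := by
  refine (congrArg (fun h : V → ℂ => 𝓕 h ξ) (funext fun x => ?_)).trans
    (Real.fourier_mul_convolution_eq (f₁ := fun x => (f x : ℂ)) (f₂ := fun x => (g x : ℂ))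
      hf.ofReal hg.ofReal ξ)
  simp only [convolution, ContinuousLinearMap.mul_apply']
  rw [← integral_complex_ofReal]
  simp only [Complex.ofReal_mul]

open scoped Convolution Pointwise in
lemma exists_smoothCompactSupport_near_translate {ψ : V → ℝ} {K : Set V} (hψ : Integrable ψ)
    (hK : IsCompact K) (hψK : Function.support ψ ⊆ K) (v : V) {r : ℝ} (hr : 0 < r) :
    ∃ T : V → ℝ, SmoothCompactSupport T ∧
      (∀ x ∈ tsupport T, ∃ y ∈ K, x ∈ Metric.closedBall (y + v) r) ∧
      (∀ ξ, ‖fourierReal T ξ‖ ≤ ‖fourierReal ψ ξ‖) ∧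
      ∀ ξ, ‖fourierReal T ξ - fourierReal ψ ξ‖ ≤
        2 * π * ‖ξ‖ * (‖v‖ + r) * ‖fourierReal ψ ξ‖ := by
  obtain ⟨ρ, M, hρ, hρ₁, hρv⟩ := exists_isBoundedDensity_bump v hr
  set T := ρ ⋆[ContinuousLinearMap.mul ℝ ℝ, volume] ψ
  have hT : Function.support T ⊆ Metric.closedBall v r + K :=
    (support_convolution_subset _).trans (Set.add_subset_add hρv hψK)
  have hcompact : IsCompact (Metric.closedBall v r + K) := (isCompact_closedBall v r).add hK
  have hfourier (ξ : V) : fourierReal T ξ = fourierReal ρ ξ * fourierReal ψ ξ :=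
    fourierReal_convolution hρ.integrable hψ ξ
  refine ⟨T, ⟨hρ.hasCompactSupport.contDiff_convolution_left _ hρ.contDiff hψ.locallyIntegrable,
    .of_support_subset_isCompact hcompact hT⟩, fun x hx => ?_, fun ξ => ?_, fun ξ => ?_⟩
  · obtain ⟨z, hz, y, hy, rfl⟩ := Set.mem_add.1 (closure_minimal hT hcompact.isClosed hx)
    exact ⟨y, hy, by rwa [add_comm z, Metric.mem_closedBall, dist_add_left]⟩
  · rw [hfourier, norm_mul]
    exact mul_le_of_le_one_left (norm_nonneg _) (hρ₁.norm_fourierReal_le_one ξ)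
  · rw [hfourier, ← sub_one_mul, norm_mul]
    exact mul_le_mul_of_nonneg_right (hρ₁.norm_fourierReal_sub_one_le
      (fun x hx => norm_le_norm_add_const_of_dist_le (hρv hx)) ξ) (norm_nonneg _)

end Mollification

section Density

variable {V : Type*} [NormedAddCommGroup V] [InnerProductSpace ℝ V] [MeasurableSpace V]
  [BorelSpace V] [FiniteDimensional ℝ V] {Ω : Set V} {φ : V → ℝ} {m : ℕ}

lemma tsupport_sum_subset {ι X E : Type*} [TopologicalSpace X] [AddCommMonoid E] {s : Finset ι}
    {f : ι → X → E} {A : Set X} (hf : ∀ i ∈ s, tsupport (f i) ⊆ A) :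
    tsupport (fun x => ∑ i ∈ s, f i x) ⊆ A := by
  refine (closure_minimal (t := ⋃ i ∈ s, tsupport (f i)) (fun x hx => ?_)
    (s.finite_toSet.isClosed_biUnion fun i _ => isClosed_tsupport _)).trans (Set.iUnion₂_subset hf)
  obtain ⟨i, hi, hix⟩ := Finset.exists_ne_zero_of_sum_ne_zero hx
  exact Set.mem_biUnion hi (subset_tsupport _ hix)

lemma sum_fourierReal_mul_eq {ι : Type*} [Fintype ι] {χ : ι → V → ℝ}
    (hχ : ∀ j, SmoothCompactSupport (χ j)) (hχ₁ : ∀ x ∈ Ω, ∑ j, χ j x = 1) (hφ : Integrable φ)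
    (hφΩ : ∀ x ∉ Ω, φ x = 0) (ξ : V) :
    ∑ j, fourierReal (fun x => χ j x * φ x) ξ = fourierReal φ ξ := by
  rw [← fourierReal_sum _ fun j _ => (hχ j).integrable_mul hφ]
  congr 1 with x
  rw [← Finset.sum_mul]
  by_cases hx : x ∈ Ω
  · rw [hχ₁ x hx, one_mul]
  · rw [hφΩ x hx, mul_zero]

lemma HasInteriorCones.exists_smoothCompactSupport_approx (hΩ : HasInteriorCones Ω)
    (hΩb : Bornology.IsBounded Ω) (hφ : Integrable φ) (hφΩ : ∀ x ∉ Ω, φ x = 0) :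
    ∃ (t : Finset V) (χ : t → V → ℝ) (D : V → ℝ) (s₀ : ℝ),
      (∀ j, SmoothCompactSupport (χ j)) ∧ 0 < s₀ ∧ ∀ s ∈ Set.Ioo 0 s₀, ∃ T : V → ℝ,
        SmoothCompactSupport T ∧ tsupport T ⊆ Ω ∧
        (∀ ξ, ‖fourierReal T ξ‖ ≤ ∑ j, ‖fourierReal (fun x => χ j x * φ x) ξ‖) ∧
        ∀ ξ, ‖fourierReal T ξ - fourierReal φ ξ‖ ≤ s * D ξ := by
  obtain ⟨t, χ, e, c, s₀, hχ, hχ₁, hc, hs₀, hcone⟩ := hΩ.exists_partition hΩb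
  set ψ : t → V → ℝ := fun j x => χ j x * φ x
  have hψ (j : t) : Integrable (ψ j) := (hχ j).integrable_mul hφ
  have hψK (j : t) : Function.support (ψ j) ⊆ closure Ω ∩ tsupport (χ j) := fun x hx =>
    ⟨subset_closure (of_not_not fun hxΩ => right_ne_zero_of_mul hx (hφΩ x hxΩ)),
      subset_tsupport _ (left_ne_zero_of_mul hx)⟩
  have hK (j : t) : IsCompact (closure Ω ∩ tsupport (χ j)) :=
    (hχ j).hasCompactSupport.inter_left isClosed_closure
  refine ⟨t, χ, fun ξ => ∑ j, 2 * π * ‖ξ‖ * (‖e j‖ + c j) * ‖fourierReal (ψ j) ξ‖, s₀, hχ, hs₀,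
    fun s hs => ?_⟩
  choose T hT hTK hT_le hT_sub using fun j =>
    exists_smoothCompactSupport_near_translate (hψ j) (hK j) (hψK j) (s • e j)
      (mul_pos (hc j) hs.1)
  have hT_sum (ξ : V) : fourierReal (fun x => ∑ j, T j x) ξ = ∑ j, fourierReal (T j) ξ :=
    fourierReal_sum _ (fun j _ => (hT j).integrable) ξ
  refine ⟨fun x => ∑ j, T j x, .sum _ fun j _ => hT j, tsupport_sum_subset fun j _ x hx => ?_,
    fun ξ => ?_, fun ξ => ?_⟩
  · obtain ⟨y, hy, hxy⟩ := hTK j x hx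
    exact hcone j y hy s hs hxy
  · rw [hT_sum]
    exact norm_sum_le_of_le _ fun j _ => hT_le j ξ
  · rw [hT_sum, ← sum_fourierReal_mul_eq hχ hχ₁ hφ hφΩ, ← Finset.sum_sub_distrib, Finset.mul_sum]
    refine norm_sum_le_of_le _ fun j _ => (hT_sub j ξ).trans_eq ?_
    rw [norm_smul, Real.norm_of_nonneg hs.1.le]
    ring

lemma HasInteriorCones.exists_tendsto_fourierReal (hΩ : HasInteriorCones Ω)
    (hΩb : Bornology.IsBounded Ω) (hφ : Integrable φ) (hφΩ : ∀ x ∉ Ω, φ x = 0)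
    (hint : Integrable (fun ξ => sobolevWeight m ξ ^ 2 * ‖fourierReal φ ξ‖ ^ 2)) :
    ∃ (T : ℕ → V → ℝ) (G : V → ℝ), (∀ i, SmoothCompactSupport (T i)) ∧ (∀ i, tsupport (T i) ⊆ Ω) ∧
      (∀ ξ, Tendsto (fun i => fourierReal (T i) ξ) atTop (𝓝 (fourierReal φ ξ))) ∧
      (∀ i ξ, ‖fourierReal (T i) ξ‖ ^ 2 ≤ G ξ) ∧
      Integrable (fun ξ => sobolevWeight m ξ ^ 2 * G ξ) := by
  obtain ⟨t, χ, D, s₀, hχ, hs₀, happrox⟩ := hΩ.exists_smoothCompactSupport_approx hΩb hφ hφΩ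
  set ψ : t → V → ℝ := fun j x => χ j x * φ x
  obtain ⟨s, -, hs, hs_lim⟩ := exists_seq_strictAnti_tendsto' hs₀
  choose T hT hTΩ hT_le hT_sub using fun i => happrox (s i) (hs i)
  refine ⟨T, fun ξ => Fintype.card t * ∑ j, ‖fourierReal (ψ j) ξ‖ ^ 2, hT, hTΩ, fun ξ => ?_,
    fun i ξ => ?_, ?_⟩
  · refine tendsto_iff_norm_sub_tendsto_zero.2
      (squeeze_zero (fun _ => norm_nonneg _) (fun i => hT_sub i ξ) ?_)
    simpa only [zero_mul] using hs_lim.mul_const (D ξ)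
  · exact (pow_le_pow_left₀ (norm_nonneg _) (hT_le i ξ) 2).trans sq_sum_le_card_mul_sum_sq
  · have hsum : Integrable (fun ξ => ∑ j, sobolevWeight m ξ ^ 2 * ‖fourierReal (ψ j) ξ‖ ^ 2) :=
      integrable_finsetSum _ fun j _ => integrable_sobolevWeight_sq_fourierReal_mul (hχ j) hφ hint
    refine (hsum.const_mul (Fintype.card t : ℝ)).congr (Eventually.of_forall fun ξ => ?_)
    simp only [← Finset.mul_sum]
    ring

lemma tendsto_integral_mul_norm_sq_fourierReal {T : ℕ → V → ℝ} {p G : V → ℝ}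
    (hT : ∀ i, SmoothCompactSupport (T i))
    (hlim : ∀ ξ, Tendsto (fun i => fourierReal (T i) ξ) atTop (𝓝 (fourierReal φ ξ)))
    (hG : ∀ i ξ, ‖fourierReal (T i) ξ‖ ^ 2 ≤ G ξ)
    (hint : Integrable (fun ξ => sobolevWeight m ξ ^ 2 * G ξ)) (hp : Continuous p)
    (hp₀ : ∀ ξ, 0 ≤ p ξ) (hp_le : ∀ ξ, p ξ ≤ sobolevWeight m ξ ^ 2) :
    Tendsto (fun i => ∫ ξ, p ξ * ‖fourierReal (T i) ξ‖ ^ 2) atTop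
      (𝓝 (∫ ξ, p ξ * ‖fourierReal φ ξ‖ ^ 2)) := by
  refine tendsto_integral_of_dominated_convergence _ (fun i => ?_) hint
    (fun i => Eventually.of_forall fun ξ => ?_)
    (Eventually.of_forall fun ξ => ((hlim ξ).norm.pow 2).const_mul _)
  · exact (hp.mul ((continuous_fourierReal (hT i).integrable).norm.pow 2)).aestronglyMeasurable
  · rw [Real.norm_of_nonneg (mul_nonneg (hp₀ ξ) (sq_nonneg _))]
    exact mul_le_mul (hp_le ξ) (hG i ξ) (sq_nonneg _) (sq_nonneg _)

lemma HasInteriorCones.mul_integral_norm_sq_fourierReal_le {c : ℝ} (hΩ : HasInteriorCones Ω)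
    (hΩb : Bornology.IsBounded Ω) (hφ : Integrable φ) (hφΩ : ∀ x ∉ Ω, φ x = 0)
    (hsq : Integrable (fun ξ => ‖fourierReal φ ξ‖ ^ 2))
    (hpow : Integrable (fun ξ => laplaceSymbol ξ ^ m * ‖fourierReal φ ξ‖ ^ 2))
    (hc : ∀ u : V → ℝ, SmoothCompactSupport u → tsupport u ⊆ Ω →
      c * ∫ ξ, ‖fourierReal u ξ‖ ^ 2 ≤ ∫ ξ, laplaceSymbol ξ ^ m * ‖fourierReal u ξ‖ ^ 2) :
    c * ∫ ξ, ‖fourierReal φ ξ‖ ^ 2 ≤ ∫ ξ, laplaceSymbol ξ ^ m * ‖fourierReal φ ξ‖ ^ 2 := by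
  obtain ⟨T, G, hT, hTΩ, hlim, hG, hint⟩ := hΩ.exists_tendsto_fourierReal hΩb hφ hφΩ
    (integrable_sobolevWeight_sq_mul m hφ hsq hpow)
  have hsq_lim := tendsto_integral_mul_norm_sq_fourierReal hT hlim hG hint
    (p := fun _ => 1) continuous_const (fun _ => zero_le_one)
    fun ξ => one_le_pow₀ (one_le_sobolevWeight m ξ)
  have hpow_lim := tendsto_integral_mul_norm_sq_fourierReal hT hlim hG hint
    (continuous_laplaceSymbol.pow m) (fun ξ => pow_nonneg (laplaceSymbol_nonneg ξ) m)
    (laplaceSymbol_pow_le_sobolevWeight_sq m)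
  simp only [one_mul] at hsq_lim
  exact le_of_tendsto_of_tendsto' (hsq_lim.const_mul c) hpow_lim fun i => hc _ (hT i) (hTΩ i)

end Density

/-! ### The spectral gap -/

section SpectralGap

variable {V : Type*} [NormedAddCommGroup V] [InnerProductSpace ℝ V] [MeasurableSpace V]
  [BorelSpace V] [FiniteDimensional ℝ V] {Ω : Set V} {m : ℕ}

lemma SmoothCompactSupport.integral_truncatedWeight_mul {u : V → ℝ} {L : ℝ} (d : ℝ)
    (hu : SmoothCompactSupport u) (hL : 0 ≤ L) :
    ∫ ξ, truncatedWeight m L d (laplaceSymbol ξ) * ‖fourierReal u ξ‖ ^ 2 =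
      (∫ ξ, laplaceSymbol ξ ^ m * ‖fourierReal u ξ‖ ^ 2) -
        (∫ ξ, min (laplaceSymbol ξ ^ m) L * ‖fourierReal u ξ‖ ^ 2) +
        d * ∫ ξ, ‖fourierReal u ξ‖ ^ 2 := by
  have hpow := hu.integrable_laplaceSymbol_pow m
  have hmin := hu.integrable_min_laplaceSymbol_pow m hL
  have hsub : Integrable (fun ξ => laplaceSymbol ξ ^ m * ‖fourierReal u ξ‖ ^ 2 -
    min (laplaceSymbol ξ ^ m) L * ‖fourierReal u ξ‖ ^ 2) := hpow.sub hmin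
  simp only [truncatedWeight, add_mul, sub_mul]
  rw [integral_add hsub (hu.integrable_norm_sq_fourierReal.const_mul d), integral_sub hpow hmin,
    integral_const_mul]

lemma exists_const_mul_integral_norm_sq_fourierReal_eq_one {u : V → ℝ} {w : V → ℝ} {γ : ℝ}
    (hw : ∀ ξ, 0 ≤ w ξ)
    (hu : ∫ ξ, w ξ * ‖fourierReal u ξ‖ ^ 2 < γ * ∫ ξ, ‖fourierReal u ξ‖ ^ 2) :
    ∃ a : ℝ, ∫ ξ, ‖fourierReal (fun x => a * u x) ξ‖ ^ 2 = 1 ∧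
      ∫ ξ, w ξ * ‖fourierReal (fun x => a * u x) ξ‖ ^ 2 ≤ γ := by
  set I := ∫ ξ, ‖fourierReal u ξ‖ ^ 2
  have hI : 0 < I := by
    refine (integral_nonneg fun ξ => sq_nonneg _).lt_of_ne fun hI₀ => hu.not_ge ?_
    rw [show I = 0 from hI₀.symm, mul_zero]
    exact integral_nonneg fun ξ => mul_nonneg (hw ξ) (sq_nonneg _)
  have hsq (ξ : V) :
      ‖fourierReal (fun x => (√I)⁻¹ * u x) ξ‖ ^ 2 = I⁻¹ * ‖fourierReal u ξ‖ ^ 2 := by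
    rw [fourierReal_const_mul, norm_mul, mul_pow, Complex.norm_real, Real.norm_eq_abs, sq_abs,
      inv_pow, Real.sq_sqrt hI.le]
  refine ⟨(√I)⁻¹, ?_, ?_⟩
  · simp only [hsq, integral_const_mul]
    exact inv_mul_cancel₀ hI.ne'
  · simp only [hsq, mul_left_comm _ I⁻¹, integral_const_mul]
    rw [inv_mul_le_iff₀ hI, mul_comm]
    exact hu.le

lemma HasInteriorCones.exists_forall_mul_integral_le {c γ : ℝ} (hΩ : HasInteriorCones Ω)
    (hΩo : IsOpen Ω) (hΩb : Bornology.IsBounded Ω) (hm : 1 ≤ m) (hc₀ : 0 ≤ c) (hγ : γ < c)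
    (hc : ∀ u : V → ℝ, SmoothCompactSupport u → tsupport u ⊆ Ω →
      c * ∫ ξ, ‖fourierReal u ξ‖ ^ 2 ≤ ∫ ξ, laplaceSymbol ξ ^ m * ‖fourierReal u ξ‖ ^ 2) :
    ∃ k : ℕ, ∀ u : V → ℝ, SmoothCompactSupport u → tsupport u ⊆ Ω →
      γ * ∫ ξ, ‖fourierReal u ξ‖ ^ 2 ≤
        ∫ ξ, min (laplaceSymbol ξ ^ m) k * ‖fourierReal u ξ‖ ^ 2 := by
  by_contra! hgap
  choose u hu huΩ hu_lt using hgap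
  choose a ha₁ haγ using fun k : ℕ => exists_const_mul_integral_norm_sq_fourierReal_eq_one
    (fun ξ => le_min (pow_nonneg (laplaceSymbol_nonneg ξ) m) k.cast_nonneg) (hu_lt k)
  have hzero (k : ℕ) (x : V) (hx : x ∉ Ω) : a k * u k x = 0 := by
    rw [image_eq_zero_of_notMem_tsupport fun hx' => hx (huΩ k hx'), mul_zero]
  obtain ⟨φ, hφ, hφΩ, hsq, hpow, hpow_le, hone_le⟩ := exists_fourierReal_limit hm
    hΩo.measurableSet hΩb.measure_lt_top.ne (fun k => (hu k).const_mul (a k)) hzero ha₁ haγ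
  have hcφ := hΩ.mul_integral_norm_sq_fourierReal_le hΩb hφ hφΩ hsq hpow hc
  exact (hγ.trans_le (le_mul_of_one_le_right hc₀ hone_le)).not_ge (hcφ.trans hpow_le)

end SpectralGap

section Adams

variable {m : ℕ} {Ω : Set (EuclideanSpace ℝ (Fin (2 * m)))}
  {u : EuclideanSpace ℝ (Fin (2 * m)) → ℝ}

lemma IsTestFun.sobNormSq_nonneg (hu : IsTestFun m Ω u) : 0 ≤ sobNormSq m Ω u := by
  rw [hu.sobNormSq_eq]
  exact integral_nonneg fun ξ => mul_nonneg (pow_nonneg (laplaceSymbol_nonneg ξ) m) (sq_nonneg _)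

lemma l2NormSq_nonneg (u : EuclideanSpace ℝ (Fin (2 * m)) → ℝ) : 0 ≤ l2NormSq m Ω u :=
  integral_nonneg fun _ => sq_nonneg _

lemma lambda1_nonneg : 0 ≤ lambda1 m Ω :=
  Real.sInf_nonneg fun _ ⟨_, hu, _, hr⟩ =>
    hr ▸ div_nonneg hu.sobNormSq_nonneg (l2NormSq_nonneg _)

lemma IsTestFun.lambda1_mul_l2NormSq_le (hu : IsTestFun m Ω u) :
    lambda1 m Ω * l2NormSq m Ω u ≤ sobNormSq m Ω u := by
  rcases (l2NormSq_nonneg u).eq_or_lt with hzero | hpos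
  · rw [← hzero, mul_zero]
    exact hu.sobNormSq_nonneg
  · rw [← le_div_iff₀ hpos]
    refine csInf_le ⟨0, ?_⟩ ⟨u, hu, ?_, rfl⟩
    · rintro _ ⟨v, hv, -, rfl⟩
      exact div_nonneg hv.sobNormSq_nonneg (l2NormSq_nonneg v)
    · rintro rfl
      simp [l2NormSq] at hpos

end Adams

theorem statement0_general (m : ℕ) (hm : 1 ≤ m) (Ω : Set (EuclideanSpace ℝ (Fin (2 * m))))
    (hΩo : IsOpen Ω) (hΩb : Bornology.IsBounded Ω) (hΩ : HasInteriorCones Ω) (α β : ℝ)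
    (hβ : β ≤ betaStar m) (hα : α < lambda1 m Ω) :
    Ssup m Ω α β < ⊤ := by
  obtain ⟨γ, hαγ, hγ⟩ := exists_between hα
  obtain ⟨k, hk⟩ := hΩ.exists_forall_mul_integral_le hΩo hΩb hm lambda1_nonneg hγ
    fun u hu huΩ => by
      have htest : IsTestFun m Ω u := ⟨hu.contDiff, hu.hasCompactSupport, huΩ⟩
      simpa only [htest.l2NormSq_eq, htest.sobNormSq_eq] using htest.lambda1_mul_l2NormSq_le
  obtain ⟨B, hB, hexp⟩ := exists_setLIntegral_exp_le finrank_euclideanSpace_fin hm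
    k.cast_nonneg (sub_pos.2 hαγ) hΩo.measurableSet hΩb.measure_lt_top.ne
  refine (iSup₂_le fun u hu => ?_).trans_lt hB
  obtain ⟨htest, hnorm⟩ := hu
  have hweight :
      ∫ ξ, truncatedWeight m k (γ - α) (laplaceSymbol ξ) * ‖fourierReal u ξ‖ ^ 2 ≤ 1 := by
    rw [htest.smoothCompactSupport.integral_truncatedWeight_mul _ k.cast_nonneg]
    rw [htest.sobNormSq_eq, htest.l2NormSq_eq] at hnorm
    linarith [hk u htest.smoothCompactSupport htest.2.2]
  refine le_trans (lintegral_mono fun x => ?_) (hexp htest.smoothCompactSupport hweight)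
  gcongr

/-- For `0 ≤ β ≤ β*` and `0 ≤ α < λ₁(Ω)`, the supremum `S_{α,β}` is finite. -/
theorem statement0 (m : ℕ) (hm : 1 ≤ m) (Ω : Set (EuclideanSpace ℝ (Fin (2*m))))
    (hΩo : IsOpen Ω) (hΩb : Bornology.IsBounded Ω) (hΩs : HasSmoothBoundary m Ω)
    (α β : ℝ) (hβ0 : 0 ≤ β) (hβ : β ≤ betaStar m) (hα0 : 0 ≤ α) (hα : α < lambda1 m Ω) :
    Ssup m Ω α β < ⊤ := by
  exact statement0_general m hm Ω hΩo hΩb hΩs.hasInteriorCones α β hβ hα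
end
end

section
/- For every integer N ≥ 1 and all reals R > 0 and C > 0 there exists a constant C' > 0, depending only on N, R and C, with the following property: if u is a real-valued C² function on an open set containing the closed ball of radius R centered at 0 in ℝ^N, and |Δu(x)| ≤ C for all x ∈ B_R(0), u(x) ≤ C for all x ∈ B_R(0), and u(0) ≥ −C, then |u(x)| ≤ C' for all x ∈ B_{R/2}(0). -/
open MeasureTheory Real
noncomputable section

/-- `ω_{2m} = 2^{m+1} π^m / (2m−1)‼`, the volume of the unit sphere `S^{2m} ⊂ ℝ^{2m+1}`. -/
def omega2m (m : ℕ) : ℝ := 2^(m+1) * Real.pi^m / (Nat.doubleFactorial (2*m - 1) : ℝ)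

/-- The standard bubble `η₀(y) = −(m/β*) log(1 + |y|²/4)`. -/
def eta0 (m : ℕ) (y : EuclideanSpace ℝ (Fin (2*m))) : ℝ :=
  -((m : ℝ) / betaStar m) * Real.log (1 + ‖y‖^2 / 4)

/-!
After subtracting from `C`, the claim is Harnack's inequality `v x ≤ A * v x₀ + B * K` for a
nonnegative `v` with `|Δ v| ≤ K`. It follows from a mean value inequality for the weight
`ρ_s y = (s² - |y|²)₊`: since `∇(ρ_s²) = -4 ρ_s y`, integration by parts gives
`d/dt ∫ ρ_s(y) v(x + t y) dy = (t / 4) ∫ ρ_s(y)² Δv(x + t y) dy`, so `∫ ρ_s(y) v(x + y) dy` differs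
from `v x ∫ ρ_s` by at most `(K / 4) ∫ ρ_s²`. If `|x - x₀| ≤ r`, then
`ρ_s(y - x) ≤ ρ_{r+s}(y - x₀)`, so nonnegativity of `v` bounds the weighted integral around `x`
by the one around `x₀`.
-/

section Development

open Filter InnerProductSpace Laplacian Metric Set Topology
open scoped Gradient Manifold

section PosPart

lemma hasDerivAt_max_zero_sq (a : ℝ) : HasDerivAt (fun x : ℝ => max 0 x ^ 2) (2 * max 0 a) a := by
  have hquad : (fun x : ℝ => max 0 x ^ 2 - max 0 a ^ 2 - (x - a) * (2 * max 0 a))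
      =O[𝓝 a] fun x => ‖x - a‖ ^ 2 := by
    refine Asymptotics.IsBigO.of_bound 1 (Eventually.of_forall fun x => ?_)
    rw [norm_pow, norm_norm, one_mul, norm_eq_abs, norm_eq_abs, sq_abs, abs_le]
    rcases le_total 0 x with hx | hx <;> rcases le_total 0 a with ha | ha <;>
      simp only [max_eq_left, max_eq_right, hx, ha] <;> constructor <;> nlinarith
  rw [hasDerivAt_iff_isLittleO]
  refine hquad.trans_isLittleO ?_
  simpa using (Asymptotics.isLittleO_pow_sub_sub a one_lt_two).norm_left

lemma contDiff_max_zero_sq : ContDiff ℝ 1 fun x : ℝ => max 0 x ^ 2 := by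
  rw [contDiff_one_iff_deriv]
  refine ⟨fun a => (hasDerivAt_max_zero_sq a).differentiableAt, ?_⟩
  rw [deriv_eq hasDerivAt_max_zero_sq]
  fun_prop

end PosPart

section Extension

variable {E F : Type*} [NormedAddCommGroup E] [NormedSpace ℝ E] [FiniteDimensional ℝ E]
  [NormedAddCommGroup F] [NormedSpace ℝ F]

lemma exists_contDiff_eventuallyEq_nhdsSet {n : ℕ∞} {u : E → F} {s U : Set E} (hs : IsClosed s)
    (hU : IsOpen U) (hsU : s ⊆ U) (hu : ContDiffOn ℝ n u U) :
    ∃ g : E → F, ContDiff ℝ n g ∧ g =ᶠ[𝓝ˢ s] u := by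
  obtain ⟨V, hV, hsV, hVU⟩ := normal_exists_closure_subset hs hU hsU
  obtain ⟨χ, hχ_one, hχ_zero, -⟩ := exists_contMDiffMap_one_nhds_of_subset_interior (n := n)
    𝓘(ℝ, E) hs (hsV.trans (hV.subset_interior_iff.2 subset_closure))
  have hχ : ContDiff ℝ n χ := χ.contMDiff.contDiff
  refine ⟨fun y => χ y • u y, contDiff_iff_contDiffAt.2 fun y => ?_, ?_⟩
  · by_cases hy : y ∈ U
    · exact hχ.contDiffAt.smul (hu.contDiffAt (hU.mem_nhds hy))
    · have hzero : (fun z => χ z • u z) =ᶠ[𝓝 y] fun _ => 0 := by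
        filter_upwards [isClosed_closure.isOpen_compl.mem_nhds fun h => hy (hVU h)] with z hz
        rw [hχ_zero z hz, zero_smul]
      exact contDiffAt_const.congr_of_eventuallyEq hzero
  · filter_upwards [hχ_one] with y hy
    rw [hy, one_smul]

end Extension

section Integral

variable {E F : Type*} [NormedAddCommGroup E] [NormedSpace ℝ E] [MeasurableSpace E] [BorelSpace E]
  [NormedAddCommGroup F] [NormedSpace ℝ F] {μ : Measure E}

lemma hasDerivAt_integral_smul_comp_add_smul [ProperSpace E] [IsFiniteMeasureOnCompacts μ]
    {g : E → F} {w : E → ℝ} (hg : ContDiff ℝ 1 g) (hw : Continuous w) (hws : HasCompactSupport w)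
    (x : E) (t : ℝ) :
    HasDerivAt (fun t : ℝ => ∫ y, w y • g (x + t • y) ∂μ)
      (∫ y, w y • fderiv ℝ g (x + t • y) y ∂μ) t := by
  have hDgy : Continuous fun p : ℝ × E => fderiv ℝ g (x + p.1 • p.2) p.2 := by fun_prop
  obtain ⟨M, hM⟩ := ((isCompact_closedBall t 1).prod hws).exists_bound_of_continuousOn
    hDgy.continuousOn
  refine (hasDerivAt_integral_of_dominated_loc_of_deriv_le
    (F := fun t y => w y • g (x + t • y)) (F' := fun t y => w y • fderiv ℝ g (x + t • y) y)
    (bound := fun y => ‖w y‖ * M) (closedBall_mem_nhds t one_pos) ?_ ?_ ?_ ?_ ?_ ?_).2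
  · refine .of_forall fun τ => ?_
    have := hg.continuous
    exact Continuous.aestronglyMeasurable (by fun_prop)
  · have := hg.continuous
    exact Continuous.integrable_of_hasCompactSupport (by fun_prop) hws.smul_right
  · exact Continuous.aestronglyMeasurable (by fun_prop)
  · refine .of_forall fun y τ hτ => ?_
    rw [norm_smul]
    by_cases hy : y ∈ tsupport w
    · exact mul_le_mul_of_nonneg_left (hM (τ, y) ⟨hτ, hy⟩) (norm_nonneg _)
    · simp [image_eq_zero_of_notMem_tsupport hy]
  · exact Continuous.integrable_of_hasCompactSupport (by fun_prop) hws.norm.mul_right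
  · refine .of_forall fun y τ _ => ?_
    have hline : HasDerivAt (fun t : ℝ => x + t • y) y τ := by
      simpa using ((hasDerivAt_id τ).smul_const y).const_add x
    exact ((hg.differentiable one_ne_zero _).hasFDerivAt.comp_hasDerivAt τ hline).const_smul (w y)

end Integral

section Green

variable {E ι : Type*} [NormedAddCommGroup E] [InnerProductSpace ℝ E] [FiniteDimensional ℝ E]
  [MeasurableSpace E] [BorelSpace E] [Fintype ι] {μ : Measure E} [μ.IsAddHaarMeasure]

lemma integral_apply_gradient_eq_neg_integral_mul {ω : E → E →L[ℝ] ℝ} {φ : E → ℝ}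
    (b : OrthonormalBasis ι ℝ E) (hω : ContDiff ℝ 1 ω) (hφ : ContDiff ℝ 1 φ)
    (hφs : HasCompactSupport φ) :
    ∫ y, ω y (∇ φ y) ∂μ = -∫ y, (∑ i, fderiv ℝ ω y (b i) (b i)) * φ y ∂μ := by
  have hω_cont := hω.continuous
  have hφ_cont := hφ.continuous
  have hωφ : ∀ i, Integrable (fun y => ω y (b i) * φ y) μ := fun i =>
    Continuous.integrable_of_hasCompactSupport (by fun_prop) hφs.mul_left
  have hωDφ : ∀ i, Integrable (fun y => ω y (b i) * fderiv ℝ φ y (b i)) μ := fun i =>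
    Continuous.integrable_of_hasCompactSupport (by fun_prop) (hφs.fderiv_apply ℝ (b i)).mul_left
  have hDωφ : ∀ i, Integrable (fun y => fderiv ℝ ω y (b i) (b i) * φ y) μ := fun i =>
    Continuous.integrable_of_hasCompactSupport (by fun_prop) hφs.mul_left
  have hcoord : ∀ i y, HasFDerivAt (fun y => ω y (b i))
      ((ContinuousLinearMap.apply ℝ ℝ (b i)).comp (fderiv ℝ ω y)) y :=
    fun i y => (ContinuousLinearMap.apply ℝ ℝ (b i)).hasFDerivAt.comp y
      (hω.differentiable one_ne_zero y).hasFDerivAt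
  have hparts : ∀ i, ∫ y, ω y (b i) * fderiv ℝ φ y (b i) ∂μ
      = -∫ y, fderiv ℝ ω y (b i) (b i) * φ y ∂μ := fun i => by
    have hcoord_fderiv : ∀ y, fderiv ℝ (fun y => ω y (b i)) y (b i) = fderiv ℝ ω y (b i) (b i) :=
      fun y => by rw [(hcoord i y).fderiv]; rfl
    simpa only [hcoord_fderiv] using integral_mul_fderiv_eq_neg_fderiv_mul_of_integrable
      (by simpa only [hcoord_fderiv] using hDωφ i) (hωDφ i) (hωφ i)
      (fun y _ => (hcoord i y).differentiableAt) fun y _ => hφ.differentiable one_ne_zero y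
  have hexpand : ∀ y, ω y (∇ φ y) = ∑ i, ω y (b i) * fderiv ℝ φ y (b i) := fun y => by
    conv_lhs => rw [← b.sum_repr' (∇ φ y)]
    simp [inner_gradient_right, mul_comm]
  simp_rw [hexpand, Finset.sum_mul]
  rw [integral_finsetSum _ fun i _ => hωDφ i, integral_finsetSum _ fun i _ => hDωφ i,
    ← Finset.sum_neg_distrib]
  exact Finset.sum_congr rfl fun i _ => hparts i

end Green

/-- The weight `(s² - |y|²)₊` on a normed space. Its square is `C¹` with gradient proportional to
`y` times the weight itself, which makes it suited to radial mean values. -/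
def paraboloidCap {E : Type*} [NormedAddCommGroup E] (s : ℝ) (y : E) : ℝ :=
  max 0 (s ^ 2 - ‖y‖ ^ 2)

namespace paraboloidCap

section Normed

variable {E : Type*} [NormedAddCommGroup E]

lemma continuous (s : ℝ) : Continuous (paraboloidCap s : E → ℝ) := by
  unfold paraboloidCap
  fun_prop

lemma nonneg (s : ℝ) (y : E) : 0 ≤ paraboloidCap s y := le_max_left _ _

lemma eq_zero_of_abs_le_norm {s : ℝ} {y : E} (hy : |s| ≤ ‖y‖) : paraboloidCap s y = 0 :=
  max_eq_left (sub_nonpos.2 (sq_le_sq.2 (by rwa [abs_norm])))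

lemma sub_le_add {r s : ℝ} {x : E} (hx : ‖x‖ ≤ r) (hs : 0 ≤ s) (y : E) :
    paraboloidCap s (y - x) ≤ paraboloidCap (r + s) y := by
  rcases le_total s ‖y - x‖ with hyx | hyx
  · rw [eq_zero_of_abs_le_norm (by rwa [abs_of_nonneg hs])]
    exact nonneg _ y
  · refine max_le_max le_rfl ?_
    have hy : ‖y‖ ≤ r + ‖y - x‖ := by linarith [norm_le_norm_add_norm_sub' y x]
    have hy_sq : ‖y‖ ^ 2 ≤ (r + ‖y - x‖) ^ 2 := pow_le_pow_left₀ (norm_nonneg y) hy 2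
    nlinarith [norm_nonneg x]

lemma hasCompactSupport [ProperSpace E] (s : ℝ) :
    HasCompactSupport (paraboloidCap s : E → ℝ) :=
  HasCompactSupport.intro (isCompact_closedBall 0 |s|) fun _ hy =>
    eq_zero_of_abs_le_norm (le_of_not_ge fun h => hy (mem_closedBall_zero_iff.2 h))

lemma hasCompactSupport_sq [ProperSpace E] (s : ℝ) :
    HasCompactSupport fun y : E => paraboloidCap s y ^ 2 :=
  (hasCompactSupport s).comp_left (g := fun a : ℝ => a ^ 2) (zero_pow two_ne_zero)

lemma integral_pos [ProperSpace E] [MeasurableSpace E] [OpensMeasurableSpace E] {μ : Measure E}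
    [μ.IsOpenPosMeasure] [IsFiniteMeasureOnCompacts μ] {s : ℝ} (hs : s ≠ 0) :
    0 < ∫ y, paraboloidCap s y ∂μ := by
  refine (continuous s).integral_pos_of_hasCompactSupport_nonneg_nonzero (hasCompactSupport s)
    (nonneg s) (x := 0) ?_
  simp [paraboloidCap, hs]

end Normed

section Inner

variable {E : Type*} [NormedAddCommGroup E] [InnerProductSpace ℝ E]

lemma contDiff_sq (s : ℝ) : ContDiff ℝ 1 fun y : E => paraboloidCap s y ^ 2 :=
  contDiff_max_zero_sq.comp (contDiff_const.sub (contDiff_norm_sq ℝ))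

lemma gradient_sq [CompleteSpace E] (s : ℝ) (y : E) :
    ∇ (fun y : E => paraboloidCap s y ^ 2) y = -(4 * paraboloidCap s y) • y := by
  have hinner : HasFDerivAt (fun y : E => s ^ 2 - ‖y‖ ^ 2) (-(2 • innerSL ℝ y)) y :=
    (hasStrictFDerivAt_norm_sq y).hasFDerivAt.const_sub (s ^ 2)
  have hsq := (hasDerivAt_max_zero_sq (s ^ 2 - ‖y‖ ^ 2)).comp_hasFDerivAt y hinner
  refine HasGradientAt.gradient (hasGradientAt_iff_hasFDerivAt.2 (hsq.congr_fderiv ?_))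
  ext v
  simp [paraboloidCap]
  ring

end Inner

end paraboloidCap

section MeanValue

variable {E : Type*} [NormedAddCommGroup E] [InnerProductSpace ℝ E] [FiniteDimensional ℝ E]
  [MeasurableSpace E] [BorelSpace E] {μ : Measure E} [μ.IsAddHaarMeasure]

lemma integral_paraboloidCap_mul_fderiv_comp_add_smul {g : E → ℝ} (hg : ContDiff ℝ 2 g) (s : ℝ)
    (x : E) (t : ℝ) :
    ∫ y, paraboloidCap s y * fderiv ℝ g (x + t • y) y ∂μ
      = t / 4 * ∫ y, Δ g (x + t • y) * paraboloidCap s y ^ 2 ∂μ := by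
  have hDg : ContDiff ℝ 1 (fderiv ℝ g) := hg.fderiv_right (by norm_num)
  let b := stdOrthonormalBasis ℝ E
  have hω : ContDiff ℝ 1 fun y => fderiv ℝ g (x + t • y) := hDg.comp (by fun_prop)
  have hDω : ∀ y, fderiv ℝ (fun y => fderiv ℝ g (x + t • y)) y
      = t • fderiv ℝ (fderiv ℝ g) (x + t • y) := fun y => by
    have hline : HasFDerivAt (fun y : E => x + t • y) (t • ContinuousLinearMap.id ℝ E) y :=
      ((hasFDerivAt_id y).const_smul t).const_add x
    refine ((hDg.differentiable one_ne_zero _).hasFDerivAt.comp y hline).fderiv.trans ?_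
    ext
    simp
  have hdiv : ∀ y, ∑ i, fderiv ℝ (fun y => fderiv ℝ g (x + t • y)) y (b i) (b i)
      = t * Δ g (x + t • y) := fun y => by
    simp [hDω, laplacian_eq_iteratedFDeriv_orthonormalBasis g b, iteratedFDeriv_two_apply,
      Finset.mul_sum]
  have hgreen := integral_apply_gradient_eq_neg_integral_mul (μ := μ) b hω
    (paraboloidCap.contDiff_sq s) (paraboloidCap.hasCompactSupport_sq s)
  simp only [paraboloidCap.gradient_sq, hdiv, map_smul, smul_eq_mul, neg_mul, mul_assoc,
    integral_neg, integral_const_mul] at hgreen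
  linarith

lemma hasDerivAt_integral_paraboloidCap_mul {g : E → ℝ} (hg : ContDiff ℝ 2 g) (s : ℝ)
    (x : E) (t : ℝ) :
    HasDerivAt (fun t : ℝ => ∫ y, paraboloidCap s y * g (x + t • y) ∂μ)
      (t / 4 * ∫ y, Δ g (x + t • y) * paraboloidCap s y ^ 2 ∂μ) t := by
  rw [← integral_paraboloidCap_mul_fderiv_comp_add_smul hg]
  exact hasDerivAt_integral_smul_comp_add_smul (hg.of_le one_le_two) (paraboloidCap.continuous s)
    (paraboloidCap.hasCompactSupport s) x t

lemma abs_integral_laplacian_mul_paraboloidCap_sq_le {g : E → ℝ} {x : E} {s t K : ℝ} (hs : 0 ≤ s)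
    (ht : t ∈ Icc (0 : ℝ) 1) (hΔ : ∀ z ∈ ball x s, |Δ g z| ≤ K) :
    |∫ y, Δ g (x + t • y) * paraboloidCap s y ^ 2 ∂μ| ≤ K * ∫ y : E, paraboloidCap s y ^ 2 ∂μ := by
  have hint : Integrable (fun y : E => K * paraboloidCap s y ^ 2) μ :=
    (((paraboloidCap.continuous s).pow 2).integrable_of_hasCompactSupport
      (paraboloidCap.hasCompactSupport_sq s)).const_mul K
  rw [← integral_const_mul, ← norm_eq_abs]
  refine norm_integral_le_of_norm_le hint (.of_forall fun y => ?_)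
  rw [norm_mul, norm_of_nonneg (sq_nonneg (paraboloidCap s y))]
  rcases le_or_gt s ‖y‖ with hy | hy
  · simp [paraboloidCap.eq_zero_of_abs_le_norm (by rwa [abs_of_nonneg hs])]
  · refine mul_le_mul_of_nonneg_right (hΔ _ ?_) (sq_nonneg _)
    rw [mem_ball_iff_norm, add_sub_cancel_left, norm_smul, norm_of_nonneg ht.1]
    exact (mul_le_of_le_one_left (norm_nonneg y) ht.2).trans_lt hy

lemma abs_integral_paraboloidCap_mul_sub_le {g : E → ℝ} {x : E} {s K : ℝ} (hg : ContDiff ℝ 2 g)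
    (hs : 0 ≤ s) (hΔ : ∀ z ∈ ball x s, |Δ g z| ≤ K) :
    |∫ y, paraboloidCap s y * g (x + y) ∂μ - (∫ y : E, paraboloidCap s y ∂μ) * g x|
      ≤ K / 4 * ∫ y : E, paraboloidCap s y ^ 2 ∂μ := by
  have hmean := norm_image_sub_le_of_norm_deriv_le_segment_01'
    (C := K / 4 * ∫ y : E, paraboloidCap s y ^ 2 ∂μ)
    (fun t _ => (hasDerivAt_integral_paraboloidCap_mul (μ := μ) hg s x t).hasDerivWithinAt)
    fun t ht => ?_
  · simpa [integral_mul_const] using hmean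
  have hint := abs_integral_laplacian_mul_paraboloidCap_sq_le (μ := μ) hs
    (Ico_subset_Icc_self ht) hΔ
  rw [norm_eq_abs, abs_mul, abs_of_nonneg (div_nonneg ht.1 zero_le_four)]
  nlinarith [mul_le_of_le_one_left (abs_nonneg (∫ y, Δ g (x + t • y) * paraboloidCap s y ^ 2 ∂μ))
    ht.2.le]

end MeanValue

section Harnack

variable {E : Type*} [NormedAddCommGroup E]

lemma integral_paraboloidCap_mul_le [ProperSpace E] [MeasurableSpace E] [BorelSpace E]
    {μ : Measure E} [μ.IsAddLeftInvariant] [IsFiniteMeasureOnCompacts μ]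
    {g : E → ℝ} {x x₀ : E} {r s : ℝ} (hg : Continuous g) (hs : 0 ≤ s) (hx : x ∈ closedBall x₀ r)
    (hg_nonneg : ∀ z ∈ ball x₀ (r + s), 0 ≤ g z) :
    ∫ y, paraboloidCap s y * g (x + y) ∂μ ≤ ∫ y, paraboloidCap (r + s) y * g (x₀ + y) ∂μ := by
  have hxr : ‖x - x₀‖ ≤ r := mem_closedBall_iff_norm.1 hx
  have hrs : 0 ≤ r + s := by linarith [norm_nonneg (x - x₀)]
  have hcap := paraboloidCap.continuous (E := E)
  have htranslate : ∫ y, paraboloidCap s y * g (x + y) ∂μ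
      = ∫ y, paraboloidCap s (y - (x - x₀)) * g (x₀ + y) ∂μ := by
    rw [← integral_add_left_eq_self (fun y => paraboloidCap s (y - (x - x₀)) * g (x₀ + y)) (x - x₀)]
    simp [← add_assoc]
  rw [htranslate]
  have hcap_le := paraboloidCap.sub_le_add hxr hs
  have hsupp : HasCompactSupport fun y => paraboloidCap s (y - (x - x₀)) :=
    (paraboloidCap.hasCompactSupport s).comp_homeomorph (Homeomorph.subRight (x - x₀))
  refine integral_mono
    (((hcap s).comp (continuous_sub_right _)).mul (hg.comp (continuous_const_add x₀))
      |>.integrable_of_hasCompactSupport hsupp.mul_right)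
    (((hcap (r + s)).mul (hg.comp (continuous_const_add x₀))).integrable_of_hasCompactSupport
      (paraboloidCap.hasCompactSupport _).mul_right) fun y => ?_
  rcases le_or_gt (r + s) ‖y‖ with hy | hy
  · have hzero : paraboloidCap (r + s) y = 0 :=
      paraboloidCap.eq_zero_of_abs_le_norm (by rwa [abs_of_nonneg hrs])
    simp [hzero, (hzero ▸ hcap_le y).antisymm (paraboloidCap.nonneg s _)]
  · exact mul_le_mul_of_nonneg_right (hcap_le y) (hg_nonneg _ (by simpa using hy))

variable [InnerProductSpace ℝ E] [FiniteDimensional ℝ E]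

lemma integral_paraboloidCap_mul_le_of_abs_laplacian_le [MeasurableSpace E] [BorelSpace E]
    {μ : Measure E} [μ.IsAddHaarMeasure] {g : E → ℝ} {x x₀ : E} {r s K : ℝ} (hg : ContDiff ℝ 2 g)
    (hs : 0 ≤ s) (hx : x ∈ closedBall x₀ r) (hg_nonneg : ∀ z ∈ ball x₀ (r + s), 0 ≤ g z)
    (hΔ : ∀ z ∈ ball x₀ (r + s), |Δ g z| ≤ K) :
    (∫ y : E, paraboloidCap s y ∂μ) * g x ≤ (∫ y : E, paraboloidCap (r + s) y ∂μ) * g x₀ +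
      K / 4 * (∫ y : E, paraboloidCap s y ^ 2 ∂μ + ∫ y : E, paraboloidCap (r + s) y ^ 2 ∂μ) := by
  have hr : 0 ≤ r := nonempty_closedBall.1 ⟨x, hx⟩
  have hball : ball x s ⊆ ball x₀ (r + s) :=
    ball_subset_ball' (by linarith [mem_closedBall.1 hx])
  have hmean_x := abs_integral_paraboloidCap_mul_sub_le (μ := μ) hg hs fun z hz => hΔ z (hball hz)
  have hmean_x₀ := abs_integral_paraboloidCap_mul_sub_le (μ := μ) hg (add_nonneg hr hs) hΔ
  have hcompare := integral_paraboloidCap_mul_le (μ := μ) hg.continuous hs hx hg_nonneg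
  linarith [(abs_le.1 hmean_x).1, (abs_le.1 hmean_x₀).2]

theorem exists_harnack_constants {r R : ℝ} (hr : 0 ≤ r) (hrR : r < R) :
    ∃ A B : ℝ, 0 ≤ A ∧ 0 ≤ B ∧ ∀ (x₀ : E) (v : E → ℝ) (K : ℝ),
      ContDiffOn ℝ 2 v (ball x₀ R) → (∀ x ∈ ball x₀ R, |Δ v x| ≤ K) →
      (∀ x ∈ ball x₀ R, 0 ≤ v x) → ∀ x ∈ closedBall x₀ r, v x ≤ A * v x₀ + B * K := by
  borelize E
  let s := (R - r) / 2
  have hs : 0 < s := half_pos (sub_pos.2 hrR)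
  let I : ℝ → ℝ := fun a => ∫ y : E, paraboloidCap a y
  let J : ℝ → ℝ := fun a => ∫ y : E, paraboloidCap a y ^ 2
  have hI : 0 < I s := paraboloidCap.integral_pos hs.ne'
  have hI_nonneg : 0 ≤ I (r + s) := integral_nonneg (paraboloidCap.nonneg _)
  have hJ_nonneg : ∀ a, 0 ≤ J a := fun a => integral_nonneg fun _ => sq_nonneg _
  refine ⟨I (r + s) / I s, (J s + J (r + s)) / (4 * I s), div_nonneg hI_nonneg hI.le,
    div_nonneg (add_nonneg (hJ_nonneg _) (hJ_nonneg _)) (by positivity), ?_⟩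
  intro x₀ v K hv hΔ hv_nonneg x hx
  have hsub : closedBall x₀ (r + s) ⊆ ball x₀ R :=
    closedBall_subset_ball (by simp only [s]; linarith)
  obtain ⟨g, hg, hgv⟩ := exists_contDiff_eventuallyEq_nhdsSet (n := 2) isClosed_closedBall
    isOpen_ball hsub (by exact_mod_cast hv)
  have hgv_nhds : ∀ z ∈ closedBall x₀ (r + s), g =ᶠ[𝓝 z] v := eventually_nhdsSet_iff_forall.1 hgv
  have hgv_eq : ∀ z ∈ closedBall x₀ (r + s), g z = v z := fun z hz => (hgv_nhds z hz).eq_of_nhds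
  have hharnack := integral_paraboloidCap_mul_le_of_abs_laplacian_le (μ := volume)
    (by exact_mod_cast hg) hs.le hx
    (fun z hz => by
      rw [hgv_eq z (ball_subset_closedBall hz)]
      exact hv_nonneg z (hsub (ball_subset_closedBall hz)))
    (fun z hz => by
      rw [(laplacian_congr_nhds (hgv_nhds z (ball_subset_closedBall hz))).eq_of_nhds]
      exact hΔ z (hsub (ball_subset_closedBall hz)))
  rw [hgv_eq x (closedBall_subset_closedBall (by linarith) hx),
    hgv_eq x₀ (mem_closedBall_self (by positivity))] at hharnack
  calc v x ≤ (I (r + s) * v x₀ + K / 4 * (J s + J (r + s))) / I s :=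
        (le_div_iff₀' hI).2 hharnack
    _ = I (r + s) / I s * v x₀ + (J s + J (r + s)) / (4 * I s) * K := by field_simp

theorem statement18_general {r R C : ℝ} (hr : 0 ≤ r) (hrR : r < R) (hC : 0 < C) :
    ∃ C' : ℝ, 0 < C' ∧ ∀ (x₀ : E) (u : E → ℝ), ContDiffOn ℝ 2 u (ball x₀ R) →
      (∀ x ∈ ball x₀ R, |Δ u x| ≤ C) → (∀ x ∈ ball x₀ R, u x ≤ C) → -C ≤ u x₀ →
      ∀ x ∈ closedBall x₀ r, |u x| ≤ C' := by
  obtain ⟨A, B, hA, hB, hharnack⟩ := exists_harnack_constants (E := E) hr hrR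
  refine ⟨C + (A * (2 * C) + B * C), by positivity, fun x₀ u hu hΔ huC hu₀ x hx => ?_⟩
  have hΔ_sub : ∀ y ∈ ball x₀ R, |Δ ((fun _ : E => C) - u) y| ≤ C := fun y hy => by
    rw [contDiffAt_const.laplacian_sub (hu.contDiffAt (isOpen_ball.mem_nhds hy))]
    simpa using hΔ y hy
  have hx_le : C - u x ≤ A * (C - u x₀) + B * C :=
    hharnack x₀ ((fun _ => C) - u) C (contDiffOn_const.sub hu) hΔ_sub
      (fun y hy => sub_nonneg.2 (huC y hy)) x hx
  have hx₀ : A * (C - u x₀) ≤ A * (2 * C) := mul_le_mul_of_nonneg_left (by linarith) hA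
  have hux : u x ≤ C := huC x (closedBall_subset_ball hrR hx)
  exact abs_le.2 ⟨by linarith, hux.trans (le_add_of_nonneg_right (by positivity))⟩

end Harnack

lemma lap_eq_laplacian {n : ℕ} {u : EuclideanSpace ℝ (Fin n) → ℝ} {x : EuclideanSpace ℝ (Fin n)}
    (hu : ContDiffAt ℝ 2 u x) : lap u x = Δ u x := by
  have hDu : DifferentiableAt ℝ (fderiv ℝ u) x :=
    (hu.fderiv_right (m := 1) (by norm_num)).differentiableAt one_ne_zero
  rw [laplacian_eq_iteratedFDeriv_orthonormalBasis u (EuclideanSpace.basisFun (Fin n) ℝ)]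
  refine Finset.sum_congr rfl fun i _ => ?_
  rw [(hDu.hasFDerivAt.clm_apply (hasFDerivAt_const _ x)).fderiv]
  simp [iteratedFDeriv_two_apply]

end Development

/-- Harnack-type estimate: if `u` is `C²` on a neighbourhood of the closed ball
`\bar B_R(0) ⊂ ℝ^N` with `|Δu| ≤ C` and `u ≤ C` on `B_R(0)` and `u(0) ≥ −C`, then `|u| ≤ C'`
on `B_{R/2}(0)`, where `C'` depends only on `N`, `R` and `C`. -/
theorem statement18 (N : ℕ) (hN : 1 ≤ N) (R C : ℝ) (hR : 0 < R) (hC : 0 < C) :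
    ∃ C' : ℝ, 0 < C' ∧
      ∀ (U : Set (EuclideanSpace ℝ (Fin N))) (u : EuclideanSpace ℝ (Fin N) → ℝ),
        IsOpen U → Metric.closedBall (0 : EuclideanSpace ℝ (Fin N)) R ⊆ U →
        ContDiffOn ℝ 2 u U →
        (∀ x ∈ Metric.ball (0 : EuclideanSpace ℝ (Fin N)) R, |lap u x| ≤ C) →
        (∀ x ∈ Metric.ball (0 : EuclideanSpace ℝ (Fin N)) R, u x ≤ C) →
        -C ≤ u 0 →
        ∀ x ∈ Metric.ball (0 : EuclideanSpace ℝ (Fin N)) (R/2), |u x| ≤ C' := by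
  obtain ⟨C', hC', hbound⟩ := statement18_general (E := EuclideanSpace ℝ (Fin N))
    (half_pos hR).le (half_lt_self hR) hC
  refine ⟨C', hC', fun U u hU hRU hu hlap huC hu0 x hx => hbound 0 u
    (hu.mono (Metric.ball_subset_closedBall.trans hRU)) (fun y hy => ?_) huC hu0 x
    (Metric.ball_subset_closedBall hx)⟩
  rw [← lap_eq_laplacian
    (hu.contDiffAt (hU.mem_nhds (hRU (Metric.ball_subset_closedBall hy))))]
  exact hlap y hy
end
end
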